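/- For every f ∈ 𝒮 with logarithmic coefficients γ_n, the sharp inequality ∑_{n=1}^∞ (n²/(4n² − 1)) |γ_n|² ≤ 1/2 holds; the inequality is strict unless f(z) = z/(1−e^{iθ}z)² for some θ ∈ ℝ. -/

import Mathlib

/-!
The inequality comes from comparing `f` with the Koebe function on every circle `|z| = r`, and the
equality case from the area theorem.

**Comparison on circles.** Let `u` be the Green function of `f(𝔻)` with pole at `0` and `v` that of
the plane slit along a ray `[1/4, ∞)`, both written in the coordinate `ζ = log w`. Baernstein's star
function of `u` at `(s, θ)` is the largest integral of `u` over a set of measure `2θ` on the circle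
`|w| = e^s`. It is subharmonic in `(s, θ)` (`star_submean`), the corresponding integral of `v` over
the arc opposite to the slit is harmonic, and the maximum principle bounds the former by the latter
(`star_le_arc`). Hence the integrals of `max (u - t, 0)` over circles are largest for the slit plane
(`excess_le`). Jensen's formula for `f - w`, averaged over `|w| = e^s`, turns them into the integrals
of `max (log |f| - s, 0)` over `|z| = e^{-t}` (`integral_max_lgreen`). Since squares are
superpositions of such functions, the mean of `(log |f(z)/z|)²` over `|z| = r` is also largest for
the Koebe function, and by Parseval's identity `∑ |γₙ|² r²ⁿ ≤ ∑ r²ⁿ / n²` for `0 < r < 1`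
(`logCoeff_radius`).

**The weighted sum.** Put `dₙ = 1 / n² - |γₙ|²`. Letting `r → 1` gives `∑ dₙ ≥ 0`, and
`∑ dₙ / (4 n² - 1) = ½ ∫₀¹ (1 - r²) r⁻² ∑ dₙ r²ⁿ dr ≥ 0`. As `n² / (4 n² - 1) = ¼ + ¼ / (4 n² - 1)`
and `∑ 1 / (4 n² - 1) = ½`, the inequality follows (`weighted_sum_le`).

**Equality.** Equality makes the integral vanish; its integrand is nonnegative and continuous with
value `d₁` at `r = 0`, so `|γ₁| ≥ 1`. The area theorem for `1 / √(f(z²)) = 1/z - γ₁ z + …` then kills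
all further coefficients, and `f(z) = z / (1 - γ₁ z)²` (`area_theorem`,
`isKoebeRotation_of_one_le`).
-/

open Complex Metric Real

/-- The class `𝒮` of normalized univalent (analytic and injective) functions
on the unit disk. -/
def InClassS (f : ℂ → ℂ) : Prop :=
  AnalyticOnNhd ℂ f (ball (0 : ℂ) 1) ∧ Set.InjOn f (ball (0 : ℂ) 1) ∧
    f 0 = 0 ∧ deriv f 0 = 1

/-- `γ` are the logarithmic coefficients of `f`: there is an analytic branch `g`
of `log (f z / z)` on the unit disk with `g 0 = 0` whose Taylor coefficients at `0`
are `2 * γ n` for `n ≥ 1`. -/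
def IsLogCoeffs (f : ℂ → ℂ) (γ : ℕ → ℂ) : Prop :=
  ∃ g : ℂ → ℂ, AnalyticOnNhd ℂ g (ball (0 : ℂ) 1) ∧ g 0 = 0 ∧
    (∀ z ∈ ball (0 : ℂ) 1, z ≠ 0 → Complex.exp (g z) = f z / z) ∧
    ∀ n : ℕ, 1 ≤ n → iteratedDeriv n g 0 = (n.factorial : ℂ) * (2 * γ n)

/-- `f` coincides on the unit disk with a rotation `z / (1 - e^{iθ} z)^2`
of the Koebe function. -/
def IsKoebeRotation (f : ℂ → ℂ) : Prop :=
  ∃ θ : ℝ, Set.EqOn f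
    (fun z => z / (1 - Complex.exp (θ * Complex.I) * z) ^ 2) (ball (0 : ℂ) 1)

namespace LogCoeff

open Set Filter Topology MeasureTheory
open scoped ComplexConjugate

/-! ### Univalent functions and their inverses -/

/-- If the order of `f - f z₀` at `z₀` were `n ≥ 2`, then near `z₀` this difference would be the
`n`-th power of a local coordinate, and `f` would be `n`-to-one. -/
lemma deriv_ne_zero_of_injOn {f : ℂ → ℂ} {z₀ : ℂ} {U : Set ℂ} (hf : AnalyticAt ℂ f z₀)
    (hU : U ∈ 𝓝 z₀) (hinj : InjOn f U) : deriv f z₀ ≠ 0 := by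
  have hF : AnalyticAt ℂ (fun z => f z - f z₀) z₀ := hf.sub analyticAt_const
  have hne : ¬ ∀ᶠ z in 𝓝 z₀, f z - f z₀ = 0 := by
    intro h
    have h1 : ∀ᶠ z in 𝓝[≠] z₀, f z - f z₀ = 0 ∧ z ∈ U ∧ z ≠ z₀ := by
      filter_upwards [h.filter_mono nhdsWithin_le_nhds, mem_nhdsWithin_of_mem_nhds hU,
        self_mem_nhdsWithin] with z a b c using ⟨a, b, c⟩
    obtain ⟨z, h2, h3, h4⟩ := h1.exists
    exact h4 (hinj h3 (mem_of_mem_nhds hU) (sub_eq_zero.1 h2))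
  obtain ⟨n, g, hg, hg0, hfg⟩ := hF.exists_eventuallyEq_pow_smul_nonzero_iff.2 hne
  simp only [smul_eq_mul] at hfg
  rcases Nat.lt_or_ge n 2 with hn | hn
  · interval_cases n
    · have := hfg.self_of_nhds
      simp at this
      exact absurd this.symm hg0
    · have h1 : HasDerivAt (fun z => (z - z₀) ^ 1 * g z) (g z₀) z₀ := by
        have := ((hasDerivAt_id z₀).sub_const z₀).mul hg.differentiableAt.hasDerivAt
        simpa [pow_one] using! this
      have h2 : HasDerivAt (fun z => f z - f z₀) (g z₀) z₀ := h1.congr_of_eventuallyEq hfg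
      have h3 : HasDerivAt f (g z₀) z₀ := by simpa using h2.add_const (f z₀)
      rw [h3.deriv]; exact hg0
  · exfalso
    have hn0 : n ≠ 0 := by omega
    obtain ⟨c, hc⟩ := IsAlgClosed.exists_pow_nat_eq (g z₀) (Nat.pos_of_ne_zero hn0)
    have hc0 : c ≠ 0 := by
      rintro rfl
      rw [zero_pow hn0] at hc
      exact hg0 hc.symm
    set q : ℂ → ℂ := fun z => c * Complex.exp (Complex.log (g z / g z₀) / n) with hq
    have hslit : g z₀ / g z₀ ∈ slitPlane := by rw [div_self hg0]; simp
    have hqa : AnalyticAt ℂ q z₀ := by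
      have h1 : AnalyticAt ℂ (fun z => g z / g z₀) z₀ := hg.div analyticAt_const hg0
      have h2 : AnalyticAt ℂ (fun z => Complex.log (g z / g z₀)) z₀ := h1.clog hslit
      have h3 : AnalyticAt ℂ (fun z => Complex.log (g z / g z₀) / n) z₀ :=
        h2.div analyticAt_const (by exact_mod_cast hn0)
      exact analyticAt_const.mul h3.cexp
    have hq0 : q z₀ = c := by simp [hq, div_self hg0]
    set h : ℂ → ℂ := fun z => (z - z₀) * q z with hh
    have hha : AnalyticAt ℂ h z₀ := (analyticAt_id.sub analyticAt_const).mul hqa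
    have hhd : HasDerivAt h c z₀ := by
      have := ((hasDerivAt_id z₀).sub_const z₀).mul hqa.differentiableAt.hasDerivAt
      simpa [hq0] using! this
    have hstrict : HasStrictDerivAt h c z₀ := by
      have := hha.hasStrictDerivAt
      rwa [hhd.deriv] at this
    have hmap := hstrict.map_nhds_eq hc0
    have hpow : ∀ᶠ z in 𝓝 z₀, f z - f z₀ = h z ^ n := by
      have hgne : ∀ᶠ z in 𝓝 z₀, g z ≠ 0 := hg.continuousAt.eventually_ne hg0
      filter_upwards [hfg, hgne] with z hz hgz
      rw [hz, hh]
      simp only [mul_pow, hq]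
      rw [← Complex.exp_nat_mul, mul_div_cancel₀ _ (by exact_mod_cast hn0 : (n : ℂ) ≠ 0),
        Complex.exp_log (div_ne_zero hgz hg0), hc]
      field_simp
    have hW : {z | z ∈ U ∧ f z - f z₀ = h z ^ n} ∈ 𝓝 z₀ := inter_mem hU hpow
    have hW2 : h '' {z | z ∈ U ∧ f z - f z₀ = h z ^ n} ∈ 𝓝 (0 : ℂ) := by
      have := image_mem_map (m := h) hW
      rw [hmap] at this
      simpa [hh] using this
    obtain ⟨ε, hε, hball⟩ := Metric.mem_nhds_iff.1 hW2
    have hprim := Complex.isPrimitiveRoot_exp n hn0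
    set ω := Complex.exp (2 * π * I / n) with hω
    have hω1 : ω ≠ 1 := hprim.ne_one (by omega)
    have hωn : ‖ω‖ = 1 := hprim.norm'_eq_one hn0
    have hε2 : (0 : ℝ) < ε / 2 := by positivity
    have m1 : ((ε / 2 : ℝ) : ℂ) ∈ ball (0 : ℂ) ε := by
      rw [mem_ball_zero_iff, Complex.norm_real, Real.norm_of_nonneg hε2.le]; linarith
    have m2 : ω * ((ε / 2 : ℝ) : ℂ) ∈ ball (0 : ℂ) ε := by
      rw [mem_ball_zero_iff, norm_mul, hωn, Complex.norm_real, Real.norm_of_nonneg hε2.le]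
      linarith
    obtain ⟨z1, ⟨hz1U, hz1⟩, e1⟩ := hball m1
    obtain ⟨z2, ⟨hz2U, hz2⟩, e2⟩ := hball m2
    have h12 : f z1 = f z2 := by
      rw [e1] at hz1
      rw [e2, mul_pow, hprim.pow_eq_one, one_mul] at hz2
      linear_combination hz1 - hz2
    have hz12 := hinj hz1U hz2U h12
    rw [hz12, e2] at e1
    apply hω1
    have : ((ε / 2 : ℝ) : ℂ) ≠ 0 := by exact_mod_cast hε2.ne'
    exact mul_right_cancel₀ this (by rw [e1, one_mul])

/-- The inverse of `f` on the image of the unit disk. -/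
noncomputable def inv (f : ℂ → ℂ) : ℂ → ℂ := Function.invFunOn f (ball 0 1)

lemma inv_mem {f : ℂ → ℂ} {w : ℂ} (hw : w ∈ f '' ball 0 1) : inv f w ∈ ball (0 : ℂ) 1 :=
  Function.invFunOn_mem hw

lemma apply_inv {f : ℂ → ℂ} {w : ℂ} (hw : w ∈ f '' ball 0 1) : f (inv f w) = w :=
  Function.invFunOn_eq hw

lemma inv_apply {f : ℂ → ℂ} (hf : InClassS f) {z : ℂ} (hz : z ∈ ball (0 : ℂ) 1) :
    inv f (f z) = z :=
  hf.2.1 (inv_mem ⟨z, hz, rfl⟩) hz (apply_inv ⟨z, hz, rfl⟩)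

lemma deriv_ne_zero {f : ℂ → ℂ} (hf : InClassS f) {z : ℂ} (hz : z ∈ ball (0 : ℂ) 1) :
    deriv f z ≠ 0 :=
  deriv_ne_zero_of_injOn (hf.1 z hz) (isOpen_ball.mem_nhds hz) hf.2.1

lemma isOpen_image {f : ℂ → ℂ} (hf : InClassS f) {s : Set ℂ} (hs : s ⊆ ball 0 1)
    (ho : IsOpen s) : IsOpen (f '' s) := by
  rw [isOpen_iff_mem_nhds]
  rintro _ ⟨z, hz, rfl⟩
  have h := (hf.1 z (hs hz)).hasStrictDerivAt.map_nhds_eq (deriv_ne_zero hf (hs hz))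
  rw [← h]
  exact image_mem_map (ho.mem_nhds hz)

lemma analyticAt_inv {f : ℂ → ℂ} (hf : InClassS f) {w : ℂ} (hw : w ∈ f '' ball 0 1) :
    AnalyticAt ℂ (inv f) w := by
  have ho : IsOpen (f '' ball (0 : ℂ) 1) := isOpen_image hf subset_rfl isOpen_ball
  have hd : DifferentiableOn ℂ (inv f) (f '' ball 0 1) := by
    intro w hw
    have hc : ContinuousAt (inv f) w := by
      intro s hs
      obtain ⟨z, hz, rfl⟩ := hw
      rw [inv_apply hf hz] at hs
      obtain ⟨t, ht, hto, hzt⟩ := _root_.mem_nhds_iff.1 (inter_mem hs (isOpen_ball.mem_nhds hz))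
      have : f '' t ∈ 𝓝 (f z) :=
        (isOpen_image hf (fun x hx => (ht hx).2) hto).mem_nhds ⟨z, hzt, rfl⟩
      rw [Filter.mem_map]
      filter_upwards [this]
      rintro _ ⟨x, hx, rfl⟩
      show inv f (f x) ∈ s
      rw [inv_apply hf (ht hx).2]
      exact (ht hx).1
    have hdf : HasDerivAt f (deriv f (inv f w)) (inv f w) :=
      (hf.1 _ (inv_mem hw)).differentiableAt.hasDerivAt
    refine (HasDerivAt.of_local_left_inverse hc hdf (deriv_ne_zero hf (inv_mem hw))
      ?_).differentiableAt.differentiableWithinAt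
    filter_upwards [ho.mem_nhds hw] with y hy using apply_inv hy
  exact hd.analyticAt (ho.mem_nhds hw)

/-! ### The Green function in logarithmic coordinates -/

/-- The Green function of `f(𝔻)` with pole at `0`, extended by `0` off `f(𝔻)`
(with the junk value `0` at the pole). -/
noncomputable def green (f : ℂ → ℂ) (w : ℂ) : ℝ :=
  open Classical in if w ∈ f '' ball 0 1 then -Real.log ‖inv f w‖ else 0

/-- The Green function of `f(𝔻)` in the coordinate `ζ = log w`, so that circles `|w| = e^s` become
vertical segments `s + iφ`. -/
noncomputable def lgreen (f : ℂ → ℂ) (ζ : ℂ) : ℝ := green f (Complex.exp ζ)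

lemma green_nonneg (f : ℂ → ℂ) (w : ℂ) : 0 ≤ green f w := by
  unfold green
  split_ifs with h
  · have := inv_mem h
    rw [mem_ball_zero_iff] at this
    have := Real.log_nonpos (norm_nonneg _) this.le
    linarith
  · exact le_rfl

lemma green_apply {f : ℂ → ℂ} (hf : InClassS f) {z : ℂ} (hz : z ∈ ball (0 : ℂ) 1) :
    green f (f z) = -Real.log ‖z‖ := by
  unfold green
  rw [if_pos ⟨z, hz, rfl⟩, inv_apply hf hz]

lemma green_of_notMem {f : ℂ → ℂ} {w : ℂ} (hw : w ∉ f '' ball 0 1) : green f w = 0 := if_neg hw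

lemma apply_ne_zero {f : ℂ → ℂ} (hf : InClassS f) {z : ℂ} (hz : z ∈ ball (0 : ℂ) 1)
    (h0 : z ≠ 0) : f z ≠ 0 := by
  intro h
  exact h0 (hf.2.1 hz (mem_ball_self one_pos) (h.trans hf.2.2.1.symm))

lemma mem_image_of_green_pos {f : ℂ → ℂ} {w : ℂ} (h : 0 < green f w) : w ∈ f '' ball 0 1 := by
  by_contra hw
  rw [green_of_notMem hw] at h
  exact lt_irrefl _ h

lemma green_le_of_notMem {f : ℂ → ℂ} {w : ℂ} {ε : ℝ} (hε : 0 ≤ ε)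
    (hw : w ∉ f '' closedBall 0 (Real.exp (-ε))) : green f w ≤ ε := by
  unfold green
  split_ifs with h
  · have h1 : Real.exp (-ε) < ‖inv f w‖ := by
      by_contra hcon
      exact hw ⟨inv f w, by simpa using hcon, apply_inv h⟩
    have := Real.log_lt_log (Real.exp_pos _) h1
    rw [Real.log_exp] at this
    linarith
  · exact hε

lemma closedBall_exp_subset {ε : ℝ} (hε : 0 < ε) :
    closedBall (0 : ℂ) (Real.exp (-ε)) ⊆ ball 0 1 :=
  closedBall_subset_ball (by rw [Real.exp_lt_one_iff]; linarith)

lemma isCompact_image_closedBall {f : ℂ → ℂ} (hf : InClassS f) {ε : ℝ} (hε : 0 < ε) :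
    IsCompact (f '' closedBall 0 (Real.exp (-ε))) :=
  (isCompact_closedBall _ _).image_of_continuousOn
    (hf.1.continuousOn.mono (closedBall_exp_subset hε))

lemma inv_ne_zero {f : ℂ → ℂ} (hf : InClassS f) {w : ℂ} (hw : w ∈ f '' ball 0 1) (h0 : w ≠ 0) :
    inv f w ≠ 0 := by
  intro h
  have := apply_inv hw
  rw [h, hf.2.2.1] at this
  exact h0 this.symm

lemma green_eventuallyEq {f : ℂ → ℂ} (hf : InClassS f) {w : ℂ} (hw : w ∈ f '' ball 0 1) :
    green f =ᶠ[𝓝 w] fun w => -Real.log ‖inv f w‖ := by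
  filter_upwards [(isOpen_image hf subset_rfl isOpen_ball).mem_nhds hw] with y hy
  exact if_pos hy

lemma continuousAt_green {f : ℂ → ℂ} (hf : InClassS f) {w : ℂ} (h0 : w ≠ 0) :
    ContinuousAt (green f) w := by
  by_cases hw : w ∈ f '' ball 0 1
  · refine ContinuousAt.congr ?_ (green_eventuallyEq hf hw).symm
    exact ((analyticAt_inv hf hw).continuousAt.norm.log
      (norm_ne_zero_iff.2 (inv_ne_zero hf hw h0))).neg
  · rw [Metric.continuousAt_iff']
    intro ε hε
    have hε2 : 0 < ε / 2 := by positivity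
    have hK := (isCompact_image_closedBall hf hε2).isClosed
    have : w ∉ f '' closedBall 0 (Real.exp (-(ε / 2))) := fun h =>
      hw (image_mono (closedBall_exp_subset hε2) h)
    filter_upwards [hK.isOpen_compl.mem_nhds this] with y hy
    have h1 := green_le_of_notMem hε2.le hy
    have h2 := green_nonneg f y
    rw [green_of_notMem hw, Real.dist_eq, sub_zero, abs_of_nonneg h2]
    linarith

/-- The properties of the Green function of a univalent image, in logarithmic coordinates, that
enter the comparison argument. The last two say that the integral over the vertical segment at
abscissa `s` is at least `-2πs`, with equality if the segment stays inside the domain. -/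
structure GreenLike (U : ℂ → ℝ) : Prop where
  nonneg : ∀ ζ, 0 ≤ U ζ
  cont : Continuous U
  periodic : ∀ ζ, U (ζ + 2 * π * I) = U ζ
  harmonic : ∀ ζ, 0 < U ζ → InnerProductSpace.HarmonicAt U ζ
  right : ∀ ε > 0, ∃ S : ℝ, ∀ ζ : ℂ, S ≤ ζ.re → U ζ ≤ ε
  left : ∀ ε > 0, ∃ S : ℝ, ∀ ζ : ℂ, ζ.re ≤ -S → |U ζ + ζ.re| ≤ ε
  lower : ∀ s : ℝ, -(2 * π * s) ≤ ∫ φ in (0 : ℝ)..(2 * π), U (s + φ * I)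
  full : ∀ s : ℝ, (∀ φ : ℝ, 0 < U (s + φ * I)) →
    ∫ φ in (0 : ℝ)..(2 * π), U (s + φ * I) ≤ -(2 * π * s)

lemma continuous_lgreen {f : ℂ → ℂ} (hf : InClassS f) : Continuous (lgreen f) := by
  rw [continuous_iff_continuousAt]
  intro ζ
  exact ContinuousAt.comp (f := Complex.exp) (continuousAt_green hf (Complex.exp_ne_zero _))
    Complex.continuous_exp.continuousAt

lemma harmonicAt_lgreen {f : ℂ → ℂ} (hf : InClassS f) {ζ : ℂ} (h : 0 < lgreen f ζ) :
    InnerProductSpace.HarmonicAt (lgreen f) ζ := by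
  have hw := mem_image_of_green_pos h
  have h1 : AnalyticAt ℂ (fun ζ => inv f (Complex.exp ζ)) ζ :=
    AnalyticAt.fun_comp (analyticAt_inv hf hw) analyticAt_cexp
  have h2 := (h1.harmonicAt_log_norm (inv_ne_zero hf hw (Complex.exp_ne_zero _))).neg
  refine (InnerProductSpace.harmonicAt_congr_nhds ?_).1 h2
  have := (Complex.continuous_exp.continuousAt (x := ζ)).eventually (green_eventuallyEq hf hw)
  filter_upwards [this] with y hy
  simp [lgreen, hy]

lemma lgreen_right {f : ℂ → ℂ} (hf : InClassS f) {ε : ℝ} (hε : 0 < ε) :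
    ∃ S : ℝ, ∀ ζ : ℂ, S ≤ ζ.re → lgreen f ζ ≤ ε := by
  obtain ⟨C, hC⟩ := (isCompact_image_closedBall hf hε).isBounded.exists_norm_le
  refine ⟨Real.log (|C| + 1), fun ζ hζ => green_le_of_notMem hε.le fun h => ?_⟩
  have h1 := hC _ h
  rw [Complex.norm_exp] at h1
  have h2 : |C| + 1 ≤ Real.exp ζ.re := by
    rw [← Real.exp_log (by positivity : 0 < |C| + 1)]
    exact Real.exp_le_exp.2 hζ
  linarith [le_abs_self C]

lemma lgreen_left {f : ℂ → ℂ} (hf : InClassS f) {ε : ℝ} (hε : 0 < ε) :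
    ∃ S : ℝ, ∀ ζ : ℂ, ζ.re ≤ -S → |lgreen f ζ + ζ.re| ≤ ε := by
  have hd : HasDerivAt f 1 0 := by
    have := (hf.1 0 (mem_ball_self one_pos)).differentiableAt.hasDerivAt
    rwa [hf.2.2.2] at this
  have hs := hasDerivAt_iff_tendsto_slope.1 hd
  have h1 : Tendsto (fun z => Real.log ‖slope f 0 z‖) (𝓝[≠] 0) (𝓝 0) := by
    have := (hs.norm).log (by simp)
    simpa using this
  have h2 : ∀ᶠ z in 𝓝[≠] (0 : ℂ), |Real.log ‖slope f 0 z‖| < ε := by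
    have := h1.eventually (Metric.ball_mem_nhds 0 hε)
    simpa using this
  obtain ⟨δ, hδ, hb⟩ := Metric.mem_nhdsWithin_iff.1 h2
  have hδ1 : 0 < min δ 1 := lt_min hδ one_pos
  have ho := (isOpen_image hf (ball_subset_ball (min_le_right δ 1)) isOpen_ball).mem_nhds
    ⟨0, mem_ball_self hδ1, hf.2.2.1⟩
  obtain ⟨ρ, hρ, hρb⟩ := Metric.mem_nhds_iff.1 ho
  refine ⟨-Real.log (ρ / 2), fun ζ hζ => ?_⟩
  have hn : Complex.exp ζ ∈ ball (0 : ℂ) ρ := by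
    rw [mem_ball_zero_iff, Complex.norm_exp]
    calc Real.exp ζ.re ≤ Real.exp (Real.log (ρ / 2)) := Real.exp_le_exp.2 (by linarith)
      _ = ρ / 2 := Real.exp_log (by positivity)
      _ < ρ := by linarith
  obtain ⟨z, hz, hzw⟩ := hρb hn
  have hz0 : z ≠ 0 := by
    rintro rfl
    rw [hf.2.2.1] at hzw
    exact Complex.exp_ne_zero _ hzw.symm
  have hz1 : z ∈ ball (0 : ℂ) 1 := ball_subset_ball (min_le_right _ _) hz
  have hz2 : z ∈ ball (0 : ℂ) δ := ball_subset_ball (min_le_left _ _) hz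
  have h3 : |Real.log ‖slope f 0 z‖| < ε := hb ⟨hz2, hz0⟩
  have h4 : ζ.re = Real.log ‖f z‖ := by rw [hzw, Complex.norm_exp, Real.log_exp]
  have h5 : Real.log ‖slope f 0 z‖ = Real.log ‖f z‖ - Real.log ‖z‖ := by
    rw [slope_def_field, hf.2.2.1, sub_zero, sub_zero, norm_div,
      Real.log_div (norm_ne_zero_iff.2 (apply_ne_zero hf hz1 hz0)) (norm_ne_zero_iff.2 hz0)]
  unfold lgreen
  rw [← hzw, green_apply hf hz1, h4, neg_add_eq_sub, ← h5]
  exact h3.le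

/-! ### Jensen's formula and the distribution of `log |f|` on circles -/

lemma sphere_subset_ball {r : ℝ} (hr0 : 0 < r) (hr : r < 1) :
    sphere (0 : ℂ) |r| ⊆ ball 0 1 := by
  rw [abs_of_pos hr0]
  exact sphere_subset_closedBall.trans (closedBall_subset_ball hr)

lemma closedBall_subset_ball' {r : ℝ} (hr0 : 0 < r) (hr : r < 1) :
    closedBall (0 : ℂ) |r| ⊆ ball 0 1 := by
  rw [abs_of_pos hr0]
  exact closedBall_subset_ball hr

lemma analyticOnNhd_dslope {f : ℂ → ℂ} (hf : InClassS f) {a : ℂ} (ha : a ∈ ball (0 : ℂ) 1) :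
    AnalyticOnNhd ℂ (dslope f a) (ball 0 1) :=
  ((Complex.differentiableOn_dslope (isOpen_ball.mem_nhds ha)).2
    hf.1.differentiableOn).analyticOnNhd isOpen_ball

lemma dslope_ne_zero {f : ℂ → ℂ} (hf : InClassS f) {a z : ℂ} (ha : a ∈ ball (0 : ℂ) 1)
    (hz : z ∈ ball (0 : ℂ) 1) : dslope f a z ≠ 0 := by
  by_cases h : z = a
  · rw [h, dslope_same]; exact deriv_ne_zero hf ha
  · rw [dslope_of_ne _ h, slope_def_field]
    exact div_ne_zero (sub_ne_zero.2 fun h2 => h (hf.2.1 hz ha h2)) (sub_ne_zero.2 h)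

/-- Jensen's formula for `f - w`, which has at most one zero in the disk, and that zero simple. -/
lemma jensen {f : ℂ → ℂ} (hf : InClassS f) {r : ℝ} (hr0 : 0 < r) (hr : r < 1) {w : ℂ}
    (hw0 : w ≠ 0) : circleAverage (fun z => Real.log ‖f z - w‖) 0 r =
      Real.log ‖w‖ + max (green f w + Real.log r) 0 := by
  by_cases hw : w ∈ f '' ball 0 1
  · obtain ⟨a, ha, rfl⟩ := hw
    have ha0 : a ≠ 0 := by rintro rfl; exact hw0 hf.2.2.1
    have hq := analyticOnNhd_dslope hf ha
    have h1 : circleAverage (fun z => Real.log ‖dslope f a z‖) 0 r =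
        Real.log ‖dslope f a 0‖ :=
      AnalyticOnNhd.circleAverage_log_norm_of_ne_zero
        (hq.mono (closedBall_subset_ball' hr0 hr))
        (fun u hu => dslope_ne_zero hf ha (closedBall_subset_ball' hr0 hr hu))
    have h2 := circleAverage_log_norm_sub_const_eq_log_radius_add_posLog (a := a) (c := 0) hr0.ne'
    have h3 : circleAverage (fun z => Real.log ‖f z - f a‖) 0 r =
        circleAverage ((fun z => Real.log ‖z - a‖) + fun z => Real.log ‖dslope f a z‖) 0 r := by
      apply circleAverage_congr_codiscreteWithin _ hr0.ne'
      have : {z | z ≠ a} ∈ codiscreteWithin (sphere (0 : ℂ) |r|) := by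
        apply codiscreteWithin_mono (subset_univ _)
        rw [mem_codiscreteWithin]
        intro x _
        have : (univ \ {z | z ≠ a}) = {a} := by ext; simp
        rw [this, disjoint_principal_right]
        by_cases hx : x = a
        · rw [hx]; exact self_mem_nhdsWithin
        · exact mem_nhdsWithin_of_mem_nhds (isOpen_compl_singleton.mem_nhds hx)
      have hself : sphere (0 : ℂ) |r| ∈ codiscreteWithin (sphere (0 : ℂ) |r|) := by
        rw [mem_codiscreteWithin]; simp
      filter_upwards [this, hself] with z hz hzs
      have h0 : dslope f a z = (f z - f a) / (z - a) := by
        rw [dslope_of_ne _ hz, slope_def_field]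
      by_cases hz1 : f z - f a = 0
      · exact absurd (hf.2.1 (sphere_subset_ball hr0 hr hzs) ha (sub_eq_zero.1 hz1)) hz
      · simp only [Pi.add_apply, h0, norm_div]
        rw [Real.log_div (norm_ne_zero_iff.2 hz1) (norm_ne_zero_iff.2 (sub_ne_zero.2 hz))]
        ring
    rw [h3, circleAverage_add (circleIntegrable_log_norm_sub_const r)
      ((hq.mono (sphere_subset_ball hr0 hr)).meromorphicOn.circleIntegrable_log_norm), h1, h2,
      green_apply hf ha, dslope_of_ne _ ha0.symm, slope_def_field, hf.2.2.1]
    simp only [zero_sub, norm_neg, neg_div_neg_eq, norm_div, posLog]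
    have hna := norm_pos_iff.2 ha0
    rw [Real.log_div (norm_ne_zero_iff.2 hw0) hna.ne', Real.log_mul (by positivity) hna.ne',
      Real.log_inv]
    rcases le_total 0 (-Real.log r + Real.log ‖a‖) with h | h
    · rw [max_eq_right h, max_eq_right (by linarith)]; ring
    · rw [max_eq_left h, max_eq_left (by linarith)]; ring
  · have h1 : circleAverage (fun z => Real.log ‖f z - w‖) 0 r = Real.log ‖f 0 - w‖ :=
      AnalyticOnNhd.circleAverage_log_norm_of_ne_zero (g := fun z => f z - w)
        ((hf.1.sub analyticOnNhd_const).mono (closedBall_subset_ball' hr0 hr))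
        (fun u hu => sub_ne_zero.2 fun h => hw ⟨u, closedBall_subset_ball' hr0 hr hu, h⟩)
    rw [h1, hf.2.2.1, zero_sub, norm_neg, green_of_notMem hw, zero_add,
      max_eq_right (Real.log_nonpos hr0.le hr.le), add_zero]

lemma circleAverage_log_norm {f : ℂ → ℂ} (hf : InClassS f) {r : ℝ} (hr0 : 0 < r) (hr : r < 1) :
    circleAverage (fun z => Real.log ‖f z‖) 0 r = Real.log r := by
  have h0 : (0 : ℂ) ∈ ball (0 : ℂ) 1 := mem_ball_self one_pos
  have hq := analyticOnNhd_dslope hf h0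
  have h1 : circleAverage (fun z => Real.log ‖dslope f 0 z‖) 0 r =
        Real.log ‖dslope f 0 0‖ :=
      AnalyticOnNhd.circleAverage_log_norm_of_ne_zero
        (hq.mono (closedBall_subset_ball' hr0 hr))
        (fun u hu => dslope_ne_zero hf h0 (closedBall_subset_ball' hr0 hr hu))
  rw [dslope_same, hf.2.2.2, norm_one, Real.log_one] at h1
  have h3 : circleAverage (fun z => Real.log ‖f z‖) 0 r =
        circleAverage ((fun z => Real.log r) + fun z => Real.log ‖dslope f 0 z‖) 0 r := by
    apply circleAverage_congr_sphere
    intro z hz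
    rw [abs_of_pos hr0, mem_sphere_zero_iff_norm] at hz
    have hz0 : z ≠ 0 := by rintro rfl; simp at hz; linarith
    have hz1 : z ∈ ball (0 : ℂ) 1 := by simpa [hz] using hr
    have : dslope f 0 z = f z / z := by
      rw [dslope_of_ne _ hz0, slope_def_field, hf.2.2.1, sub_zero, sub_zero]
    simp only [Pi.add_apply]
    rw [this, norm_div, Real.log_div (norm_ne_zero_iff.2 (apply_ne_zero hf hz1 hz0))
      (norm_ne_zero_iff.2 hz0), hz]
    ring
  rw [h3, circleAverage_add (circleIntegrable_const _ _ _)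
      ((hq.mono (sphere_subset_ball hr0 hr)).meromorphicOn.circleIntegrable_log_norm), h1,
    circleAverage_const, add_zero]

lemma exp_vertical (s φ : ℝ) :
    Complex.exp (s + φ * I) = circleMap 0 (Real.exp s) φ := by
  rw [circleMap_zero, Complex.exp_add, Complex.ofReal_exp]

lemma continuous_log_norm_circle {f : ℂ → ℂ} (hf : InClassS f) {r : ℝ} (hr0 : 0 < r)
    (hr : r < 1) : Continuous fun α : ℝ => Real.log ‖f (circleMap 0 r α)‖ := by
  have hmem : ∀ α : ℝ, circleMap 0 r α ∈ ball (0 : ℂ) 1 := fun α =>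
    sphere_subset_ball hr0 hr (circleMap_mem_sphere' 0 r α)
  refine Continuous.log ?_ fun α => norm_ne_zero_iff.2
    (apply_ne_zero hf (hmem α) (circleMap_ne_center hr0.ne'))
  exact (hf.1.continuousOn.comp_continuous (continuous_circleMap 0 r) hmem).norm

/-- Averaging `log |f(z) - w|` over `|z| = e^{-t}` and `|w| = e^s` in either order turns the
distribution of the Green function on `|w| = e^s` into that of `log |f|` on `|z| = e^{-t}`. -/
lemma integral_max_lgreen {f : ℂ → ℂ} (hf : InClassS f) {t : ℝ} (ht : 0 < t) (s : ℝ) :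
    ∫ φ in (0 : ℝ)..(2 * π), max (lgreen f (s + φ * I) - t) 0 =
      ∫ α in (0 : ℝ)..(2 * π), max (Real.log ‖f (circleMap 0 (Real.exp (-t)) α)‖ - s) 0 := by
  set r := Real.exp (-t) with hr_def
  have hr0 : 0 < r := Real.exp_pos _
  have hr : r < 1 := by rw [hr_def, Real.exp_lt_one_iff]; linarith
  have hlr : Real.log r = -t := Real.log_exp _
  have hπ : (0 : ℝ) ≤ 2 * π := by positivity
  set R := Real.exp s with hR_def
  have hR0 : 0 < R := Real.exp_pos _
  have hlR : Real.log R = s := Real.log_exp _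
  have hmem : ∀ α : ℝ, circleMap 0 r α ∈ ball (0 : ℂ) 1 := fun α =>
    sphere_subset_ball hr0 hr (circleMap_mem_sphere' 0 r α)
  have hfc : Continuous fun α : ℝ => f (circleMap 0 r α) :=
    hf.1.continuousOn.comp_continuous (continuous_circleMap 0 r) hmem
  obtain ⟨B, hB⟩ : ∃ B, ∀ α : ℝ, ‖f (circleMap 0 r α)‖ ≤ B := by
    have hK : IsCompact (sphere (0 : ℂ) |r|) := isCompact_sphere _ _
    obtain ⟨B, hB⟩ := hK.exists_bound_of_continuousOn
      (hf.1.continuousOn.mono (sphere_subset_ball hr0 hr))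
    exact ⟨B, fun α => hB _ (circleMap_mem_sphere' 0 r α)⟩
  set C := |B| + R + 1 with hC
  have hC1 : 1 ≤ C := by rw [hC]; linarith [abs_nonneg B]
  set L : ℝ → ℝ → ℝ := fun α φ => Real.log ‖f (circleMap 0 r α) - circleMap 0 R φ‖ with hL
  have hLC : ∀ α φ, 0 ≤ Real.log C - L α φ := by
    intro α φ
    rw [sub_nonneg]
    rcases (norm_nonneg (f (circleMap 0 r α) - circleMap 0 R φ)).eq_or_lt with h | h
    · simp only [hL, ← h, Real.log_zero]; exact Real.log_nonneg hC1
    · apply Real.log_le_log h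
      refine (norm_sub_le _ _).trans ?_
      rw [norm_circleMap_zero, abs_of_pos hR0, hC]
      linarith [hB α, le_abs_self B]
  set μ : Measure ℝ := volume.restrict (Ioc 0 (2 * π)) with hμ
  -- the two iterated averages
  have hI1 : ∀ φ, Integrable (fun α => L α φ) μ := by
    intro φ
    have : CircleIntegrable (fun z => Real.log ‖f z - circleMap 0 R φ‖) 0 r :=
      MeromorphicOn.circleIntegrable_log_norm
        ((hf.1.sub analyticOnNhd_const).mono (sphere_subset_ball hr0 hr)).meromorphicOn
    exact (intervalIntegrable_iff_integrableOn_Ioc_of_le hπ).1 this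
  have hI2 : ∀ α, Integrable (fun φ => L α φ) μ := by
    intro α
    have : CircleIntegrable (fun z => Real.log ‖z - f (circleMap 0 r α)‖) 0 R :=
      circleIntegrable_log_norm_sub_const R
    have := (intervalIntegrable_iff_integrableOn_Ioc_of_le hπ).1 this
    simp only [hL]
    simp_rw [norm_sub_rev (f (circleMap 0 r α))]
    exact this
  have hA1 : ∀ φ, ∫ α, L α φ ∂μ = 2 * π * (s + max (lgreen f (s + φ * I) - t) 0) := by
    intro φ
    have h := jensen hf hr0 hr (w := circleMap 0 R φ) (circleMap_ne_center hR0.ne')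
    rw [norm_circleMap_zero, abs_of_pos hR0, hlR, hlr, ← exp_vertical, circleAverage_def,
      intervalIntegral.integral_of_le hπ, smul_eq_mul, inv_mul_eq_iff_eq_mul₀ (by positivity)] at h
    simp only [hL, hμ, hR_def, ← exp_vertical]
    exact h
  have hA2 : ∀ α, ∫ φ, L α φ ∂μ =
      2 * π * (s + max (Real.log ‖f (circleMap 0 r α)‖ - s) 0) := by
    intro α
    have h := circleAverage_log_norm_sub_const_eq_log_radius_add_posLog
      (a := f (circleMap 0 r α)) (c := 0) hR0.ne'
    have hne := norm_ne_zero_iff.2 (apply_ne_zero hf (hmem α) (circleMap_ne_center hr0.ne'))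
    rw [circleAverage_def,
      intervalIntegral.integral_of_le hπ, smul_eq_mul, inv_mul_eq_iff_eq_mul₀ (by positivity),
      zero_sub, norm_neg, posLog, Real.log_mul (by positivity) hne, Real.log_inv, hlR] at h
    simp only [hL, hμ]
    simp_rw [norm_sub_rev (f (circleMap 0 r α))]
    rw [h, max_comm, neg_add_eq_sub]
  have hcU : Continuous fun φ : ℝ => max (lgreen f (s + φ * I) - t) 0 := by
    have := continuous_lgreen hf
    fun_prop
  have hcf : Continuous fun α : ℝ => max (Real.log ‖f (circleMap 0 r α)‖ - s) 0 :=
    ((continuous_log_norm_circle hf hr0 hr).sub continuous_const).max continuous_const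
  have hμI : ∀ g : ℝ → ℝ, Continuous g → Integrable g μ := fun g hg =>
    (intervalIntegrable_iff_integrableOn_Ioc_of_le hπ).1 (hg.intervalIntegrable _ _)
  have hmeas : AEStronglyMeasurable (Function.uncurry fun α φ => Real.log C - L α φ)
      (μ.prod μ) := by
    apply Measurable.aestronglyMeasurable
    have h1 : Continuous fun p : ℝ × ℝ => f (circleMap 0 r p.1) - circleMap 0 R p.2 :=
      (hfc.comp continuous_fst).sub ((continuous_circleMap 0 R).comp continuous_snd)
    exact measurable_const.sub (Real.measurable_log.comp h1.norm.measurable)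
  have hintg : Integrable (Function.uncurry fun α φ => Real.log C - L α φ) (μ.prod μ) := by
    rw [integrable_prod_iff hmeas]
    refine ⟨Eventually.of_forall fun α => (integrable_const _).sub (hI2 α), ?_⟩
    have : (fun α => ∫ φ, ‖Function.uncurry (fun α φ => Real.log C - L α φ) (α, φ)‖ ∂μ) =
        fun α => (∫ φ, Real.log C ∂μ) -
          2 * π * (s + max (Real.log ‖f (circleMap 0 r α)‖ - s) 0) := by
      funext α
      rw [← hA2 α, ← integral_sub (integrable_const _) (hI2 α)]
      exact integral_congr_ae (Eventually.of_forall fun φ => Real.norm_of_nonneg (hLC α φ))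
    rw [this]
    exact hμI _ (continuous_const.sub (continuous_const.mul (continuous_const.add hcf)))
  have hswap := integral_integral_swap hintg
  have e1 : ∀ α, ∫ φ, (Real.log C - L α φ) ∂μ = (∫ φ, Real.log C ∂μ) -
      2 * π * (s + max (Real.log ‖f (circleMap 0 r α)‖ - s) 0) := fun α => by
    rw [← hA2 α, ← integral_sub (integrable_const _) (hI2 α)]
  have e2 : ∀ φ, ∫ α, (Real.log C - L α φ) ∂μ = (∫ φ, Real.log C ∂μ) -
      2 * π * (s + max (lgreen f (s + φ * I) - t) 0) := fun φ => by
    rw [← hA1 φ, ← integral_sub (integrable_const _) (hI1 φ)]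
  simp_rw [e1, e2] at hswap
  have key : ∀ (K : ℝ) (g : ℝ → ℝ), Continuous g → ∫ x, (K - 2 * π * (s + g x)) ∂μ =
      (∫ _, (K - 2 * π * s) ∂μ) - 2 * π * ∫ x, g x ∂μ := by
    intro K g hg
    rw [← integral_const_mul, ← integral_sub (integrable_const _) ((hμI g hg).const_mul _)]
    congr 1; funext x; ring
  rw [key _ _ hcf, key _ _ hcU] at hswap
  rw [intervalIntegral.integral_of_le hπ, intervalIntegral.integral_of_le hπ]
  have h2π : (2 * π) ≠ 0 := by positivity
  exact (mul_left_cancel₀ h2π (sub_right_injective hswap)).symm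

lemma integral_log_norm_circle {f : ℂ → ℂ} (hf : InClassS f) {t : ℝ} (ht : 0 < t) :
    ∫ α in (0 : ℝ)..(2 * π), Real.log ‖f (circleMap 0 (Real.exp (-t)) α)‖ = -(2 * π * t) := by
  have h := circleAverage_log_norm hf (r := Real.exp (-t)) (Real.exp_pos _)
    (by rw [Real.exp_lt_one_iff]; linarith)
  rw [circleAverage_def, smul_eq_mul, inv_mul_eq_iff_eq_mul₀ (by positivity), Real.log_exp] at h
  rw [h]; ring

lemma lgreen_lower_aux {f : ℂ → ℂ} (hf : InClassS f) {t : ℝ} (ht : 0 < t) (s : ℝ) :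
    -(2 * π * s) - 2 * π * t ≤ ∫ φ in (0 : ℝ)..(2 * π), lgreen f (s + φ * I) := by
  have hc := continuous_log_norm_circle hf (r := Real.exp (-t)) (Real.exp_pos _)
    (by rw [Real.exp_lt_one_iff]; linarith)
  have hU := continuous_lgreen hf
  calc -(2 * π * s) - 2 * π * t =
      ∫ α in (0 : ℝ)..(2 * π), (Real.log ‖f (circleMap 0 (Real.exp (-t)) α)‖ - s) := by
        rw [intervalIntegral.integral_sub (hc.intervalIntegrable _ _) (by simp),
          integral_log_norm_circle hf ht]
        simp; ring
    _ ≤ ∫ α in (0 : ℝ)..(2 * π), max (Real.log ‖f (circleMap 0 (Real.exp (-t)) α)‖ - s) 0 := by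
        apply intervalIntegral.integral_mono_on (by positivity)
        · exact (hc.sub continuous_const).intervalIntegrable _ _
        · exact ((hc.sub continuous_const).max continuous_const).intervalIntegrable _ _
        · intro x _; exact le_max_left _ _
    _ = ∫ φ in (0 : ℝ)..(2 * π), max (lgreen f (s + φ * I) - t) 0 :=
        (integral_max_lgreen hf ht s).symm
    _ ≤ _ := by
        apply intervalIntegral.integral_mono_on (by positivity)
        · exact Continuous.intervalIntegrable (by fun_prop) _ _
        · exact Continuous.intervalIntegrable (by fun_prop) _ _
        · intro x _
          exact max_le (by linarith) (green_nonneg _ _)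

lemma lgreen_lower {f : ℂ → ℂ} (hf : InClassS f) (s : ℝ) :
    -(2 * π * s) ≤ ∫ φ in (0 : ℝ)..(2 * π), lgreen f (s + φ * I) := by
  apply le_of_forall_pos_sub_le
  intro ε hε
  have := lgreen_lower_aux hf (t := ε / (2 * π)) (by positivity) s
  rwa [mul_div_cancel₀ _ (by positivity)] at this

/-- The hypothesis says that the circle `|w| = e^s` lies in `f(𝔻)`. Then `log |f| - s` has no zero
close to `|z| = 1`, and is positive there because `f(𝔻)` is open; so the integral on the right of
`integral_max_lgreen` loses its `max` for small `t`. -/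
lemma lgreen_full {f : ℂ → ℂ} (hf : InClassS f) (s : ℝ)
    (hpos : ∀ φ : ℝ, 0 < lgreen f (s + φ * I)) :
    ∫ φ in (0 : ℝ)..(2 * π), lgreen f (s + φ * I) ≤ -(2 * π * s) := by
  have hU := continuous_lgreen hf
  have hper : Function.Periodic (fun φ : ℝ => lgreen f (s + φ * I)) (2 * π) := by
    intro φ
    have : (s : ℂ) + ((φ + 2 * π : ℝ) : ℂ) * I = s + φ * I + 2 * π * I := by push_cast; ring
    simp only [this, lgreen, Complex.exp_periodic _]
  obtain ⟨m, hm0, hm⟩ : ∃ m > 0, ∀ φ : ℝ, m ≤ lgreen f (s + φ * I) := by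
    obtain ⟨φ₀, -, h⟩ := (isCompact_Icc (a := (0 : ℝ)) (b := 2 * π)).exists_isMinOn
      ⟨0, by simp; positivity⟩
      (f := fun φ : ℝ => lgreen f (s + φ * I)) (by fun_prop)
    refine ⟨_, hpos φ₀, fun φ => ?_⟩
    obtain ⟨y, hy, hy2⟩ := hper.exists_mem_Ico₀ (by positivity) φ
    rw [show lgreen f (s + φ * I) = lgreen f (s + y * I) from hy2]
    exact h (Ico_subset_Icc_self hy)
  -- `|f|` avoids `e^s` on the annulus `e^{-m} < |z| < 1`
  have havoid : ∀ ζ : ℂ, ζ.re ∈ Ioo (-m) 0 → ‖f (Complex.exp ζ)‖ ≠ Real.exp s := by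
    intro ζ hζ h
    have hz : Complex.exp ζ ∈ ball (0 : ℂ) 1 := by
      rw [mem_ball_zero_iff, Complex.norm_exp, Real.exp_lt_one_iff]; exact hζ.2
    have h1 := hm (Complex.arg (f (Complex.exp ζ)))
    have h2 : Complex.exp (s + (Complex.arg (f (Complex.exp ζ))) * I) = f (Complex.exp ζ) := by
      rw [Complex.exp_add, ← Complex.ofReal_exp, ← h, Complex.norm_mul_exp_arg_mul_I]
    rw [lgreen, h2, green_apply hf hz, Complex.norm_exp, Real.log_exp] at h1
    linarith [hζ.1]
  have hA : IsPreconnected {ζ : ℂ | ζ.re ∈ Ioo (-m) 0} := by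
    have : Convex ℝ {ζ : ℂ | ζ.re ∈ Ioo (-m) 0} :=
      (convex_Ioo (-m) 0).linear_preimage Complex.reLm
    exact this.isPreconnected
  have hcA : ContinuousOn (fun ζ => ‖f (Complex.exp ζ)‖) {ζ : ℂ | ζ.re ∈ Ioo (-m) 0} := by
    refine (hf.1.continuousOn.comp Complex.continuous_exp.continuousOn ?_).norm
    intro ζ hζ
    rw [mem_ball_zero_iff, Complex.norm_exp, Real.exp_lt_one_iff]; exact hζ.2
  have hbig : ∀ ζ : ℂ, ζ.re ∈ Ioo (-m) 0 → Real.exp s < ‖f (Complex.exp ζ)‖ := by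
    intro ζ hζ
    by_contra hcon
    push Not at hcon
    have hall : ∀ ξ : ℂ, ξ.re ∈ Ioo (-m) 0 → ‖f (Complex.exp ξ)‖ ≤ Real.exp s := by
      intro ξ hξ
      by_contra h2
      push Not at h2
      obtain ⟨x, hx, hx2⟩ := hA.intermediate_value hζ hξ hcA ⟨hcon, h2.le⟩
      exact havoid x hx hx2
    -- by the maximum principle `f(𝔻)` lies in a disk and meets its boundary, but is open
    have hle : ∀ z ∈ ball (0 : ℂ) 1, ‖f z‖ ≤ Real.exp s := by
      intro z hz
      rw [mem_ball_zero_iff] at hz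
      obtain ⟨ρ, hρ1, hρ2⟩ := exists_between (max_lt hz (Real.exp_lt_one_iff.2 (neg_lt_zero.2 hm0)))
      have hρ0 : 0 < ρ := (Real.exp_pos _).trans ((le_max_right _ _).trans_lt hρ1)
      refine Complex.norm_le_of_forall_mem_frontier_norm_le (U := ball 0 ρ) isBounded_ball ?_ ?_
        (subset_closure (mem_ball_zero_iff.2 ((le_max_left _ _).trans_lt hρ1)))
      · refine DifferentiableOn.diffContOnCl ?_
        rw [closure_ball _ hρ0.ne']
        exact hf.1.differentiableOn.mono (closedBall_subset_ball hρ2)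
      · intro u hu
        rw [frontier_ball _ hρ0.ne', mem_sphere_zero_iff_norm] at hu
        have hu0 : u ≠ 0 := by rintro rfl; rw [norm_zero] at hu; exact hρ0.ne hu
        have := hall (Complex.log u) (by
          rw [Complex.log_re, hu]
          refine ⟨?_, Real.log_neg hρ0 hρ2⟩
          rw [Real.lt_log_iff_exp_lt hρ0]
          exact (le_max_right _ _).trans_lt hρ1)
        rwa [Complex.exp_log hu0] at this
    have hw := mem_image_of_green_pos (hpos 0)
    simp only [Complex.ofReal_zero, zero_mul, add_zero] at hw
    have hnh := (isOpen_image hf subset_rfl isOpen_ball).mem_nhds hw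
    have hcont : ContinuousAt (fun x : ℝ => Complex.exp ((s + x : ℝ) : ℂ)) 0 := by fun_prop
    have hev : ∀ᶠ x : ℝ in 𝓝[>] 0, Complex.exp ((s + x : ℝ) : ℂ) ∈ f '' ball 0 1 :=
      mem_nhdsWithin_of_mem_nhds (hcont.preimage_mem_nhds (by rw [add_zero]; exact hnh))
    obtain ⟨x, ⟨z, hz, hzx⟩, hx⟩ := (hev.and self_mem_nhdsWithin).exists
    have h3 := hle z hz
    rw [hzx, Complex.norm_exp, Complex.ofReal_re, Real.exp_le_exp] at h3
    have : (0 : ℝ) < x := hx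
    linarith
  have ht : 0 < m / 2 := by positivity
  have h := integral_max_lgreen hf ht s
  have hc := continuous_log_norm_circle hf (r := Real.exp (-(m / 2))) (Real.exp_pos _)
    (by rw [Real.exp_lt_one_iff]; linarith)
  have e1 : ∫ φ in (0 : ℝ)..(2 * π), max (lgreen f (s + φ * I) - m / 2) 0 =
      (∫ φ in (0 : ℝ)..(2 * π), lgreen f (s + φ * I)) - 2 * π * (m / 2) := by
    have : ∀ φ : ℝ, max (lgreen f (s + φ * I) - m / 2) 0 = lgreen f (s + φ * I) - m / 2 :=
      fun φ => max_eq_left (by linarith [hm φ])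
    simp_rw [this]
    rw [intervalIntegral.integral_sub (Continuous.intervalIntegrable (by fun_prop) _ _) (by simp)]
    simp; ring
  have e2 : ∫ α in (0 : ℝ)..(2 * π),
      max (Real.log ‖f (circleMap 0 (Real.exp (-(m / 2))) α)‖ - s) 0 =
      -(2 * π * (m / 2)) - 2 * π * s := by
    have : ∀ α : ℝ, max (Real.log ‖f (circleMap 0 (Real.exp (-(m / 2))) α)‖ - s) 0 =
        Real.log ‖f (circleMap 0 (Real.exp (-(m / 2))) α)‖ - s := by
      intro α
      apply max_eq_left
      have := hbig (((-(m / 2) : ℝ) : ℂ) + α * I) (by simp; linarith)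
      rw [exp_vertical] at this
      rw [sub_nonneg, Real.le_log_iff_exp_le ((Real.exp_pos s).trans this)]
      exact this.le
    simp_rw [this]
    rw [intervalIntegral.integral_sub (hc.intervalIntegrable _ _) (by simp),
      integral_log_norm_circle hf ht]
    simp
  rw [e1, e2] at h
  linarith

lemma greenLike_lgreen {f : ℂ → ℂ} (hf : InClassS f) : GreenLike (lgreen f) where
  nonneg _ := green_nonneg _ _
  cont := continuous_lgreen hf
  periodic ζ := by simp only [lgreen, Complex.exp_periodic _]
  harmonic _ h := harmonicAt_lgreen hf h
  right _ h := lgreen_right hf h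
  left _ h := lgreen_left hf h
  lower := lgreen_lower hf
  full := lgreen_full hf

/-! ### Level sets of a periodic function -/

/-- Lebesgue measure on one period. -/
noncomputable abbrev perMeas : Measure ℝ := volume.restrict (Ioc 0 (2 * π))

lemma integral_perMeas (g : ℝ → ℝ) : ∫ x in (0 : ℝ)..(2 * π), g x = ∫ x, g x ∂perMeas :=
  intervalIntegral.integral_of_le (by positivity)

lemma perMeas_real_univ : perMeas.real univ = 2 * π := by
  simp [perMeas, Measure.real, Real.pi_pos.le]

lemma perMeas_real_le (E : Set ℝ) : perMeas.real E ≤ 2 * π := by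
  rw [← perMeas_real_univ]; exact measureReal_mono (subset_univ _)

lemma perMeas_pos_of_isOpen {O : Set ℝ} (ho : IsOpen O) {x : ℝ} (hx : x ∈ O)
    (hper : ∀ (x : ℝ) (n : ℤ), x ∈ O → x - n * (2 * π) ∈ O) : 0 < perMeas.real O := by
  obtain ⟨y, hy, hyO⟩ : ∃ y ∈ Ico 0 (2 * π), y ∈ O := by
    refine ⟨toIcoMod Real.two_pi_pos 0 x, ?_, ?_⟩
    · simpa using toIcoMod_mem_Ico Real.two_pi_pos 0 x
    · have := hper x (toIcoDiv Real.two_pi_pos 0 x) hx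
      rw [toIcoMod]
      rwa [zsmul_eq_mul]
  obtain ⟨δ, hδ, hb⟩ := Metric.isOpen_iff.1 ho y hyO
  have hmin : y < min (y + δ) (2 * π) := lt_min (by linarith) hy.2
  have hsub : Ioo y (min (y + δ) (2 * π)) ⊆ O ∩ Ioc 0 (2 * π) := by
    intro z hz
    refine ⟨hb ?_, hy.1.trans_lt hz.1, (hz.2.trans_le (min_le_right _ _)).le⟩
    rw [mem_ball, Real.dist_eq, abs_of_pos (by linarith [hz.1])]
    linarith [hz.2.trans_le (min_le_left _ _)]
  have h1 : 0 < volume (O ∩ Ioc 0 (2 * π)) := by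
    refine lt_of_lt_of_le ?_ (measure_mono hsub)
    rw [Real.volume_Ioo]
    simpa using hmin
  have h2 : perMeas O ≠ 0 := by
    rw [Measure.restrict_apply ho.measurableSet]; exact h1.ne'
  exact ENNReal.toReal_pos h2 (measure_ne_top _ _)

/-- A function that is real-analytic where positive either is constantly equal to a given positive
value or takes it only at isolated points. -/
lemma const_or_isolated {u : ℝ → ℝ} (hc : Continuous u)
    (ha : ∀ x, 0 < u x → AnalyticAt ℝ u x) {t : ℝ} (ht : 0 < t) :
    (∀ x, u x = t) ∨ ∀ x, ∀ᶠ y in 𝓝[≠] x, u y ≠ t := by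
  by_cases hex : ∃ p, ∀ᶠ x in 𝓝 p, u x = t
  · left
    set S := {p | ∀ᶠ x in 𝓝 p, u x = t} with hS
    have hSo : IsOpen S := isOpen_setOfPred_eventually_nhds
    have hSc : IsClosed S := by
      rw [← closure_subset_iff_isClosed]
      intro q hq
      have huq : u q = t := by
        have hcl : IsClosed {x | u x = t} := isClosed_eq hc continuous_const
        exact closure_minimal (fun x (hx : x ∈ S) => hx.self_of_nhds) hcl hq
      rcases (ha q (huq ▸ ht)).eventually_eq_or_eventually_ne
        (analyticAt_const (v := t)) with h | h
      · exact h
      · by_contra hqS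
        rw [eventually_nhdsWithin_iff] at h
        obtain ⟨y, hy, hyS⟩ := (mem_closure_iff_nhds.1 hq) _ h
        have hyq : y ≠ q := fun hyq => hqS (hyq ▸ hyS)
        exact hy hyq hyS.self_of_nhds
    have huniv : S = univ := IsClopen.eq_univ ⟨hSc, hSo⟩ hex
    intro x
    have : x ∈ S := huniv ▸ mem_univ x
    exact this.self_of_nhds
  · right
    intro x
    by_cases hx : u x = t
    · exact ((ha x (hx ▸ ht)).eventually_eq_or_eventually_ne
        (analyticAt_const (v := t))).resolve_left fun h => hex ⟨x, h⟩
    · exact (hc.continuousAt.eventually_ne hx).filter_mono nhdsWithin_le_nhds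

lemma ae_ne_of_isolated {u : ℝ → ℝ} {t : ℝ} (h : ∀ x, ∀ᶠ y in 𝓝[≠] x, u y ≠ t) :
    ∀ᵐ x ∂perMeas, u x ≠ t := by
  have h1 : {x | u x ≠ t} ∈ codiscreteWithin (Ioc 0 (2 * π)) := by
    rw [mem_codiscreteWithin]
    intro x _
    rw [disjoint_principal_right]
    filter_upwards [h x] with y hy hy2
    exact hy2.2 hy
  exact ae_restrict_le_codiscreteWithin measurableSet_Ioc h1

/-- The level `t` at which the distribution function of `u` passes the mass `2θ`; its superlevel set
is the optimal set of mass `2θ` up to the part where `u = t`. -/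
lemma exists_level {u : ℝ → ℝ} (hc : Continuous u) {B : ℝ} (hB : ∀ x, u x ≤ B)
    (h0 : ∀ x, 0 ≤ u x) {θ : ℝ} (hθ : 0 < θ) (hm : 2 * θ < perMeas.real {x | 0 < u x}) :
    ∃ t > 0, perMeas.real {x | t < u x} ≤ 2 * θ ∧ 2 * θ ≤ perMeas.real {x | t ≤ u x} := by
  set T := {t | 0 ≤ t ∧ perMeas.real {x | t < u x} ≤ 2 * θ} with hT
  have hanti : ∀ a b, a ≤ b → perMeas.real {x | b < u x} ≤ perMeas.real {x | a < u x} :=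
    fun a b hab => measureReal_mono fun x (hx : b < u x) => hab.trans_lt hx
  have hTne : T.Nonempty := by
    refine ⟨B, (h0 0).trans (hB 0), ?_⟩
    have : {x | B < u x} = ∅ := by
      ext x; simpa using hB x
    rw [this]; simp; linarith
  have hTb : BddBelow T := ⟨0, fun t ht => ht.1⟩
  set t := sInf T with ht
  have ht0 : 0 ≤ t := le_csInf hTne fun t ht => ht.1
  have hmeas : ∀ a, MeasurableSet {x | a < u x} := fun a =>
    measurableSet_lt measurable_const hc.measurable
  obtain ⟨e, hea, hepos, hetend⟩ := exists_seq_strictAnti_tendsto (0 : ℝ)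
  have hup : perMeas.real {x | t < u x} ≤ 2 * θ := by
    have hlim : Tendsto (fun n => perMeas {x | t + e n < u x}) atTop
        (𝓝 (perMeas (⋃ n, {x | t + e n < u x}))) := by
      apply tendsto_measure_iUnion_atTop
      intro a b hab x (hx : t + e a < u x)
      have : e b ≤ e a := hea.antitone hab
      exact (by linarith : t + e b < u x)
    have hU : (⋃ n, {x | t + e n < u x}) = {x | t < u x} := by
      ext x
      simp only [mem_iUnion, mem_ofPred_eq]
      constructor
      · rintro ⟨n, hn⟩; linarith [hepos n]
      · intro hx
        have := (hetend.eventually (gt_mem_nhds (sub_pos.2 hx))).exists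
        obtain ⟨n, hn⟩ := this
        exact ⟨n, by linarith⟩
    rw [hU] at hlim
    have hlim' := (ENNReal.tendsto_toReal (measure_ne_top _ _)).comp hlim
    refine le_of_tendsto hlim' (Eventually.of_forall fun n => ?_)
    obtain ⟨a, haT, ha⟩ := exists_lt_of_csInf_lt hTne (lt_add_of_pos_right t (hepos n))
    exact (hanti a _ ha.le).trans haT.2
  have htpos : 0 < t := by
    rcases ht0.eq_or_lt with h | h
    · rw [← h] at hup; linarith
    · exact h
  refine ⟨t, htpos, hup, ?_⟩
  have hlim : Tendsto (fun n => perMeas {x | t - e n < u x}) atTop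
      (𝓝 (perMeas (⋂ n, {x | t - e n < u x}))) := by
    apply tendsto_measure_iInter_atTop (fun n => (hmeas _).nullMeasurableSet)
    · intro a b hab x (hx : t - e b < u x)
      have : e b ≤ e a := hea.antitone hab
      exact (by linarith : t - e a < u x)
    · exact ⟨0, measure_ne_top _ _⟩
  have hI : (⋂ n, {x | t - e n < u x}) = {x | t ≤ u x} := by
    ext x
    simp only [mem_iInter, mem_ofPred_eq]
    constructor
    · intro h
      have : Tendsto (fun n => t - e n) atTop (𝓝 (t - 0)) := tendsto_const_nhds.sub hetend
      rw [sub_zero] at this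
      exact le_of_tendsto this (Eventually.of_forall fun n => (h n).le)
    · intro h n; linarith [hepos n]
  rw [hI] at hlim
  have hlim' := (ENNReal.tendsto_toReal (measure_ne_top _ _)).comp hlim
  have hev : ∀ᶠ n in atTop, e n ≤ t := hetend.eventually (ge_mem_nhds htpos)
  refine ge_of_tendsto hlim' (hev.mono fun n hn => ?_)
  by_contra hcon
  push Not at hcon
  have : t - e n ∈ T := ⟨by linarith, hcon.le⟩
  have := csInf_le hTb this
  linarith [hepos n]

lemma integral_cutoff (u : ℝ → ℝ) (hc : Continuous u) (t : ℝ) :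
    ∫ x in (0 : ℝ)..(2 * π), {x | t < u x}.indicator (fun _ => (1 : ℝ)) x =
      perMeas.real {x | t < u x} := by
  rw [integral_perMeas, integral_indicator (measurableSet_lt measurable_const hc.measurable)]
  simp

lemma integrable_cutoff_mul {χ u : ℝ → ℝ} (hχ : Measurable χ) (hχ1 : ∀ x, χ x ∈ Icc (0 : ℝ) 1)
    (hc : Continuous u) (a b : ℝ) :
    IntervalIntegrable (fun x => χ x * u x) volume a b := by
  have hu : IntervalIntegrable u volume a b := hc.intervalIntegrable _ _
  refine hu.mono_fun (hχ.aestronglyMeasurable.mul hc.aestronglyMeasurable) ?_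
  refine Eventually.of_forall fun x => ?_
  simp only [norm_mul, Real.norm_eq_abs]
  rw [abs_of_nonneg (hχ1 x).1]
  exact mul_le_of_le_one_left (abs_nonneg _) (hχ1 x).2

lemma integrable_cutoff {χ : ℝ → ℝ} (hχ : Measurable χ) (hχ1 : ∀ x, χ x ∈ Icc (0 : ℝ) 1)
    (a b : ℝ) : IntervalIntegrable χ volume a b := by
  simpa using integrable_cutoff_mul hχ hχ1 (continuous_const (y := (1 : ℝ))) a b

/-- Integral of the excess over level `t`, in terms of the superlevel set. -/
lemma integral_max_eq (u : ℝ → ℝ) (hc : Continuous u) (t : ℝ) :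
    ∫ x in (0 : ℝ)..(2 * π), max (u x - t) 0 =
      (∫ x in (0 : ℝ)..(2 * π), {x | t < u x}.indicator (fun _ => (1 : ℝ)) x * u x) -
        perMeas.real {x | t < u x} * t := by
  have hχ : Measurable ({x | t < u x}.indicator (fun _ => (1 : ℝ))) :=
    measurable_const.indicator (measurableSet_lt measurable_const hc.measurable)
  have hχ1 : ∀ x, {x | t < u x}.indicator (fun _ => (1 : ℝ)) x ∈ Icc (0 : ℝ) 1 := by
    intro x; by_cases h : x ∈ {x | t < u x} <;> simp [h]
  rw [← integral_cutoff u hc t, ← intervalIntegral.integral_mul_const,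
    ← intervalIntegral.integral_sub (integrable_cutoff_mul hχ hχ1 hc _ _)
      (integrable_cutoff_mul hχ hχ1 continuous_const _ _)]
  congr 1
  funext x
  by_cases h : t < u x
  · rw [indicator_of_mem (show x ∈ {x | t < u x} from h), max_eq_left (by linarith)]; ring
  · rw [indicator_of_notMem (show x ∉ {x | t < u x} from h), max_eq_right (by linarith)]; ring

/-- A set of mass `2θ` on which `u` has the largest possible integral, given by its indicator
function `χ`. The set contains an interval to the left of some point `b` and misses an interval to
the right of it, which leaves room to transfer mass between translates in `exists_split`. -/
lemma exists_cutoff {u : ℝ → ℝ} (hc : Continuous u) (hp : Function.Periodic u (2 * π))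
    (h0 : ∀ x, 0 ≤ u x) (ha : ∀ x, 0 < u x → AnalyticAt ℝ u x) {θ : ℝ} (hθ0 : 0 < θ)
    (hθ : θ < π) (hm : 2 * θ < perMeas.real {x | 0 < u x}) :
    ∃ (χ : ℝ → ℝ) (t b η : ℝ), Measurable χ ∧ Function.Periodic χ (2 * π) ∧
      (∀ x, χ x ∈ Icc (0 : ℝ) 1) ∧ ∫ x in (0 : ℝ)..(2 * π), χ x = 2 * θ ∧ 0 < t ∧
      (∀ x, χ x ≠ 0 → t ≤ u x) ∧ 0 < η ∧ (∀ x ∈ Ioo (b - η) b, χ x = 1) ∧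
      (∀ x ∈ Ioo b (b + η), χ x = 0) ∧
      2 * θ * t + ∫ x in (0 : ℝ)..(2 * π), max (u x - t) 0 ≤
        ∫ x in (0 : ℝ)..(2 * π), χ x * u x := by
  obtain ⟨B, hB⟩ : ∃ B, ∀ x, u x ≤ B := by
    obtain ⟨y, -, hy⟩ := (isCompact_Icc (a := (0 : ℝ)) (b := 2 * π)).exists_isMaxOn
      ⟨0, by simp; positivity⟩ hc.continuousOn
    refine ⟨u y, fun x => ?_⟩
    obtain ⟨z, hz, hz2⟩ := hp.exists_mem_Ico₀ (by positivity) x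
    rw [hz2]
    exact hy (Ico_subset_Icc_self hz)
  obtain ⟨t, ht, hup, hlow⟩ := exists_level hc hB h0 hθ0 hm
  rcases const_or_isolated hc ha ht with hconst | hiso
  · -- a constant `u`: any arc of length `2θ` will do
    have hE : MeasurableSet {x : ℝ | toIocMod Real.two_pi_pos 0 x ≤ 2 * θ} := by
      have : {x : ℝ | toIocMod Real.two_pi_pos 0 x ≤ 2 * θ} =
          ⋃ n : ℤ, Ioc (n * (2 * π)) (n * (2 * π) + 2 * θ) := by
        ext x
        simp only [mem_ofPred_eq, mem_iUnion, mem_Ioc]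
        constructor
        · intro hx
          refine ⟨toIocDiv Real.two_pi_pos 0 x, ?_⟩
          have h1 := (toIocMod_mem_Ioc Real.two_pi_pos 0 x).1
          rw [toIocMod, zsmul_eq_mul] at hx h1
          constructor <;> linarith
        · rintro ⟨n, h1, h2⟩
          have : toIocMod Real.two_pi_pos 0 x = x - n * (2 * π) := by
            rw [toIocMod_eq_iff]
            refine ⟨⟨by linarith, by linarith⟩, n, ?_⟩
            rw [zsmul_eq_mul]; ring
          rw [this]; linarith
      rw [this]
      exact MeasurableSet.iUnion fun n => measurableSet_Ioc
    set χ : ℝ → ℝ := {x : ℝ | toIocMod Real.two_pi_pos 0 x ≤ 2 * θ}.indicator (fun _ => 1) with hχ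
    have hmod : ∀ x ∈ Ioc 0 (2 * π), toIocMod Real.two_pi_pos 0 x = x := by
      intro x hx
      rw [toIocMod_eq_self]; simpa using hx
    have hone : ∀ x ∈ Ioc 0 (2 * θ), χ x = 1 := by
      intro x hx
      apply indicator_of_mem
      show toIocMod Real.two_pi_pos 0 x ≤ 2 * θ
      rw [hmod x ⟨hx.1, by linarith [hx.2]⟩]; exact hx.2
    have hzero : ∀ x ∈ Ioc (2 * θ) (2 * π), χ x = 0 := by
      intro x hx
      apply indicator_of_notMem
      show ¬ toIocMod Real.two_pi_pos 0 x ≤ 2 * θ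
      rw [hmod x ⟨by linarith [hx.1], hx.2⟩]; exact not_le.2 hx.1
    have hχm : Measurable χ := measurable_const.indicator hE
    have hχ1 : ∀ x, χ x ∈ Icc (0 : ℝ) 1 := by
      intro x
      by_cases h : x ∈ {x : ℝ | toIocMod Real.two_pi_pos 0 x ≤ 2 * θ}
      · rw [hχ, indicator_of_mem h]; simp
      · rw [hχ, indicator_of_notMem h]; simp
    have hintg : ∫ x in (0 : ℝ)..(2 * π), χ x = 2 * θ := by
      rw [← intervalIntegral.integral_add_adjacent_intervals
        (integrable_cutoff hχm hχ1 0 (2 * θ)) (integrable_cutoff hχm hχ1 (2 * θ) (2 * π)),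
        intervalIntegral.integral_of_le (by linarith), intervalIntegral.integral_of_le (by linarith),
        setIntegral_congr_fun measurableSet_Ioc hone, setIntegral_congr_fun measurableSet_Ioc hzero]
      simp; linarith
    refine ⟨χ, t, 2 * θ, min (2 * θ) (2 * π - 2 * θ), hχm, ?_, hχ1, hintg, ht, ?_, ?_, ?_, ?_, ?_⟩
    · intro x
      have : toIocMod Real.two_pi_pos 0 (x + 2 * π) = toIocMod Real.two_pi_pos 0 x :=
        toIocMod_add_right _ _ _
      simp only [hχ, indicator, mem_ofPred_eq, this]
    · intro x _; exact (hconst x).ge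
    · exact lt_min (by linarith) (by linarith)
    · intro x hx
      exact hone x ⟨by linarith [hx.1, min_le_left (2 * θ) (2 * π - 2 * θ)], hx.2.le⟩
    · intro x hx
      exact hzero x ⟨hx.1, by linarith [hx.2, min_le_right (2 * θ) (2 * π - 2 * θ)]⟩
    · simp_rw [hconst]
      rw [intervalIntegral.integral_mul_const, hintg]
      simp
  · have hae := ae_ne_of_isolated hiso
    have hmass : perMeas.real {x | t < u x} = 2 * θ := by
      refine le_antisymm hup (hlow.trans (le_of_eq ?_))
      apply measureReal_congr
      filter_upwards [hae] with x hx
      exact propext ⟨fun h => lt_of_le_of_ne h (Ne.symm hx), fun h => le_of_lt h⟩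
    set χ : ℝ → ℝ := {x | t < u x}.indicator (fun _ => 1) with hχ
    have hχm : Measurable χ :=
      measurable_const.indicator (measurableSet_lt measurable_const hc.measurable)
    have hχ1 : ∀ x, χ x ∈ Icc (0 : ℝ) 1 := by
      intro x; by_cases h : x ∈ {x | t < u x} <;> simp [hχ, h]
    obtain ⟨e, he⟩ : ∃ e, t < u e := by
      by_contra hcon
      push Not at hcon
      have : {x | t < u x} = ∅ := by ext x; simpa using hcon x
      rw [this] at hmass
      simp at hmass; linarith
    obtain ⟨c', hc'⟩ : ∃ c, u c < t := by
      by_contra hcon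
      push Not at hcon
      have : perMeas.real {x | t < u x} = perMeas.real univ := by
        apply measureReal_congr
        filter_upwards [hae] with x hx
        exact propext ⟨fun h => trivial, fun _ => lt_of_le_of_ne (hcon x) (Ne.symm hx)⟩
      rw [hmass, perMeas_real_univ] at this
      linarith
    obtain ⟨c, hcu, hec⟩ : ∃ c, u c < t ∧ e ≤ c := by
      obtain ⟨n, hn⟩ := exists_nat_ge ((e - c') / (2 * π))
      refine ⟨c' + n * (2 * π), ?_, ?_⟩
      · rwa [hp.nat_mul n c']
      · rw [div_le_iff₀ Real.two_pi_pos] at hn; linarith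
    -- the last point of `{u > t}` before `c`
    set A := {x | x ∈ Icc e c ∧ t < u x} with hA
    have hAne : A.Nonempty := ⟨e, ⟨le_rfl, hec⟩, he⟩
    have hAb : BddAbove A := ⟨c, fun x hx => hx.1.2⟩
    set b := sSup A with hb
    have hbA : IsLUB A b := isLUB_csSup hAne hAb
    have hbt : t ≤ u b := by
      have hcl : IsClosed {x | t ≤ u x} := isClosed_le continuous_const hc
      exact closure_minimal (fun x (hx : x ∈ A) => hx.2.le) hcl (hbA.mem_closure hAne)
    have hbc : b < c := by
      refine lt_of_le_of_ne (hbA.2 fun x hx => hx.1.2) ?_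
      rintro h; rw [h] at hbt; linarith
    have heb : e ≤ b := hbA.1 ⟨⟨le_rfl, hec⟩, he⟩
    have hright : ∀ x, b < x → x ≤ c → u x ≤ t := by
      intro x hx hxc
      by_contra hcon
      push Not at hcon
      have := hbA.1 (show x ∈ A from ⟨⟨heb.trans hx.le, hxc⟩, hcon⟩)
      linarith
    have hbeq : u b = t := by
      refine le_antisymm ?_ hbt
      have : Tendsto u (𝓝[>] b) (𝓝 (u b)) := hc.continuousAt.tendsto.mono_left nhdsWithin_le_nhds
      refine le_of_tendsto this ?_
      filter_upwards [Ioo_mem_nhdsGT hbc] with x hx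
      exact hright x hx.1 hx.2.le
    obtain ⟨δ, hδ, hδb⟩ := Metric.mem_nhdsWithin_iff.1 (hiso b)
    have hleft : ∀ x ∈ Ioo (b - δ) b, t < u x := by
      intro x hx
      by_contra hcon
      have hne : ∀ y ∈ Ioo (b - δ) b, u y ≠ t := by
        intro y hy
        refine hδb ⟨?_, hy.2.ne⟩
        rw [mem_ball, Real.dist_eq, abs_of_neg (by linarith [hy.2])]
        linarith [hy.1]
      obtain ⟨a, haA, hax⟩ := (lt_isLUB_iff hbA).1 hx.2
      have hab : a < b := by
        refine lt_of_le_of_ne (hbA.1 haA) ?_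
        intro h
        have h2 := haA.2
        rw [h, hbeq] at h2
        exact lt_irrefl _ h2
      obtain ⟨y, hy, hyt⟩ := intermediate_value_Icc hax.le hc.continuousOn
        ⟨not_lt.1 hcon, haA.2.le⟩
      exact hne y ⟨hx.1.trans_le hy.1, hy.2.trans_lt hab⟩ hyt
    refine ⟨χ, t, b, min δ (c - b), hχm, ?_, hχ1, ?_, ht, ?_, ?_, ?_, ?_, ?_⟩
    · intro x
      have := hp x
      simp only [hχ, indicator, mem_ofPred_eq, this]
    · rw [hχ, integral_cutoff u hc t, hmass]
    · intro x hx
      by_contra hcon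
      exact hx (indicator_of_notMem (show x ∉ {x | t < u x} from fun h => hcon (le_of_lt h)) _)
    · exact lt_min hδ (by linarith)
    · intro x hx
      exact indicator_of_mem (show x ∈ {x | t < u x} from
        hleft x ⟨by linarith [hx.1, min_le_left δ (c - b)], hx.2⟩) _
    · intro x hx
      exact indicator_of_notMem (show x ∉ {x | t < u x} from
        not_lt.2 (hright x hx.1 (by linarith [hx.2, min_le_right δ (c - b)]))) _
    · rw [integral_max_eq u hc t, hmass]
      linarith

/-! ### Baernstein's star function -/

/-- Integral over a period of the excess of `U` over the level `t`, on the vertical line `re = s`.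
-/
noncomputable def excess (U : ℂ → ℝ) (s t : ℝ) : ℝ :=
  ∫ φ in (0 : ℝ)..(2 * π), max (U (s + φ * I) - t) 0

/-- Baernstein's star function in dual form: the largest integral of `U (s + i·)` over
a set of measure `2θ` in one period, expressed as an infimum over levels `t ≥ 0`. -/
noncomputable def star (U : ℂ → ℝ) (s θ : ℝ) : ℝ :=
  ⨅ t : Ici (0 : ℝ), (2 * θ * t + excess U s t)

lemma excess_nonneg (U : ℂ → ℝ) (s t : ℝ) : 0 ≤ excess U s t :=
  intervalIntegral.integral_nonneg (by positivity) fun _ _ => le_max_right _ _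

lemma star_bdd (U : ℂ → ℝ) (s : ℝ) {θ : ℝ} (hθ : 0 ≤ θ) :
    BddBelow (range fun t : Ici (0 : ℝ) => 2 * θ * t + excess U s t) := by
  refine ⟨0, ?_⟩
  rintro _ ⟨t, rfl⟩
  have := excess_nonneg U s t
  have ht : (0 : ℝ) ≤ t := t.2
  positivity

lemma star_le (U : ℂ → ℝ) (s : ℝ) {θ t : ℝ} (hθ : 0 ≤ θ) (ht : 0 ≤ t) :
    star U s θ ≤ 2 * θ * t + excess U s t :=
  ciInf_le (star_bdd U s hθ) (⟨t, ht⟩ : Ici (0 : ℝ))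

/-- Cutoffs of mass at most `2θ` are admissible in the primal description of the star function. -/
lemma le_star {U : ℂ → ℝ} (hc : Continuous U) {s θ : ℝ} {χ : ℝ → ℝ} (hχ : Measurable χ)
    (hχ1 : ∀ x, χ x ∈ Icc (0 : ℝ) 1) (hm : ∫ x in (0 : ℝ)..(2 * π), χ x ≤ 2 * θ) :
    ∫ x in (0 : ℝ)..(2 * π), χ x * U (s + x * I) ≤ star U s θ := by
  have hu : Continuous fun x : ℝ => U (s + x * I) := by fun_prop
  have : Nonempty (Ici (0 : ℝ)) := ⟨⟨0, self_mem_Ici⟩⟩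
  refine le_ciInf fun t => ?_
  obtain ⟨t, ht⟩ := t
  have ht : 0 ≤ t := ht
  have hcm : Continuous fun x : ℝ => max (U (s + x * I) - t) 0 := by fun_prop
  have h1 : ∫ x in (0 : ℝ)..(2 * π), χ x * U (s + x * I) ≤
      ∫ x in (0 : ℝ)..(2 * π), (χ x * t + max (U (s + x * I) - t) 0) := by
    refine intervalIntegral.integral_mono_on (by positivity)
      (integrable_cutoff_mul hχ hχ1 hu _ _)
      ((integrable_cutoff_mul hχ hχ1 continuous_const _ _).add (hcm.intervalIntegrable _ _)) ?_
    intro x _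
    have h1 := hχ1 x
    have h2 : χ x * (U (s + x * I) - t) ≤ max (U (s + x * I) - t) 0 := by
      rcases le_total 0 (U (s + x * I) - t) with h | h
      · exact (mul_le_of_le_one_left h h1.2).trans (le_max_left _ _)
      · exact (mul_nonpos_of_nonneg_of_nonpos h1.1 h).trans (le_max_right _ _)
    linarith
  rw [intervalIntegral.integral_add (integrable_cutoff_mul hχ hχ1 continuous_const _ _)
    (hcm.intervalIntegrable _ _), intervalIntegral.integral_mul_const] at h1
  refine h1.trans ?_
  have := mul_le_mul_of_nonneg_right hm ht
  unfold excess
  linarith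

lemma continuous_excess {U : ℂ → ℝ} (hc : Continuous U) (t : ℝ) :
    Continuous fun s => excess U s t := by
  unfold excess
  apply intervalIntegral.continuous_parametric_intervalIntegral_of_continuous'
  fun_prop

lemma usc_star {U : ℂ → ℝ} (hc : Continuous U) {S : Set (ℝ × ℝ)} (hS : ∀ p ∈ S, 0 ≤ p.2) :
    UpperSemicontinuousOn (fun p : ℝ × ℝ => star U p.1 p.2) S := by
  intro p hp y hy
  have hθ := hS p hp
  have : Nonempty (Ici (0 : ℝ)) := ⟨⟨0, self_mem_Ici⟩⟩
  obtain ⟨t, ht⟩ := exists_lt_of_ciInf_lt hy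
  have hcont : Continuous fun p : ℝ × ℝ => 2 * p.2 * (t : ℝ) + excess U p.1 t :=
    (by fun_prop : Continuous fun p : ℝ × ℝ => 2 * p.2 * (t : ℝ)).add
      ((continuous_excess hc t).comp continuous_fst)
  have := (hcont.continuousAt (x := p)).eventually (gt_mem_nhds ht)
  filter_upwards [mem_nhdsWithin_of_mem_nhds this, self_mem_nhdsWithin] with q hq hqS
  exact (star_le U q.1 (hS q hqS) t.2).trans_lt hq

/-- Integral of `V` over the arc of length `2θ` centred at `φ = π` on the line `re = s`; for the
Koebe function this is the arc opposite to the slit. -/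
noncomputable def arc (V : ℂ → ℝ) (s θ : ℝ) : ℝ :=
  ∫ φ in (π - θ)..(π + θ), V (s + φ * I)

lemma continuous_arc {V : ℂ → ℝ} (hc : Continuous V) :
    Continuous fun p : ℝ × ℝ => arc V p.1 p.2 := by
  unfold arc
  have h : ∀ p : ℝ × ℝ, ∫ φ in (π - p.2)..(π + p.2), V (p.1 + φ * I) =
      (∫ φ in (0:ℝ)..(π + p.2), V (p.1 + φ * I)) - ∫ φ in (0:ℝ)..(π - p.2), V (p.1 + φ * I) := by
    intro p
    have hu : Continuous fun x : ℝ => V (p.1 + x * I) := by fun_prop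
    rw [intervalIntegral.integral_interval_sub_left] <;> exact hu.intervalIntegrable _ _
  simp_rw [h]
  refine Continuous.sub ?_ ?_ <;>
  · apply intervalIntegral.continuous_parametric_intervalIntegral_of_continuous <;> fun_prop

/-! ### Mean values of weighted vertical integrals -/

lemma continuous_weighted {U : ℂ → ℝ} (hc : Continuous U) {χ : ℝ → ℝ} (hχ : Measurable χ)
    (hχ1 : ∀ x, χ x ∈ Icc (0 : ℝ) 1) (s : ℝ) {a b : ℝ} (hab : a ≤ b) :
    Continuous fun η : ℂ => ∫ φ in a..b, χ φ * U (s + φ * I + η) := by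
  rw [continuous_iff_continuousAt]
  intro η₀
  obtain ⟨C, hC⟩ := ((isCompact_Icc (a := a) (b := b)).prod
    (isCompact_closedBall η₀ 1)).exists_bound_of_continuousOn
    (f := fun p : ℝ × ℂ => U (s + p.1 * I + p.2)) (by fun_prop)
  refine intervalIntegral.continuousAt_of_dominated_interval (bound := fun _ => C) ?_ ?_
    (by simp) ?_
  · refine Eventually.of_forall fun η => ?_
    exact (hχ.mul (by fun_prop : Continuous fun φ : ℝ => U (s + φ * I + η)).measurable
      ).aestronglyMeasurable
  · filter_upwards [closedBall_mem_nhds η₀ one_pos] with η hη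
    refine Eventually.of_forall fun φ hφ => ?_
    rw [uIoc_of_le hab] at hφ
    rw [norm_mul, Real.norm_eq_abs, abs_of_nonneg (hχ1 φ).1]
    exact (mul_le_of_le_one_left (norm_nonneg _) (hχ1 φ).2).trans
      (hC (φ, η) ⟨Ioc_subset_Icc_self hφ, hη⟩)
  · refine Eventually.of_forall fun φ _ => ?_
    exact (by fun_prop : Continuous fun η : ℂ => χ φ * U (s + φ * I + η)).continuousAt

/-- The cutoff `χ` charges only a compact part of the line, on which `U` is positive and hence
harmonic with a uniform radius; the mean value property is integrated against `χ`. -/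
lemma circleAverage_weighted {U : ℂ → ℝ} (hU : GreenLike U) {χ : ℝ → ℝ} (hχ : Measurable χ)
    (hχ1 : ∀ x, χ x ∈ Icc (0 : ℝ) 1) {s t a b : ℝ} (hab : a ≤ b) (ht : 0 < t)
    (htu : ∀ φ ∈ Icc a b, χ φ ≠ 0 → t ≤ U (s + φ * I)) :
    ∃ ρ₀ > 0, ∀ ρ, 0 < ρ → ρ < ρ₀ →
      circleAverage (fun η : ℂ => ∫ φ in a..b, χ φ * U (s + φ * I + η)) 0 ρ =
        ∫ φ in a..b, χ φ * U (s + φ * I) := by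
  have hc := hU.cont
  set K : Set ℂ := (fun φ : ℝ => (s : ℂ) + φ * I) '' (Icc a b ∩ {φ : ℝ | t ≤ U (s + φ * I)})
  have hK : IsCompact K := by
    refine IsCompact.image (isCompact_Icc.inter_right ?_) (by fun_prop)
    exact isClosed_le continuous_const (by fun_prop)
  have hKO : K ⊆ {ζ | 0 < U ζ} := by
    rintro _ ⟨φ, ⟨_, hφ⟩, rfl⟩
    exact ht.trans_le hφ
  obtain ⟨ρ₀, hρ₀, hsub⟩ := hK.exists_cthickening_subset_open
    (isOpen_lt continuous_const hc) hKO
  refine ⟨ρ₀, hρ₀, fun ρ hρ hρ2 => ?_⟩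
  obtain ⟨C, hC⟩ := ((isCompact_Icc (a := a) (b := b)).prod
    (isCompact_closedBall (0 : ℂ) ρ)).exists_bound_of_continuousOn
    (f := fun p : ℝ × ℂ => U (s + p.1 * I + p.2)) (by fun_prop)
  have hintg : Integrable (Function.uncurry fun (α φ : ℝ) =>
      χ φ * U (s + φ * I + circleMap 0 ρ α))
      ((volume.restrict (Ioc 0 (2 * π))).prod (volume.restrict (Ioc a b))) := by
    refine Integrable.of_bound (C := C) ?_ ?_
    · exact ((hχ.comp measurable_snd).mul
        (by fun_prop : Continuous fun p : ℝ × ℝ =>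
          U (s + p.2 * I + circleMap 0 ρ p.1)).measurable).aestronglyMeasurable
    · rw [Measure.prod_restrict, ae_restrict_iff' (measurableSet_Ioc.prod measurableSet_Ioc)]
      refine Eventually.of_forall fun p hp => ?_
      simp only [Function.uncurry]
      rw [norm_mul, Real.norm_eq_abs, abs_of_nonneg (hχ1 p.2).1]
      exact (mul_le_of_le_one_left (norm_nonneg _) (hχ1 p.2).2).trans
        (hC (p.2, circleMap 0 ρ p.1) ⟨Ioc_subset_Icc_self hp.2,
          sphere_subset_closedBall (circleMap_mem_sphere 0 hρ.le _)⟩)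
  rw [circleAverage_def]
  simp_rw [intervalIntegral.integral_of_le Real.two_pi_pos.le, intervalIntegral.integral_of_le hab]
  rw [integral_integral_swap hintg, ← integral_smul]
  refine setIntegral_congr_fun measurableSet_Ioc fun φ hφ => ?_
  simp only [integral_const_mul, smul_eq_mul]
  by_cases hx : χ φ = 0
  · simp [hx]
  have hmem : (s : ℂ) + φ * I ∈ K :=
    ⟨φ, ⟨Ioc_subset_Icc_self hφ, htu φ (Ioc_subset_Icc_self hφ) hx⟩, rfl⟩
  have hh : InnerProductSpace.HarmonicOnNhd U (closedBall ((s : ℂ) + φ * I) |ρ|) := by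
    intro ζ hζ
    rw [abs_of_pos hρ] at hζ
    apply hU.harmonic
    exact hsub (closedBall_subset_cthickening hmem _ (closedBall_subset_closedBall hρ2.le hζ))
  have := hh.circleAverage_eq
  rw [circleAverage_def, intervalIntegral.integral_of_le Real.two_pi_pos.le, smul_eq_mul] at this
  rw [← this]
  have e : ∀ α, circleMap ((s : ℂ) + φ * I) ρ α = s + φ * I + circleMap 0 ρ α := by
    intro α; simp [circleMap]
  simp_rw [e]
  ring

/-! ### Splitting a shifted pair of cutoffs -/

lemma integral_comp_add_period {χ : ℝ → ℝ} (hp : Function.Periodic χ (2 * π)) (δ : ℝ) :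
    ∫ x in (0 : ℝ)..(2 * π), χ (x + δ) = ∫ x in (0 : ℝ)..(2 * π), χ x := by
  rw [intervalIntegral.integral_comp_add_right]
  have := hp.intervalIntegral_add_eq (0 + δ) 0
  simpa [add_comm] using this

/-- The two translates of `χ` by `±δ` can be rearranged into two cutoffs whose masses differ by
`4δ`. -/
lemma exists_split {χ : ℝ → ℝ} (hχ : Measurable χ) (hp : Function.Periodic χ (2 * π))
    (hχ1 : ∀ x, χ x ∈ Icc (0 : ℝ) 1) {θ b η δ : ℝ} (hm : ∫ x in (0 : ℝ)..(2 * π), χ x = 2 * θ)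
    (hl : ∀ x ∈ Ioo (b - η) b, χ x = 1) (hr : ∀ x ∈ Ioo b (b + η), χ x = 0)
    (hδ : 0 ≤ δ) (hδη : 2 * δ ≤ η) (hδπ : δ ≤ π) :
    ∃ χ₁ χ₂ : ℝ → ℝ, Measurable χ₁ ∧ Measurable χ₂ ∧ (∀ x, χ₁ x ∈ Icc (0 : ℝ) 1) ∧
      (∀ x, χ₂ x ∈ Icc (0 : ℝ) 1) ∧ (∀ x, χ (x - δ) + χ (x + δ) = χ₁ x + χ₂ x) ∧
      ∫ x in (0 : ℝ)..(2 * π), χ₁ x = 2 * (θ + δ) ∧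
      ∫ x in (0 : ℝ)..(2 * π), χ₂ x = 2 * (θ - δ) := by
  set mx : ℝ → ℝ := fun x => max (χ (x - δ)) (χ (x + δ)) with hmx
  set mn : ℝ → ℝ := fun x => min (χ (x - δ)) (χ (x + δ)) with hmn
  have hmxm : Measurable mx :=
    (hχ.comp (measurable_id.sub_const δ)).max (hχ.comp (measurable_id.add_const δ))
  have hmnm : Measurable mn :=
    (hχ.comp (measurable_id.sub_const δ)).min (hχ.comp (measurable_id.add_const δ))
  have hmx1 : ∀ x, mx x ∈ Icc (0 : ℝ) 1 := fun x =>
    ⟨(hχ1 _).1.trans (le_max_left _ _), max_le (hχ1 _).2 (hχ1 _).2⟩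
  have hmn1 : ∀ x, mn x ∈ Icc (0 : ℝ) 1 := fun x =>
    ⟨le_min (hχ1 _).1 (hχ1 _).1, (min_le_left _ _).trans (hχ1 _).2⟩
  have hsum : ∀ x, χ (x - δ) + χ (x + δ) = mx x + mn x := fun x => (max_add_min _ _).symm
  have hmxI := integrable_cutoff hmxm hmx1
  have hmnI := integrable_cutoff hmnm hmn1
  have hplus : ∀ d, Measurable (fun x => χ (x + d)) := fun d => hχ.comp (measurable_id.add_const d)
  have hplusI : ∀ d a b, IntervalIntegrable (fun x => χ (x + d)) volume a b :=
    fun d => integrable_cutoff (hplus d) fun x => hχ1 _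
  have hpP : Function.Periodic (fun x => χ (x + δ)) (2 * π) := fun x => by
    show χ (x + 2 * π + δ) = χ (x + δ)
    rw [add_right_comm, hp]
  have hpM : Function.Periodic (fun x => χ (x - δ)) (2 * π) := fun x => by
    show χ (x + 2 * π - δ) = χ (x - δ)
    rw [add_sub_right_comm, hp]
  have hmxp : Function.Periodic mx (2 * π) := fun x => by
    have h1 := hpP x; have h2 := hpM x
    simp only at h1 h2
    simp only [hmx, h1, h2]
  have htot : (∫ x in (0 : ℝ)..(2 * π), mx x) + ∫ x in (0 : ℝ)..(2 * π), mn x = 4 * θ := by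
    rw [← intervalIntegral.integral_add (hmxI _ _) (hmnI _ _)]
    simp_rw [← hsum, sub_eq_add_neg]
    rw [intervalIntegral.integral_add (hplusI _ _ _) (hplusI _ _ _),
      integral_comp_add_period hp, integral_comp_add_period hp, hm]
    ring
  have hbig : 2 * θ + 2 * δ ≤ ∫ x in (0 : ℝ)..(2 * π), mx x := by
    have e1 := hmxp.intervalIntegral_add_eq 0 (b - π)
    have e2 := hpP.intervalIntegral_add_eq 0 (b - π)
    rw [zero_add] at e1 e2
    rw [integral_comp_add_period hp, hm] at e2
    rw [e1, e2]
    set E : ℝ → ℝ := (Ioo (b - δ) (b + δ)).indicator fun _ => 1 with hE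
    have hEm : Measurable E := measurable_const.indicator measurableSet_Ioo
    have hE1 : ∀ x, E x ∈ Icc (0 : ℝ) 1 := by
      intro x; by_cases h : x ∈ Ioo (b - δ) (b + δ) <;> simp [hE, h]
    have hsub : Ioo (b - δ) (b + δ) ⊆ Ioc (b - π) (b - π + 2 * π) :=
      fun x hx => ⟨by linarith [hx.1], by linarith [hx.2]⟩
    have hEint : ∫ x in (b - π)..(b - π + 2 * π), E x = 2 * δ := by
      rw [intervalIntegral.integral_of_le (by linarith [Real.pi_pos]), hE,
        setIntegral_indicator measurableSet_Ioo,
        inter_eq_right.2 hsub]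
      simp only [integral_const, smul_eq_mul, mul_one]
      rw [measureReal_restrict_apply_univ, Real.volume_real_Ioo_of_le (by linarith)]
      ring
    rw [← hEint, ← intervalIntegral.integral_add (hplusI _ _ _) (integrable_cutoff hEm hE1 _ _)]
    refine intervalIntegral.integral_mono_on (by linarith [Real.pi_pos])
      ((hplusI _ _ _).add (integrable_cutoff hEm hE1 _ _)) (hmxI _ _) fun x _ => ?_
    by_cases hx : x ∈ Ioo (b - δ) (b + δ)
    · have h1 : χ (x - δ) = 1 := hl _ ⟨by linarith [hx.1], by linarith [hx.2]⟩
      have h2 : χ (x + δ) = 0 := hr _ ⟨by linarith [hx.1], by linarith [hx.2]⟩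
      simp [hmx, hE, hx, h1, h2]
    · simp [hmx, hE, hx]
  set m := ∫ x in (0 : ℝ)..(2 * π), mx x with hmdef
  have hκ : ∃ κ ∈ Icc (0 : ℝ) 1, κ * (m - 2 * θ) = 2 * δ := by
    rcases hδ.eq_or_lt with h | h
    · exact ⟨0, by simp, by simp [← h]⟩
    · have : 0 < m - 2 * θ := by linarith
      refine ⟨2 * δ / (m - 2 * θ), ⟨by positivity, ?_⟩, by field_simp⟩
      rw [div_le_one this]; linarith
  obtain ⟨κ, ⟨hκ0, hκ1⟩, hκm⟩ := hκ
  have hconv : ∀ {p q : ℝ → ℝ} {k : ℝ}, 0 ≤ k → k ≤ 1 → (∀ x, p x ∈ Icc (0 : ℝ) 1) →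
      (∀ x, q x ∈ Icc (0 : ℝ) 1) → ∀ x, (1 + k) / 2 * p x + (1 - k) / 2 * q x ∈ Icc (0 : ℝ) 1 := by
    intro p q k h0 h1 hp hq x
    have a1 := hp x; have a2 := hq x
    have b0 : 0 ≤ 1 - k := by linarith
    have b1 := a1.1
    have b2 := a2.1
    constructor
    · positivity
    · nlinarith [a1.2, a2.2, mul_nonneg b0 (sub_nonneg.2 a2.2),
        mul_nonneg (by linarith : 0 ≤ 1 + k) (sub_nonneg.2 a1.2)]
  have hintg : ∀ c d : ℝ, ∫ x in (0 : ℝ)..(2 * π), (c * mx x + d * mn x) =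
      c * m + d * (4 * θ - m) := by
    intro c d
    rw [intervalIntegral.integral_add ((hmxI _ _).const_mul _) ((hmnI _ _).const_mul _),
      intervalIntegral.integral_const_mul, intervalIntegral.integral_const_mul, ← htot]
    ring
  refine ⟨fun x => (1 + κ) / 2 * mx x + (1 - κ) / 2 * mn x,
    fun x => (1 + κ) / 2 * mn x + (1 - κ) / 2 * mx x,
    (hmxm.const_mul _).add (hmnm.const_mul _), (hmnm.const_mul _).add (hmxm.const_mul _),
    hconv hκ0 hκ1 hmx1 hmn1, hconv hκ0 hκ1 hmn1 hmx1, fun x => ?_, ?_, ?_⟩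
  · rw [hsum]; ring
  · rw [hintg]; linarith
  · simp_rw [add_comm ((1 + κ) / 2 * mn _)]
    rw [hintg]; linarith

/-! ### Sub-mean-value property of the star function -/

lemma periodic_line {U : ℂ → ℝ} (hU : GreenLike U) (s : ℝ) :
    Function.Periodic (fun x : ℝ => U (s + x * I)) (2 * π) := by
  intro x
  have := hU.periodic (s + x * I)
  show U (s + ((x + 2 * π : ℝ) : ℂ) * I) = U (s + x * I)
  rw [← this]; congr 1; push_cast; ring

lemma analyticAt_line {U : ℂ → ℝ} (hU : GreenLike U) (s x : ℝ) (h : 0 < U (s + x * I)) :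
    AnalyticAt ℝ (fun x : ℝ => U (s + x * I)) x := by
  have h1 : AnalyticAt ℝ U (s + x * I) := HarmonicAt.analyticAt (hU.harmonic _ h)
  have h2 : AnalyticAt ℝ (fun x : ℝ => (s : ℂ) + x * I) x := by
    refine analyticAt_const.add (AnalyticAt.mul ?_ analyticAt_const)
    exact Complex.ofRealCLM.analyticAt x
  exact AnalyticAt.fun_comp (g := U) h1 h2

lemma circleAverage_conj (g : ℂ → ℝ) (ρ : ℝ) :
    circleAverage (fun η => g (conj η)) 0 ρ = circleAverage g 0 ρ := by
  rw [circleAverage_def, circleAverage_def]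
  congr 1
  have h : ∀ α : ℝ, conj (circleMap 0 ρ α) = circleMap 0 ρ (-α) := by
    intro α
    simp [circleMap, ← Complex.exp_conj]
  simp_rw [h]
  rw [intervalIntegral.integral_comp_neg (fun α => g (circleMap 0 ρ α))]
  have hp : Function.Periodic (fun α => g (circleMap 0 ρ α)) (2 * π) := fun α => by
    simp only [periodic_circleMap 0 ρ α]
  have := hp.intervalIntegral_add_eq (-(2 * π)) 0
  simpa using this

lemma circleAverage_quadratic (s ρ : ℝ) :
    circleAverage (fun η : ℂ => 2 * s * η.re + η.re ^ 2) 0 ρ = ρ ^ 2 / 2 := by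
  rw [circleAverage_def]
  have h : ∀ α : ℝ, (circleMap 0 ρ α).re = ρ * Real.cos α := by
    intro α
    simp [circleMap, Complex.exp_re]
  simp_rw [h, mul_pow]
  rw [intervalIntegral.integral_add (Continuous.intervalIntegrable (by fun_prop) _ _)
    (Continuous.intervalIntegrable (by fun_prop) _ _), intervalIntegral.integral_const_mul,
    intervalIntegral.integral_const_mul, intervalIntegral.integral_const_mul, integral_cos,
    integral_cos_sq]
  simp
  field_simp

/-- The symmetrized sub-mean-value property of the star function at `(s, θ)`. With `χ` the optimal
cutoff at `(s, θ)`, the translates `Ψ η = ∫ χ(φ) U(s + iφ + η) dφ` average to the star function,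
while the cutoffs shifted by `±η.im` recombine into cutoffs of masses `2(θ ± |η.im|)` by
`exists_split`. -/
lemma star_submean {U : ℂ → ℝ} (hU : GreenLike U) {s θ : ℝ} (hθ0 : 0 < θ) (hθ : θ < π)
    (hm : 2 * θ < perMeas.real {x : ℝ | 0 < U (s + x * I)}) :
    ∃ (Ψ : ℂ → ℝ) (ρ₀ : ℝ), Continuous Ψ ∧ 0 < ρ₀ ∧
      (∀ ρ, 0 < ρ → ρ < ρ₀ → star U s θ ≤ circleAverage Ψ 0 ρ) ∧
      ∀ η : ℂ, ‖η‖ < ρ₀ → Ψ η + Ψ (conj η) ≤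
        star U (s + η.re) (θ + |η.im|) + star U (s + η.re) (θ - |η.im|) := by
  have hc := hU.cont
  obtain ⟨χ, t, b, ω, hχ, hp, hχ1, hmass, ht, hχt, hω, hl, hr, hle⟩ :=
    exists_cutoff (u := fun x : ℝ => U (s + x * I)) (by fun_prop) (periodic_line hU s)
      (fun x => hU.nonneg _) (fun x hx => analyticAt_line hU s x hx) hθ0 hθ hm
  obtain ⟨ρ₁, hρ₁, havg⟩ := circleAverage_weighted hU hχ hχ1 (s := s) (a := 0) (b := 2 * π)
    Real.two_pi_pos.le ht (fun φ _ h => hχt φ h)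
  refine ⟨fun η => ∫ φ in (0 : ℝ)..(2 * π), χ φ * U (s + φ * I + η),
    min ρ₁ (min (ω / 2) π), continuous_weighted hc hχ hχ1 s Real.two_pi_pos.le,
    lt_min hρ₁ (lt_min (by positivity) Real.pi_pos), ?_, ?_⟩
  · intro ρ h0 h1
    rw [havg ρ h0 (h1.trans_le (min_le_left _ _))]
    exact (star_le U s hθ0.le ht.le).trans hle
  · have hshift : ∀ h δ : ℝ, ∫ φ in (0 : ℝ)..(2 * π), χ φ * U (s + φ * I + (h + δ * I)) =
        ∫ φ in (0 : ℝ)..(2 * π), χ (φ - δ) * U ((s + h : ℝ) + φ * I) := by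
      intro h δ
      have hper : Function.Periodic (fun φ : ℝ => χ (φ - δ) * U ((s + h : ℝ) + φ * I))
          (2 * π) := by
        intro x
        have h1 := periodic_line hU (s + h) x
        simp only at h1 ⊢
        rw [h1, add_sub_right_comm, hp]
      rw [← integral_comp_add_period hper δ]
      refine intervalIntegral.integral_congr fun φ _ => ?_
      simp only [add_sub_cancel_right]
      congr 2; push_cast; ring
    have key : ∀ h δ : ℝ, 0 ≤ δ → 2 * δ ≤ ω → δ ≤ π →
        (∫ φ in (0 : ℝ)..(2 * π), χ φ * U (s + φ * I + (h + δ * I))) +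
        (∫ φ in (0 : ℝ)..(2 * π), χ φ * U (s + φ * I + (h + (-δ : ℝ) * I))) ≤
        star U (s + h) (θ + δ) + star U (s + h) (θ - δ) := by
      intro h δ h0 h1 h2
      rw [hshift, hshift]
      have hu : Continuous fun x : ℝ => U ((s + h : ℝ) + x * I) := by fun_prop
      obtain ⟨χ₁, χ₂, hm1, hm2, hb1, hb2, hsum, hi1, hi2⟩ :=
        exists_split hχ hp hχ1 hmass hl hr h0 h1 h2
      have hI : ∀ d, IntervalIntegrable (fun φ => χ (φ - d) * U ((s + h : ℝ) + φ * I)) volume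
          0 (2 * π) := fun d =>
        integrable_cutoff_mul (hχ.comp (measurable_id.sub_const d)) (fun x => hχ1 _) hu _ _
      rw [← intervalIntegral.integral_add (hI _) (hI _)]
      have e : ∀ φ : ℝ, χ (φ - δ) * U ((s + h : ℝ) + φ * I) +
          χ (φ - -δ) * U ((s + h : ℝ) + φ * I) =
          χ₁ φ * U ((s + h : ℝ) + φ * I) + χ₂ φ * U ((s + h : ℝ) + φ * I) := by
        intro φ
        rw [← add_mul, ← add_mul, sub_neg_eq_add, hsum]
      simp_rw [e]
      rw [intervalIntegral.integral_add (integrable_cutoff_mul hm1 hb1 hu _ _)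
        (integrable_cutoff_mul hm2 hb2 hu _ _)]
      exact add_le_add (le_star hc hm1 hb1 hi1.le) (le_star hc hm2 hb2 hi2.le)
    intro η hη
    have him : |η.im| ≤ ‖η‖ := Complex.abs_im_le_norm η
    have b1 : 2 * |η.im| ≤ ω := by
      have := hη.trans_le ((min_le_right _ _).trans (min_le_left _ _))
      linarith
    have b2 : |η.im| ≤ π := by
      have := hη.trans_le ((min_le_right _ _).trans (min_le_right _ _))
      linarith
    have hk := key η.re |η.im| (abs_nonneg _) b1 b2
    have e1 : (η.re : ℂ) + η.im * I = η := Complex.re_add_im η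
    have e2 : (η.re : ℂ) + (-η.im : ℝ) * I = conj η := by
      apply Complex.ext <;> simp
    rcases le_total 0 η.im with h | h
    · rw [abs_of_nonneg h] at hk ⊢
      rw [e1, e2] at hk
      exact hk
    · rw [abs_of_nonpos h] at hk ⊢
      rw [neg_neg, e1, e2, add_comm] at hk
      exact hk

/-- The counterpart of `star_submean` for the arc integral, with equalities. -/
lemma arc_mean {V : ℂ → ℝ} (hV : GreenLike V)
    (hpos : ∀ (s φ : ℝ), φ ∈ Ioo 0 (2 * π) → 0 < V (s + φ * I)) {s θ : ℝ} (hθ0 : 0 < θ)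
    (hθ : θ < π) :
    ∃ (W : ℂ → ℝ) (ρ₀ : ℝ), Continuous W ∧ 0 < ρ₀ ∧
      (∀ ρ, 0 < ρ → ρ < ρ₀ → circleAverage W 0 ρ = arc V s θ) ∧
      ∀ η : ℂ, W η + W (conj η) =
        arc V (s + η.re) (θ + |η.im|) + arc V (s + η.re) (θ - |η.im|) := by
  have hc := hV.cont
  have hle : π - θ ≤ π + θ := by linarith
  obtain ⟨x₀, hx₀, hmin⟩ := (isCompact_Icc (a := π - θ) (b := π + θ)).exists_isMinOn
    ⟨π, by constructor <;> linarith⟩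
    (by fun_prop : Continuous fun x : ℝ => V (s + x * I)).continuousOn
  obtain ⟨ρ₀, hρ₀, havg⟩ := circleAverage_weighted hV (χ := fun _ => 1) measurable_const
    (by simp) (s := s) hle (hpos s x₀ ⟨by linarith [hx₀.1], by linarith [hx₀.2]⟩)
    (fun φ h _ => hmin h)
  refine ⟨fun η => ∫ φ in (π - θ)..(π + θ), (1 : ℝ) * V (s + φ * I + η), ρ₀,
    continuous_weighted hc measurable_const (by simp) s hle, hρ₀, ?_, ?_⟩
  · intro ρ h0 h1
    rw [havg ρ h0 h1]
    simp [arc]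
  · intro η
    have hu : Continuous fun x : ℝ => V ((s + η.re : ℝ) + x * I) := by fun_prop
    have hshift : ∀ (δ : ℝ) (η' : ℂ), η' = η.re + δ * I →
        ∫ φ in (π - θ)..(π + θ), (1 : ℝ) * V (s + φ * I + η') =
        ∫ φ in (π - θ + δ)..(π + θ + δ), V ((s + η.re : ℝ) + φ * I) := by
      rintro δ _ rfl
      rw [← intervalIntegral.integral_comp_add_right
        (fun φ : ℝ => V ((s + η.re : ℝ) + φ * I))]
      refine intervalIntegral.integral_congr fun φ _ => ?_
      simp only [one_mul]
      congr 1; push_cast; ring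
    have e1 := hshift η.im η (Complex.re_add_im η).symm
    have e2 := hshift (-η.im) (conj η) (by apply Complex.ext <;> simp)
    simp only [e1, e2]
    obtain ⟨F, hF⟩ : ∃ F : ℝ → ℝ, ∀ a b : ℝ,
        ∫ φ in a..b, V ((s + η.re : ℝ) + φ * I) = F b - F a := by
      refine ⟨fun a => ∫ φ in (0 : ℝ)..a, V ((s + η.re : ℝ) + φ * I), fun a b => ?_⟩
      rw [intervalIntegral.integral_interval_sub_left] <;> exact hu.intervalIntegrable _ _
    unfold arc
    simp only [hF]
    rcases le_total 0 η.im with h | h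
    · rw [abs_of_nonneg h]
      ring_nf
    · rw [abs_of_nonpos h]
      ring_nf

/-- Where the arc length `2θ` does not exhaust the set `{U > 0}` on its line, `star U - arc V` is
subharmonic, so that after adding the strictly subharmonic `ε' s²` and a linear term it has no local
maximum. -/
lemma no_interior_max {U V : ℂ → ℝ} (hU : GreenLike U) (hV : GreenLike V)
    (hpos : ∀ (s φ : ℝ), φ ∈ Ioo 0 (2 * π) → 0 < V (s + φ * I)) {s θ : ℝ} (hθ0 : 0 < θ)
    (hθ : θ < π) (hm : 2 * θ < perMeas.real {x : ℝ | 0 < U (s + x * I)}) {ε ε' : ℝ}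
    (hε' : 0 < ε') {r : ℝ} (hr : 0 < r)
    (hmax : ∀ s' θ', |s' - s| < r → |θ' - θ| < r →
      star U s' θ' - arc V s' θ' - ε * θ' + ε' * s' ^ 2 ≤
        star U s θ - arc V s θ - ε * θ + ε' * s ^ 2) : False := by
  obtain ⟨Ψ, ρ₁, hΨ, hρ₁, hΨa, hΨs⟩ := star_submean hU hθ0 hθ hm
  obtain ⟨W, ρ₂, hW, hρ₂, hWa, hWs⟩ := arc_mean hV hpos (s := s) hθ0 hθ
  set ρ := min r (min ρ₁ ρ₂) / 2 with hρdef
  have hmin : 0 < min r (min ρ₁ ρ₂) := lt_min hr (lt_min hρ₁ hρ₂)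
  have hρ : 0 < ρ := by positivity
  have hρlt : ρ < min r (min ρ₁ ρ₂) := by rw [hρdef]; linarith
  have hρr : ρ < r := hρlt.trans_le (min_le_left _ _)
  have hρ1 : ρ < ρ₁ := hρlt.trans_le ((min_le_right _ _).trans (min_le_left _ _))
  have hρ2 : ρ < ρ₂ := hρlt.trans_le ((min_le_right _ _).trans (min_le_right _ _))
  set A := star U s θ - arc V s θ with hA
  have hci : ∀ g : ℂ → ℝ, Continuous g → CircleIntegrable g 0 ρ := fun g hg =>
    hg.continuousOn.circleIntegrable hρ.le
  have hlow : A ≤ circleAverage (fun η => Ψ η - W η) 0 ρ := by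
    have : circleAverage (fun η => Ψ η - W η) 0 ρ = circleAverage Ψ 0 ρ - circleAverage W 0 ρ :=
      circleAverage_fun_sub (hci _ hΨ) (hci _ hW)
    rw [this, hWa ρ hρ hρ2, hA]
    linarith [hΨa ρ hρ hρ1]
  have hup : circleAverage (fun η => (Ψ η - W η) + (Ψ (conj η) - W (conj η)) +
      2 * ε' * (2 * s * η.re + η.re ^ 2)) 0 ρ ≤ 2 * A := by
    refine circleAverage_mono_on_of_le_circle (hci _ (by fun_prop)) ?_
    intro η hη
    rw [abs_of_pos hρ, mem_sphere_zero_iff_norm] at hη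
    have h1 := hΨs η (by rw [hη]; exact hρ1)
    have h2 := hWs η
    have hre : |s + η.re - s| < r := by
      rw [add_sub_cancel_left]
      exact (Complex.abs_re_le_norm η).trans_lt (by rw [hη]; exact hρr)
    have him : |η.im| < r := (Complex.abs_im_le_norm η).trans_lt (by rw [hη]; exact hρr)
    have h3 := hmax (s + η.re) (θ + |η.im|) hre (by rwa [add_sub_cancel_left, abs_abs])
    have h4 := hmax (s + η.re) (θ - |η.im|) hre (by rwa [sub_sub_cancel_left, abs_neg, abs_abs])
    simp only [hA]
    nlinarith
  have e1 : circleAverage (fun η => (Ψ η - W η) + (Ψ (conj η) - W (conj η)) +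
      2 * ε' * (2 * s * η.re + η.re ^ 2)) 0 ρ =
      2 * circleAverage (fun η => Ψ η - W η) 0 ρ + 2 * ε' * (ρ ^ 2 / 2) := by
    rw [circleAverage_fun_add (hci _ (by fun_prop)) (hci _ (by fun_prop)),
      circleAverage_fun_add (hci _ (by fun_prop)) (hci _ (by fun_prop)),
      circleAverage_conj (fun η => Ψ η - W η), ← circleAverage_quadratic s ρ]
    have := circleAverage_fun_smul (a := 2 * ε') (f := fun η : ℂ => 2 * s * η.re + η.re ^ 2)
      (c := 0) (R := ρ)
    simp only [smul_eq_mul] at this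
    rw [this]
    ring
  rw [e1] at hup
  have : 0 < 2 * ε' * (ρ ^ 2 / 2) := by positivity
  linarith

/-! ### Comparison of star functions -/

lemma excess_eq_zero {U : ℂ → ℝ} {s t : ℝ} (h : ∀ x : ℝ, U (s + x * I) ≤ t) :
    excess U s t = 0 := by
  unfold excess
  have : ∀ x : ℝ, max (U (s + x * I) - t) 0 = 0 := fun x => max_eq_right (by linarith [h x])
  simp [this]

lemma star_le_of_le {U : ℂ → ℝ} {s t θ : ℝ} (hθ : 0 ≤ θ) (ht : 0 ≤ t)
    (h : ∀ x : ℝ, U (s + x * I) ≤ t) : star U s θ ≤ 2 * θ * t := by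
  have := star_le U s hθ ht
  rwa [excess_eq_zero h, add_zero] at this

lemma exists_bound_line {U : ℂ → ℝ} (hU : GreenLike U) (s : ℝ) :
    ∃ B : ℝ, 0 ≤ B ∧ ∀ x : ℝ, U (s + x * I) ≤ B := by
  have hc := hU.cont
  obtain ⟨y, -, hy⟩ := (isCompact_Icc (a := (0 : ℝ)) (b := 2 * π)).exists_isMaxOn
    ⟨0, by simp; positivity⟩ (by fun_prop : Continuous fun x : ℝ => U (s + x * I)).continuousOn
  refine ⟨U (s + y * I), hU.nonneg _, fun x => ?_⟩
  obtain ⟨z, hz, hz2⟩ := (periodic_line hU s).exists_mem_Ico₀ (by positivity) x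
  rw [hz2]
  exact hy (Ico_subset_Icc_self hz)

lemma arc_mono {V : ℂ → ℝ} (hV : GreenLike V) (s : ℝ) {θ θ' : ℝ} (h0 : 0 ≤ θ') (h : θ' ≤ θ) :
    arc V s θ' ≤ arc V s θ := by
  have hc := hV.cont
  unfold arc
  exact intervalIntegral.integral_mono_interval (by linarith) (by linarith) (by linarith)
    (Eventually.of_forall fun x => hV.nonneg _)
    ((by fun_prop : Continuous fun x : ℝ => V (s + x * I)).intervalIntegrable _ _)

lemma arc_nonneg {V : ℂ → ℝ} (hV : GreenLike V) (s : ℝ) {θ : ℝ} (h0 : 0 ≤ θ) :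
    0 ≤ arc V s θ := by
  have := arc_mono hV s le_rfl h0
  simpa [arc] using this

lemma arc_ge {V : ℂ → ℝ} (hV : GreenLike V) {s c θ : ℝ} (h0 : 0 ≤ θ)
    (h : ∀ x : ℝ, c ≤ V (s + x * I)) : 2 * θ * c ≤ arc V s θ := by
  have hc := hV.cont
  have : ∫ _ in (π - θ)..(π + θ), c ≤ arc V s θ :=
    intervalIntegral.integral_mono_on (by linarith) (by simp)
      ((by fun_prop : Continuous fun x : ℝ => V (s + x * I)).intervalIntegrable _ _)
      fun x _ => h x
  rw [intervalIntegral.integral_const, smul_eq_mul] at this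
  linarith

/-- If the positivity set of `U` on a line fits in mass `2θ` without being a full circle, then
the star function is nearly flat just below `θ`. -/
lemma exists_smaller {U : ℂ → ℝ} (hU : GreenLike U) {s θ τ : ℝ} (hτ : 0 < τ) (hθ : 0 ≤ θ)
    (hm : perMeas.real {x : ℝ | 0 < U (s + x * I)} ≤ 2 * θ) {x₁ x₂ : ℝ}
    (h1 : U (s + x₁ * I) = 0) (h2 : 0 < U (s + x₂ * I)) :
    ∃ θ', 0 ≤ θ' ∧ θ' < θ ∧ star U s θ - 2 * τ * (θ - θ') ≤ star U s θ' := by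
  have hc := hU.cont
  have hu : Continuous fun x : ℝ => U (s + x * I) := by fun_prop
  have hO : IsOpen {x : ℝ | 0 < U (s + x * I) ∧ U (s + x * I) < τ} :=
    (isOpen_lt continuous_const hu).inter (isOpen_lt hu continuous_const)
  obtain ⟨y, hy⟩ : ∃ y : ℝ, U (s + y * I) = min τ (U (s + x₂ * I)) / 2 := by
    have hpos : 0 < min τ (U (s + x₂ * I)) := lt_min hτ h2
    have := mem_range_of_exists_le_of_exists_ge hu (c := min τ (U (s + x₂ * I)) / 2)
      ⟨x₁, by rw [h1]; positivity⟩
      ⟨x₂, by linarith [min_le_right τ (U (s + x₂ * I))]⟩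
    exact this
  have hyO : y ∈ {x : ℝ | 0 < U (s + x * I) ∧ U (s + x * I) < τ} := by
    have hpos : 0 < min τ (U (s + x₂ * I)) := lt_min hτ h2
    show 0 < U (s + y * I) ∧ U (s + y * I) < τ
    rw [hy]
    exact ⟨by positivity, by linarith [min_le_left τ (U (s + x₂ * I))]⟩
  have hmpos := perMeas_pos_of_isOpen hO hyO (by
    intro x n hx
    have := (periodic_line hU s).sub_int_mul_eq n (x := x)
    show 0 < U (s + ((x - n * (2 * π) : ℝ) : ℂ) * I) ∧ U (s + ((x - n * (2 * π) : ℝ) : ℂ) * I) < τ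
    rw [this]
    exact hx)
  have hdisj : Disjoint {x : ℝ | τ < U (s + x * I)}
      {x : ℝ | 0 < U (s + x * I) ∧ U (s + x * I) < τ} := by
    rw [Set.disjoint_left]
    intro x hx hx2
    exact lt_asymm hx hx2.2
  have hadd := measureReal_union (μ := perMeas) hdisj hO.measurableSet
  have hsub : perMeas.real ({x : ℝ | τ < U (s + x * I)} ∪
      {x : ℝ | 0 < U (s + x * I) ∧ U (s + x * I) < τ}) ≤
      perMeas.real {x : ℝ | 0 < U (s + x * I)} := by
    refine measureReal_mono ?_ (measure_ne_top _ _)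
    rintro x (hx | hx)
    · exact hτ.trans hx
    · exact hx.1
  have hm0 : 0 ≤ perMeas.real {x : ℝ | τ < U (s + x * I)} := measureReal_nonneg
  refine ⟨perMeas.real {x : ℝ | τ < U (s + x * I)} / 2, by positivity, by linarith, ?_⟩
  set m := perMeas.real {x : ℝ | τ < U (s + x * I)} with hmdef
  have hχ : Measurable ({x : ℝ | τ < U (s + x * I)}.indicator (fun _ => (1 : ℝ))) :=
    measurable_const.indicator (measurableSet_lt measurable_const hu.measurable)
  have hχ1 : ∀ x, {x : ℝ | τ < U (s + x * I)}.indicator (fun _ => (1 : ℝ)) x ∈ Icc (0 : ℝ) 1 := by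
    intro x; by_cases h : x ∈ {x : ℝ | τ < U (s + x * I)} <;> simp [h]
  have k1 := le_star (θ := m / 2) hc hχ hχ1 (s := s) (by
    rw [integral_cutoff (fun x : ℝ => U (s + x * I)) hu τ]; linarith)
  have k2 := integral_max_eq (fun x : ℝ => U (s + x * I)) hu τ
  have k3 := star_le U s hθ hτ.le
  unfold excess at k3
  rw [k2, ← hmdef] at k3
  linarith

/-- Baernstein's comparison of a Green function `U` with one, `V`, that is positive off a radial
slit: a maximum principle for `star U - arc V - ε θ + ε' s²` on a rectangle `[-S, S] × [0, π]`. The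
left and right sides are handled by the asymptotics of `U` and `V`, the side `θ = π` by the total
integrals, and the part where `{U > 0}` has measure at most `2θ` by the term `ε θ`. -/
theorem star_le_arc {U V : ℂ → ℝ} (hU : GreenLike U) (hV : GreenLike V)
    (hpos : ∀ (s φ : ℝ), φ ∈ Ioo 0 (2 * π) → 0 < V (s + φ * I)) {s₁ θ₁ : ℝ} (hθ0 : 0 ≤ θ₁)
    (hθ : θ₁ ≤ π) : star U s₁ θ₁ ≤ arc V s₁ θ₁ := by
  by_contra hcon
  push Not at hcon
  have hπ := Real.pi_pos
  set d := star U s₁ θ₁ - arc V s₁ θ₁ with hd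
  have hd0 : 0 < d := by linarith
  obtain ⟨S₁, hS₁⟩ := hU.right (d / (16 * π)) (by positivity)
  obtain ⟨S₂, hS₂⟩ := hU.left (d / (16 * π)) (by positivity)
  obtain ⟨S₃, hS₃⟩ := hV.left (d / (16 * π)) (by positivity)
  have hη : d / (16 * π) * π = d / 16 := by field_simp
  set η := d / (16 * π) with hηdef
  have hη0 : 0 < η := by positivity
  obtain ⟨S, hSS1, hSS2, hSS3, hSs, hS1⟩ : ∃ S : ℝ, S₁ ≤ S ∧ S₂ ≤ S ∧ S₃ ≤ S ∧ |s₁| ≤ S ∧ 1 ≤ S :=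
    ⟨max S₁ (max S₂ (max S₃ (max |s₁| 1))), by simp, by simp, by simp, by simp, by simp⟩
  set ε := d / (4 * π) with hεdef
  have hε0 : 0 < ε := by positivity
  have hεπ : ε * π = d / 4 := by rw [hεdef]; field_simp
  set ε' := d / (4 * S ^ 2) with hε'def
  have hε'0 : 0 < ε' := by positivity
  have hε'S : ε' * S ^ 2 = d / 4 := by rw [hε'def]; field_simp
  set K : Set (ℝ × ℝ) := Icc (-S) S ×ˢ Icc 0 π with hK
  have husc : UpperSemicontinuousOn (fun p : ℝ × ℝ => star U p.1 p.2 +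
      (- arc V p.1 p.2 - ε * p.2 + ε' * p.1 ^ 2)) K := by
    refine (usc_star hU.cont (fun p hp => hp.2.1)).add ?_
    refine ContinuousOn.upperSemicontinuousOn (Continuous.continuousOn ?_)
    have := continuous_arc hV.cont
    fun_prop
  have hs₁K : (s₁, θ₁) ∈ K := ⟨abs_le.1 hSs, hθ0, hθ⟩
  obtain ⟨⟨s, θ⟩, ⟨hsK, hθK⟩, hmax⟩ := husc.exists_isMaxOn ⟨_, hs₁K⟩
    (isCompact_Icc.prod isCompact_Icc)
  simp only at hsK hθK
  have hQ : ∀ s' θ', s' ∈ Icc (-S) S → θ' ∈ Icc 0 π →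
      star U s' θ' - arc V s' θ' - ε * θ' + ε' * s' ^ 2 ≤
        star U s θ - arc V s θ - ε * θ + ε' * s ^ 2 := by
    intro s' θ' h1 h2
    have := hmax (show (s', θ') ∈ K from ⟨h1, h2⟩)
    simp only [mem_ofPred_eq] at this
    linarith
  have hbig : d / 2 ≤ star U s θ - arc V s θ := by
    have h1 := hQ s₁ θ₁ hs₁K.1 hs₁K.2
    have h2 : ε * θ₁ ≤ ε * π := by gcongr
    have h3 : ε' * s ^ 2 ≤ ε' * S ^ 2 := by
      gcongr ε' * ?_
      exact sq_le_sq' hsK.1 hsK.2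
    have h4 : 0 ≤ ε' * s₁ ^ 2 := by positivity
    have h5 : 0 ≤ ε * θ := mul_nonneg hε0.le hθK.1
    linarith
  have harc := arc_nonneg hV s hθK.1
  have hηθ : η * θ ≤ η * π := by
    have := hθK.2
    gcongr
  -- the maximum is not on the lines `θ = 0` and `s = ±S`
  have hθpos : 0 < θ := by
    rcases hθK.1.eq_or_lt with h | h
    · obtain ⟨B, hB0, hB⟩ := exists_bound_line hU s
      have := star_le_of_le hθK.1 hB0 hB
      rw [← h] at this hbig harc
      simp only [mul_zero, zero_mul] at this
      linarith
    · exact h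
  have hsS : s < S := by
    rcases hsK.2.eq_or_lt with h | h
    · have := star_le_of_le (U := U) (s := s) hθK.1 hη0.le
        (fun x => hS₁ _ (by simp [h, hSS1]))
      linarith
    · exact h
  have hsS' : -S < s := by
    rcases hsK.1.eq_or_lt with h | h
    · have h1 : ∀ x : ℝ, U (s + x * I) ≤ S + η := fun x => by
        have := (abs_le.1 (hS₂ (s + x * I) (by simp [← h, hSS2]))).2
        simp [← h] at this ⊢
        linarith
      have h2 : ∀ x : ℝ, S - η ≤ V (s + x * I) := fun x => by
        have := (abs_le.1 (hS₃ (s + x * I) (by simp [← h, hSS3]))).1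
        simp [← h] at this ⊢
        linarith
      have h3 := star_le_of_le hθK.1 (by linarith) h1
      have h4 := arc_ge hV hθK.1 h2
      linarith
    · exact h
  by_cases hm : 2 * θ < perMeas.real {x : ℝ | 0 < U (s + x * I)}
  · have hθπ : θ < π := by
      have := perMeas_real_le {x : ℝ | 0 < U (s + x * I)}
      linarith
    refine no_interior_max hU hV hpos hθpos hθπ hm hε'0
      (r := min (min (S - s) (s + S)) (min θ (π - θ)))
      (lt_min (lt_min (by linarith) (by linarith)) (lt_min hθpos (by linarith))) (ε := ε) ?_
    intro s' θ' h1 h2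
    simp only [lt_min_iff, abs_lt] at h1 h2
    refine hQ s' θ' ⟨?_, ?_⟩ ⟨?_, ?_⟩ <;> linarith [h1.1, h1.2, h2.1, h2.2]
  · push Not at hm
    by_cases hfull : ∀ x : ℝ, 0 < U (s + x * I)
    · have hθπ : θ = π := by
        have : {x : ℝ | 0 < U (s + x * I)} = univ := eq_univ_of_forall hfull
        rw [this, perMeas_real_univ] at hm
        exact le_antisymm hθK.2 (by linarith)
      have h1 := star_le U s hθK.1 le_rfl
      have h2 := hU.full s hfull
      have h3 := hV.lower s
      have h4 : excess U s 0 = ∫ φ in (0 : ℝ)..(2 * π), U (s + φ * I) := by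
        unfold excess
        refine intervalIntegral.integral_congr fun x _ => ?_
        simp only [sub_zero]
        exact max_eq_left (hU.nonneg _)
      have h5 : arc V s θ = ∫ φ in (0 : ℝ)..(2 * π), V (s + φ * I) := by
        unfold arc; rw [hθπ]; simp [two_mul]
      rw [h4] at h1
      linarith
    · push Not at hfull
      obtain ⟨x₁, hx₁⟩ := hfull
      by_cases hz : ∃ x₂ : ℝ, 0 < U (s + x₂ * I)
      · obtain ⟨x₂, hx₂⟩ := hz
        obtain ⟨θ', h0, h1, h2⟩ := exists_smaller hU (τ := ε / 4) (by positivity) hθK.1 hm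
          (le_antisymm hx₁ (hU.nonneg _)) hx₂
        have h3 := arc_mono hV s h0 h1.le
        have h4 := hQ s θ' hsK ⟨h0, h1.le.trans hθK.2⟩
        nlinarith [mul_pos hε0 (sub_pos.2 h1)]
      · push Not at hz
        have := star_le_of_le hθK.1 le_rfl hz
        linarith

/-- Testing `star_le_arc` with half the measure of `{U > t}` on the line `re = s`. -/
lemma excess_le {U V : ℂ → ℝ} (hU : GreenLike U) (hV : GreenLike V)
    (hpos : ∀ (s φ : ℝ), φ ∈ Ioo 0 (2 * π) → 0 < V (s + φ * I)) (s t : ℝ) :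
    excess U s t ≤ excess V s t := by
  have hc := hU.cont
  have hcV := hV.cont
  have hu : Continuous fun x : ℝ => U (s + x * I) := by fun_prop
  have hv : Continuous fun x : ℝ => V (s + x * I) := by fun_prop
  have hχ : Measurable ({x : ℝ | t < U (s + x * I)}.indicator (fun _ => (1 : ℝ))) :=
    measurable_const.indicator (measurableSet_lt measurable_const hu.measurable)
  have hχ1 : ∀ x, {x : ℝ | t < U (s + x * I)}.indicator (fun _ => (1 : ℝ)) x ∈ Icc (0 : ℝ) 1 := by
    intro x; by_cases h : x ∈ {x : ℝ | t < U (s + x * I)} <;> simp [h]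
  set m := perMeas.real {x : ℝ | t < U (s + x * I)} with hm
  have hm0 : 0 ≤ m := measureReal_nonneg
  have hm1 : m ≤ 2 * π := perMeas_real_le _
  have k1 := le_star (θ := m / 2) hc hχ hχ1 (s := s) (by
    rw [integral_cutoff (fun x : ℝ => U (s + x * I)) hu t]; linarith)
  have k2 := integral_max_eq (fun x : ℝ => U (s + x * I)) hu t
  have k3 := star_le_arc hU hV hpos (s₁ := s) (θ₁ := m / 2) (by positivity) (by linarith)
  -- an arc of length `m` carries at most `m t` plus the excess
  have k4 : arc V s (m / 2) ≤ m * t + excess V s t := by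
    have hcm : Continuous fun x : ℝ => max (V (s + x * I) - t) 0 := by fun_prop
    have e1 : arc V s (m / 2) ≤
        ∫ x in (π - m / 2)..(π + m / 2), (t + max (V (s + x * I) - t) 0) := by
      refine intervalIntegral.integral_mono_on (by linarith) (hv.intervalIntegrable _ _)
        (Continuous.intervalIntegrable (by fun_prop) _ _) fun x _ => ?_
      linarith [le_max_left (V (s + x * I) - t) 0]
    rw [intervalIntegral.integral_add (by simp) (hcm.intervalIntegrable _ _),
      intervalIntegral.integral_const, smul_eq_mul] at e1
    have e2 : ∫ x in (π - m / 2)..(π + m / 2), max (V (s + x * I) - t) 0 ≤ excess V s t :=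
      intervalIntegral.integral_mono_interval (by linarith) (by linarith) (by linarith)
        (Eventually.of_forall fun x => le_max_right _ _) (hcm.intervalIntegrable _ _)
    linarith
  unfold excess at k4 ⊢
  rw [k2, ← hm]
  linarith

/-! ### The Koebe function -/

/-- The Koebe function slit along `[1/4, ∞)`. -/
noncomputable def koebe (z : ℂ) : ℂ := z / (1 + z) ^ 2

lemma one_add_ne_zero_of_mem {z : ℂ} (hz : z ∈ ball (0 : ℂ) 1) : 1 + z ≠ 0 := by
  intro h
  have : z = -1 := by linear_combination h
  rw [this] at hz
  simp at hz

lemma inClassS_koebe : InClassS koebe := by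
  refine ⟨?_, ?_, by simp [koebe], ?_⟩
  · intro z hz
    exact analyticAt_id.div ((analyticAt_const.add analyticAt_id).pow 2)
      (pow_ne_zero 2 (one_add_ne_zero_of_mem hz))
  · intro z hz w hw h
    have h1 := one_add_ne_zero_of_mem hz
    have h2 := one_add_ne_zero_of_mem hw
    simp only [koebe] at h
    rw [div_eq_div_iff (pow_ne_zero 2 h1) (pow_ne_zero 2 h2)] at h
    have h3 : (z - w) * (1 - z * w) = 0 := by linear_combination h
    rcases mul_eq_zero.1 h3 with h4 | h4
    · exact sub_eq_zero.1 h4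
    · exfalso
      have h5 : z * w = 1 := by linear_combination -h4
      have h6 : ‖z‖ * ‖w‖ = 1 := by rw [← norm_mul, h5, norm_one]
      rw [mem_ball_zero_iff] at hz hw
      nlinarith [norm_nonneg z, norm_nonneg w]
  · have h : HasDerivAt (fun z : ℂ => z / (1 + z) ^ 2)
        ((1 * (1 + 0) ^ 2 - 0 * (((2 : ℕ) : ℂ) * (1 + 0) ^ (2 - 1) * 1)) / ((1 + 0) ^ 2) ^ 2) 0 :=
      (hasDerivAt_id (0 : ℂ)).div (((hasDerivAt_id (0 : ℂ)).const_add 1).pow 2) (by simp)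
    have := h.deriv
    have hk : koebe = fun z : ℂ => z / (1 + z) ^ 2 := rfl
    rw [hk, this]
    simp

lemma exp_mem_koebe (s : ℝ) {φ : ℝ} (hφ : φ ∈ Ioo 0 (2 * π)) :
    Complex.exp (s + φ * I) ∈ koebe '' ball 0 1 := by
  set w := Complex.exp (s + φ * I) with hw
  have hw0 : w ≠ 0 := Complex.exp_ne_zero _
  obtain ⟨z, hz⟩ : ∃ z : ℂ, w * (z * z) + (2 * w - 1) * z + w = 0 :=
    exists_quadratic_eq_zero hw0 (IsAlgClosed.exists_eq_mul_self _)
  have hz1 : w * (1 + z) ^ 2 = z := by linear_combination hz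
  have hz0 : z ≠ 0 := by
    rintro rfl
    simp [hw0] at hz
  have hsol : ∀ y : ℂ, w * (1 + y) ^ 2 = y → y ∈ ball (0 : ℂ) 1 → w ∈ koebe '' ball 0 1 := by
    intro y hy hyb
    refine ⟨y, hyb, ?_⟩
    rw [koebe, div_eq_iff (pow_ne_zero 2 (one_add_ne_zero_of_mem hyb)), hy]
  rcases lt_trichotomy ‖z‖ 1 with h | h | h
  · exact hsol z hz1 (by simpa using h)
  · exfalso
    -- a root on the unit circle would make `w` a positive number
    have hzz : z * (starRingEnd ℂ) z = 1 := by
      rw [Complex.mul_conj, Complex.normSq_eq_norm_sq, h]; simp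
    have hre : z + (starRingEnd ℂ) z = ((2 * z.re : ℝ) : ℂ) := Complex.add_conj z
    have hwc : w * ((2 + 2 * z.re : ℝ) : ℂ) = 1 := by
      push_cast
      push_cast at hre
      rw [← hre]
      apply mul_left_cancel₀ hz0
      linear_combination hz1 + w * hzz
    have hc : 0 ≤ 2 + 2 * z.re := by
      have := (abs_le.1 (Complex.abs_re_le_norm z)).1
      rw [h] at this
      linarith
    have h1 := congrArg Complex.re hwc
    have h2 := congrArg Complex.im hwc
    rw [Complex.re_mul_ofReal, Complex.one_re] at h1
    rw [Complex.im_mul_ofReal, Complex.one_im] at h2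
    have e1 : w.re = Real.exp s * Real.cos φ := by simp [hw, Complex.exp_re]
    have e2 : w.im = Real.exp s * Real.sin φ := by simp [hw, Complex.exp_im]
    have hc0 : 2 + 2 * z.re ≠ 0 := by
      intro hc; rw [hc] at h1; simp at h1
    have hwim : Real.sin φ = 0 := by
      rcases mul_eq_zero.1 h2 with h3 | h3
      · rw [e2] at h3
        exact (mul_eq_zero.1 h3).resolve_left (Real.exp_pos s).ne'
      · exact absurd h3 hc0
    have hφπ : φ = π := by
      rcases lt_trichotomy φ π with h3 | h3 | h3
      · exact absurd hwim (Real.sin_pos_of_pos_of_lt_pi hφ.1 h3).ne'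
      · exact h3
      · have := Real.sin_pos_of_pos_of_lt_pi (x := φ - π) (by linarith) (by linarith [hφ.2])
        rw [Real.sin_sub_pi] at this
        linarith
    rw [e1, hφπ, Real.cos_pi] at h1
    nlinarith [Real.exp_pos s]
  · refine hsol z⁻¹ ?_ ?_
    · field_simp
      linear_combination hz1
    · rw [mem_ball_zero_iff, norm_inv]
      exact inv_lt_one_of_one_lt₀ h

lemma lgreen_koebe_pos (s φ : ℝ) (hφ : φ ∈ Ioo 0 (2 * π)) : 0 < lgreen koebe (s + φ * I) := by
  obtain ⟨z, hz, h⟩ := exp_mem_koebe s hφ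
  have hz0 : z ≠ 0 := by
    rintro rfl
    exact Complex.exp_ne_zero _ (h.symm.trans (by simp [koebe]))
  rw [lgreen, ← h, green_apply inClassS_koebe hz]
  have := Real.log_neg (norm_pos_iff.2 hz0) (by simpa using hz)
  linarith

/-! ### Comparison of square means -/

/-- Among functions in `𝒮`, the Koebe function has the largest means of `max (log |f|, s)` on
circles. -/
lemma integral_max_le {f : ℂ → ℂ} (hf : InClassS f) {t : ℝ} (ht : 0 < t) (s : ℝ) :
    ∫ α in (0 : ℝ)..(2 * π), max (Real.log ‖f (circleMap 0 (Real.exp (-t)) α)‖ - s) 0 ≤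
      ∫ α in (0 : ℝ)..(2 * π), max (Real.log ‖koebe (circleMap 0 (Real.exp (-t)) α)‖ - s) 0 := by
  rw [← integral_max_lgreen hf ht, ← integral_max_lgreen inClassS_koebe ht]
  exact excess_le (greenLike_lgreen hf) (greenLike_lgreen inClassS_koebe) lgreen_koebe_pos s t

/-- The square is a superposition of the functions `max (x - σ, 0)`. -/
lemma integral_sq_add {x : ℝ → ℝ} (hx : Continuous x) {X : ℝ}
    (hX : ∀ α ∈ Icc 0 (2 * π), |x α| ≤ X) :
    ∫ α in (0 : ℝ)..(2 * π), (x α + X) ^ 2 =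
      2 * ∫ σ in (-X)..X, ∫ α in (0 : ℝ)..(2 * π), max (x α - σ) 0 := by
  have hX0 : -X ≤ X := by
    have := (abs_nonneg _).trans (hX 0 ⟨le_rfl, by positivity⟩)
    linarith
  have hpt : ∀ y : ℝ, |y| ≤ X → (y + X) ^ 2 = 2 * ∫ σ in (-X)..X, max (y - σ) 0 := by
    intro y hy
    have hy' := abs_le.1 hy
    have hc : Continuous fun σ : ℝ => max (y - σ) 0 := by fun_prop
    rw [← intervalIntegral.integral_add_adjacent_intervals (hc.intervalIntegrable (-X) y)
      (hc.intervalIntegrable y X)]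
    have e1 : ∫ σ in (-X)..y, max (y - σ) 0 = ∫ σ in (-X)..y, (y - σ) := by
      refine intervalIntegral.integral_congr fun σ hσ => ?_
      rw [uIcc_of_le hy'.1] at hσ
      exact max_eq_left (by linarith [hσ.2])
    have e2 : ∫ σ in y..X, max (y - σ) 0 = ∫ σ in y..X, (0 : ℝ) := by
      refine intervalIntegral.integral_congr fun σ hσ => ?_
      rw [uIcc_of_le hy'.2] at hσ
      exact max_eq_right (by linarith [hσ.1])
    rw [e1, e2, intervalIntegral.integral_sub (by simp) (Continuous.intervalIntegrable
      (by fun_prop) _ _)]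
    simp
    ring
  have hintg : Integrable (Function.uncurry fun (α σ : ℝ) => max (x α - σ) 0)
      ((volume.restrict (Ioc 0 (2 * π))).prod (volume.restrict (Ioc (-X) X))) := by
    rw [Measure.prod_restrict]
    have hc : Continuous (Function.uncurry fun (α σ : ℝ) => max (x α - σ) 0) := by fun_prop
    refine (hc.continuousOn.integrableOn_compact
      ((isCompact_Icc (a := (0 : ℝ)) (b := 2 * π)).prod
        (isCompact_Icc (a := -X) (b := X)))).mono_set
        (prod_mono Ioc_subset_Icc_self Ioc_subset_Icc_self)
  simp_rw [intervalIntegral.integral_of_le Real.two_pi_pos.le, intervalIntegral.integral_of_le hX0]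
  rw [← integral_integral_swap hintg, ← integral_const_mul]
  refine setIntegral_congr_fun measurableSet_Ioc fun α hα => ?_
  rw [hpt (x α) (hX α (Ioc_subset_Icc_self hα)), intervalIntegral.integral_of_le hX0]

/-- A case of convex domination: equal means and ordered means of all `max (· - s, 0)`. -/
lemma integral_sq_le {x y : ℝ → ℝ} (hx : Continuous x) (hy : Continuous y)
    (h1 : ∫ α in (0 : ℝ)..(2 * π), x α = ∫ α in (0 : ℝ)..(2 * π), y α)
    (h : ∀ s : ℝ, ∫ α in (0 : ℝ)..(2 * π), max (x α - s) 0 ≤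
      ∫ α in (0 : ℝ)..(2 * π), max (y α - s) 0) (c : ℝ) :
    ∫ α in (0 : ℝ)..(2 * π), (x α + c) ^ 2 ≤ ∫ α in (0 : ℝ)..(2 * π), (y α + c) ^ 2 := by
  obtain ⟨X₁, hX₁⟩ := (isCompact_Icc (a := (0 : ℝ)) (b := 2 * π)).exists_bound_of_continuousOn
    hx.continuousOn
  obtain ⟨X₂, hX₂⟩ := (isCompact_Icc (a := (0 : ℝ)) (b := 2 * π)).exists_bound_of_continuousOn
    hy.continuousOn
  set X := max X₁ X₂ with hXdef
  have hxX : ∀ α ∈ Icc 0 (2 * π), |x α| ≤ X := fun α hα => (hX₁ α hα).trans (le_max_left _ _)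
  have hyX : ∀ α ∈ Icc 0 (2 * π), |y α| ≤ X := fun α hα => (hX₂ α hα).trans (le_max_right _ _)
  have hX0 : -X ≤ X := by
    have := (abs_nonneg _).trans (hxX 0 ⟨le_rfl, by positivity⟩)
    linarith
  have hmain : ∫ α in (0 : ℝ)..(2 * π), (x α + X) ^ 2 ≤ ∫ α in (0 : ℝ)..(2 * π), (y α + X) ^ 2 := by
    rw [integral_sq_add hx hxX, integral_sq_add hy hyX]
    have hc : ∀ z : ℝ → ℝ, Continuous z →
        Continuous fun σ : ℝ => ∫ α in (0 : ℝ)..(2 * π), max (z α - σ) 0 := fun z hz => by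
      apply intervalIntegral.continuous_parametric_intervalIntegral_of_continuous'
      fun_prop
    have := intervalIntegral.integral_mono_on (μ := volume) hX0 ((hc x hx).intervalIntegrable _ _)
      ((hc y hy).intervalIntegrable _ _) fun σ _ => h σ
    linarith
  have hexp : ∀ z : ℝ → ℝ, Continuous z → ∫ α in (0 : ℝ)..(2 * π), (z α + c) ^ 2 =
      (∫ α in (0 : ℝ)..(2 * π), (z α + X) ^ 2) + 2 * (c - X) * (∫ α in (0 : ℝ)..(2 * π), z α)
        + 2 * π * (c ^ 2 - X ^ 2) := by
    intro z hz
    have : ∀ α, (z α + c) ^ 2 = (z α + X) ^ 2 + 2 * (c - X) * z α + (c ^ 2 - X ^ 2) :=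
      fun α => by ring
    simp_rw [this]
    rw [intervalIntegral.integral_add (Continuous.intervalIntegrable (by fun_prop) _ _) (by simp),
      intervalIntegral.integral_add (Continuous.intervalIntegrable (by fun_prop) _ _)
        (Continuous.intervalIntegrable (by fun_prop) _ _), intervalIntegral.integral_const_mul]
    simp
    ring
  rw [hexp x hx, hexp y hy, h1]
  linarith

/-! ### Parseval's identity and the coefficient inequality at radius `r` -/

lemma sum_sq_eq_circleAverage (c : ℕ → ℂ) (r : ℝ) (N : ℕ) :
    ∑ n ∈ Finset.range N, ‖c n‖ ^ 2 * r ^ (2 * n) =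
      circleAverage (fun z => ‖∑ n ∈ Finset.range N, c n * z ^ n‖ ^ 2) 0 r := by
  set p : Polynomial ℂ := ∑ n ∈ Finset.range N, Polynomial.C (c n * r ^ n) * Polynomial.X ^ n
    with hp
  have hcoeff : ∀ n, p.coeff n = if n ∈ Finset.range N then c n * r ^ n else 0 := by
    intro n
    simp only [hp, Polynomial.finsetSum_coeff, Polynomial.coeff_C_mul_X_pow]
    rw [Finset.sum_ite_eq]
  have h1 := p.sum_sq_norm_coeff_eq_circleAverage
  have h2 : ∑ i ∈ p.support, ‖p.coeff i‖ ^ 2 =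
      ∑ n ∈ Finset.range N, ‖c n‖ ^ 2 * r ^ (2 * n) := by
    rw [Finset.sum_subset (s₂ := Finset.range N)]
    · refine Finset.sum_congr rfl fun n hn => ?_
      rw [hcoeff, if_pos hn, norm_mul, mul_pow, norm_pow, Complex.norm_real, Real.norm_eq_abs,
        ← pow_mul, mul_comm n 2, pow_mul, sq_abs, ← pow_mul]
    · intro n hn
      by_contra hcon
      rw [Polynomial.mem_support_iff, hcoeff, if_neg hcon] at hn
      exact hn rfl
    · intro n _ hn
      rw [Polynomial.notMem_support_iff.1 hn]; simp
  rw [← h2, h1, circleAverage_def, circleAverage_def]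
  congr 1
  refine intervalIntegral.integral_congr fun α _ => ?_
  simp only [hp, Polynomial.eval_finsetSum, Polynomial.eval_mul, Polynomial.eval_C,
    Polynomial.eval_pow, Polynomial.eval_X]
  congr 2
  refine Finset.sum_congr rfl fun n _ => ?_
  simp [circleMap]
  ring

lemma hasSum_parseval {g : ℂ → ℂ} {c : ℕ → ℂ}
    (hs : ∀ z ∈ ball (0 : ℂ) 1, HasSum (fun n => c n * z ^ n) (g z)) {r : ℝ} (hr0 : 0 < r)
    (hr : r < 1) :
    HasSum (fun n => ‖c n‖ ^ 2 * r ^ (2 * n)) (circleAverage (fun z => ‖g z‖ ^ 2) 0 r) := by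
  rw [hasSum_iff_tendsto_nat_of_nonneg (fun n => by positivity)]
  simp_rw [sum_sq_eq_circleAverage, circleAverage_def]
  refine Tendsto.const_smul ?_ _
  have hsum : Summable fun n => ‖c n‖ * r ^ n := by
    have := (hs (r : ℂ) (by simpa [abs_of_pos hr0] using hr)).summable.norm
    simpa [abs_of_pos hr0] using this
  have hz : ∀ α, ‖circleMap 0 r α‖ = r := fun α => by simp [abs_of_pos hr0]
  set M := ∑' n, ‖c n‖ * r ^ n with hM
  refine intervalIntegral.tendsto_integral_filter_of_dominated_convergence (fun _ => M ^ 2)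
    ?_ ?_ (by simp) ?_
  · exact Eventually.of_forall fun N =>
      (by fun_prop : Continuous fun α =>
        ‖∑ n ∈ Finset.range N, c n * circleMap 0 r α ^ n‖ ^ 2).aestronglyMeasurable
  · refine Eventually.of_forall fun N => Eventually.of_forall fun α _ => ?_
    rw [norm_pow, norm_norm]
    gcongr
    calc ‖∑ n ∈ Finset.range N, c n * circleMap 0 r α ^ n‖
        ≤ ∑ n ∈ Finset.range N, ‖c n * circleMap 0 r α ^ n‖ := norm_sum_le _ _
      _ = ∑ n ∈ Finset.range N, ‖c n‖ * r ^ n := by simp only [norm_mul, norm_pow, hz]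
      _ ≤ M := hsum.sum_le_tsum _ fun n _ => by positivity
  · refine Eventually.of_forall fun α _ => ?_
    have := (hs (circleMap 0 r α) (by rw [mem_ball_zero_iff, hz]; exact hr)).tendsto_sum_nat
    exact this.norm.pow 2

/-- The mean of `g²` over the circle is `g(0)² = 0`, so that real and imaginary part have the same
mean square. -/
lemma circleAverage_re_sq {g : ℂ → ℂ} (hg : AnalyticOnNhd ℂ g (ball 0 1)) (g0 : g 0 = 0) {r : ℝ}
    (hr0 : 0 < r) (hr : r < 1) :
    circleAverage (fun z => ‖g z‖ ^ 2) 0 r = 2 * circleAverage (fun z => (g z).re ^ 2) 0 r := by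
  have hsub : closedBall (0 : ℂ) |r| ⊆ ball 0 1 := by
    rw [abs_of_pos hr0]; exact closedBall_subset_ball hr
  have hss : sphere (0 : ℂ) r ⊆ ball 0 1 := fun z hz =>
    hsub (by rw [abs_of_pos hr0]; exact sphere_subset_closedBall hz)
  have hc : ContinuousOn g (sphere (0 : ℂ) r) := hg.continuousOn.mono hss
  have hc1 : ContinuousOn (fun z => (g z).re) (sphere (0 : ℂ) r) :=
    Complex.continuous_re.comp_continuousOn hc
  have hh : circleAverage (fun z => (g z ^ 2).re) 0 r = 0 := by
    have : InnerProductSpace.HarmonicOnNhd (fun z => (g z ^ 2).re) (closedBall 0 |r|) :=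
      fun z hz => ((hg z (hsub hz)).pow 2).harmonicAt_re
    rw [this.circleAverage_eq, g0]; simp
  have e : ∀ z, ‖g z‖ ^ 2 = 2 * (g z).re ^ 2 - (g z ^ 2).re := by
    intro z
    rw [← Complex.normSq_eq_norm_sq, Complex.normSq_apply, sq (g z), Complex.mul_re]
    ring
  simp_rw [e]
  rw [circleAverage_fun_sub, hh, sub_zero]
  · have := circleAverage_fun_smul (a := (2 : ℝ)) (f := fun z => (g z).re ^ 2)
      (c := 0) (R := r)
    simpa using this
  · exact ContinuousOn.circleIntegrable hr0.le (by fun_prop)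
  · exact ContinuousOn.circleIntegrable hr0.le (Complex.continuous_re.comp_continuousOn (hc.pow 2))

lemma hasSum_log {f g : ℂ → ℂ} (hg : AnalyticOnNhd ℂ g (ball 0 1))
    (g0 : g 0 = 0) (he : ∀ z ∈ ball (0 : ℂ) 1, z ≠ 0 → Complex.exp (g z) = f z / z) {c : ℕ → ℂ}
    (hs : ∀ z ∈ ball (0 : ℂ) 1, HasSum (fun n => c n * z ^ n) (g z)) {t : ℝ} (ht : 0 < t) :
    HasSum (fun n => ‖c n‖ ^ 2 * Real.exp (-t) ^ (2 * n))
      (2 * ((2 * π)⁻¹ * ∫ α in (0 : ℝ)..(2 * π),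
        (Real.log ‖f (circleMap 0 (Real.exp (-t)) α)‖ + t) ^ 2)) := by
  set r := Real.exp (-t) with hrdef
  have hr0 : 0 < r := Real.exp_pos _
  have hr : r < 1 := by rw [hrdef, Real.exp_lt_one_iff]; linarith
  have h := hasSum_parseval hs hr0 hr
  rw [circleAverage_re_sq hg g0 hr0 hr, circleAverage_def, smul_eq_mul] at h
  convert h using 4
  funext α
  have hz : circleMap 0 r α ∈ ball (0 : ℂ) 1 := by simpa [abs_of_pos hr0] using hr
  have hz0 : circleMap 0 r α ≠ 0 := circleMap_ne_center hr0.ne'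
  have h1 := he _ hz hz0
  have h2 : Real.log ‖f (circleMap 0 r α)‖ = (g (circleMap 0 r α)).re - t := by
    have h3 : f (circleMap 0 r α) = Complex.exp (g (circleMap 0 r α)) * circleMap 0 r α := by
      rw [h1, div_mul_cancel₀ _ hz0]
    rw [h3, norm_mul, Complex.norm_exp, Real.log_mul (Real.exp_pos _).ne'
      (norm_ne_zero_iff.2 hz0), Real.log_exp, norm_circleMap_zero, abs_of_pos hr0, hrdef,
      Real.log_exp]
    ring
  rw [h2]
  ring

lemma hasSum_koebe_log {z : ℂ} (hz : z ∈ ball (0 : ℂ) 1) :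
    HasSum (fun n : ℕ => (-2 * (-1) ^ (n + 1) / n : ℂ) * z ^ n) (-2 * Complex.log (1 + z)) := by
  have := (Complex.hasSum_taylorSeries_log (z := z) (by simpa using hz)).mul_left (-2)
  have e : (fun n : ℕ => (-2 * (-1) ^ (n + 1) / n : ℂ) * z ^ n) =
      fun n : ℕ => -2 * ((-1) ^ (n + 1) * z ^ n / n) := by
    funext n
    ring
  rw [e]
  exact this

lemma exp_koebe_log {z : ℂ} (hz : z ∈ ball (0 : ℂ) 1) (hz0 : z ≠ 0) :
    Complex.exp (-2 * Complex.log (1 + z)) = koebe z / z := by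
  have h := one_add_ne_zero_of_mem hz
  rw [neg_mul, Complex.exp_neg, two_mul, Complex.exp_add, Complex.exp_log h, koebe]
  field_simp

lemma analyticOnNhd_koebe_log :
    AnalyticOnNhd ℂ (fun z : ℂ => -2 * Complex.log (1 + z)) (ball 0 1) := by
  intro z hz
  refine analyticAt_const.mul ((analyticAt_const.add analyticAt_id).clog ?_)
  exact Complex.mem_slitPlane_of_norm_lt_one (by simpa using hz)

/-- Log-coefficient comparison with the Koebe function on each circle `|z| = r`. -/
theorem logCoeff_radius {f : ℂ → ℂ} {γ : ℕ → ℂ} (hf : InClassS f) (hγ : IsLogCoeffs f γ) {r : ℝ}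
    (hr0 : 0 < r) (hr : r < 1) :
    Summable (fun n : ℕ => ‖γ (n + 1)‖ ^ 2 * r ^ (2 * (n + 1))) ∧
    Summable (fun n : ℕ => 1 / ((n : ℝ) + 1) ^ 2 * r ^ (2 * (n + 1))) ∧
    ∑' n : ℕ, ‖γ (n + 1)‖ ^ 2 * r ^ (2 * (n + 1)) ≤
      ∑' n : ℕ, 1 / ((n : ℝ) + 1) ^ 2 * r ^ (2 * (n + 1)) := by
  obtain ⟨g, hg, g0, he, hd⟩ := hγ
  set t := -Real.log r with htdef
  have ht : 0 < t := by have := Real.log_neg hr0 hr; linarith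
  have hrt : Real.exp (-t) = r := by rw [htdef, neg_neg, Real.exp_log hr0]
  have hs : ∀ z ∈ ball (0 : ℂ) 1,
      HasSum (fun n => (if n = 0 then 0 else 2 * γ n) * z ^ n) (g z) := by
    intro z hz
    have := Complex.hasSum_taylorSeries_on_ball (hg.differentiableOn) hz
    have e : (fun n => (if n = 0 then 0 else 2 * γ n) * z ^ n) =
        fun n : ℕ => (n.factorial : ℂ)⁻¹ • (z - 0) ^ n • iteratedDeriv n g 0 := by
      funext n
      rcases Nat.eq_zero_or_pos n with h | h
      · subst h; simp [g0]
      · rw [if_neg h.ne', hd n h, sub_zero, smul_eq_mul, smul_eq_mul]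
        have : (n.factorial : ℂ) ≠ 0 := by exact_mod_cast n.factorial_ne_zero
        field_simp
    rw [e]
    exact this
  have h1 := hasSum_log hg g0 he hs ht
  have h2 := hasSum_log (f := koebe) analyticOnNhd_koebe_log (by simp)
    (fun z hz hz0 => exp_koebe_log hz hz0) (fun z hz => hasSum_koebe_log hz) ht
  have hcmp := integral_sq_le (x := fun α => Real.log ‖f (circleMap 0 (Real.exp (-t)) α)‖)
    (y := fun α => Real.log ‖koebe (circleMap 0 (Real.exp (-t)) α)‖)
    (continuous_log_norm_circle hf (Real.exp_pos _) (by rwa [hrt]))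
    (continuous_log_norm_circle inClassS_koebe (Real.exp_pos _) (by rwa [hrt]))
    (by rw [integral_log_norm_circle hf ht, integral_log_norm_circle inClassS_koebe ht])
    (integral_max_le hf ht) t
  have hle := mul_le_mul_of_nonneg_left (mul_le_mul_of_nonneg_left hcmp
    (by positivity : 0 ≤ (2 * π)⁻¹)) (by norm_num : (0 : ℝ) ≤ 2)
  rw [← h1.tsum_eq, ← h2.tsum_eq, hrt] at hle
  rw [hrt] at h1 h2
  have k1 := (hasSum_nat_add_iff' 1).2 h1
  have k2 := (hasSum_nat_add_iff' 1).2 h2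
  have e1 : (fun n : ℕ => ‖(if n + 1 = 0 then 0 else 2 * γ (n + 1))‖ ^ 2 * r ^ (2 * (n + 1))) =
      fun n : ℕ => 4 * (‖γ (n + 1)‖ ^ 2 * r ^ (2 * (n + 1))) := by
    funext n
    rw [if_neg n.succ_ne_zero, norm_mul, mul_pow]
    norm_num
    ring
  have e2 : (fun n : ℕ => ‖(-2 * (-1) ^ (n + 1 + 1) / (n + 1 : ℕ) : ℂ)‖ ^ 2 * r ^ (2 * (n + 1))) =
      fun n : ℕ => 4 * (1 / ((n : ℝ) + 1) ^ 2 * r ^ (2 * (n + 1))) := by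
    funext n
    have : ‖((n + 1 : ℕ) : ℂ)‖ = (n : ℝ) + 1 := by
      rw [Complex.norm_natCast]; push_cast; ring
    rw [norm_div, norm_mul, norm_pow, this]
    rw [norm_neg, norm_neg, norm_one, one_pow, div_pow, mul_pow, Complex.norm_two]
    ring
  rw [e1] at k1
  rw [e2] at k2
  have s1 := (summable_mul_left_iff (by norm_num : (4 : ℝ) ≠ 0)).1 k1.summable
  have s2 := (summable_mul_left_iff (by norm_num : (4 : ℝ) ≠ 0)).1 k2.summable
  refine ⟨s1, s2, ?_⟩
  have t1 := k1.tsum_eq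
  have t2 := k2.tsum_eq
  rw [tsum_mul_left] at t1 t2
  simp only [Finset.range_one, Finset.sum_singleton, if_true, norm_zero, Nat.cast_zero, div_zero,
    ne_eq, OfNat.ofNat_ne_zero, not_false_eq_true, zero_pow, zero_mul, sub_zero] at t1 t2
  rw [h1.tsum_eq, h2.tsum_eq] at hle
  linarith

/-! ### Passing from the circles to the weighted sum -/

lemma summable_inv_sq : Summable fun n : ℕ => 1 / ((n : ℝ) + 1) ^ 2 := by
  have := (summable_nat_add_iff 1).2 (Real.summable_one_div_nat_pow.2 (by norm_num : 1 < 2))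
  simpa using this

lemma hasSum_telescope :
    HasSum (fun n : ℕ => (1 / (2 * (n : ℝ) + 1) - 1 / (2 * (n : ℝ) + 3))) 1 := by
  rw [hasSum_iff_tendsto_nat_of_nonneg]
  · have e : ∀ N : ℕ, ∑ n ∈ Finset.range N, (1 / (2 * (n : ℝ) + 1) - 1 / (2 * (n : ℝ) + 3)) =
        1 - 1 / (2 * (N : ℝ) + 1) := by
      intro N
      induction N with
      | zero => simp
      | succ N ih =>
        rw [Finset.sum_range_succ, ih]
        push_cast
        have : 2 * ((N : ℝ) + 1) + 1 = 2 * N + 3 := by ring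
        rw [this]
        ring
    simp_rw [e]
    have : Tendsto (fun N : ℕ => 1 / (2 * (N : ℝ) + 1)) atTop (𝓝 0) := by
      refine tendsto_const_nhds.div_atTop ?_
      exact tendsto_atTop_add_const_right _ _
        (tendsto_natCast_atTop_atTop.const_mul_atTop (by norm_num))
    simpa using tendsto_const_nhds.sub this
  · intro n
    rw [sub_nonneg]
    exact one_div_le_one_div_of_le (by positivity) (by linarith)

section Summation

variable {a : ℕ → ℝ}

lemma summable_of_radius {b : ℕ → ℝ} (ha : ∀ n, 0 ≤ a n) (hb : ∀ n, 0 ≤ b n) (hbs : Summable b)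
    (h : ∀ r : ℝ, 0 < r → r < 1 → Summable (fun n => a n * r ^ (2 * (n + 1))) ∧
      Summable (fun n => b n * r ^ (2 * (n + 1))) ∧
      ∑' n, a n * r ^ (2 * (n + 1)) ≤ ∑' n, b n * r ^ (2 * (n + 1))) :
    Summable a ∧ ∑' n, a n ≤ ∑' n, b n := by
  have key : ∀ N, ∑ n ∈ Finset.range N, a n ≤ ∑' n, b n := by
    intro N
    have hev : ∀ᶠ r : ℝ in 𝓝[<] 1,
        ∑ n ∈ Finset.range N, a n * r ^ (2 * (n + 1)) ≤ ∑' n, b n := by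
      filter_upwards [Ioo_mem_nhdsLT (by norm_num : (0 : ℝ) < 1)] with r hr
      obtain ⟨h1, h2, h3⟩ := h r hr.1 hr.2
      refine (h1.sum_le_tsum _ fun n _ => mul_nonneg (ha n) (by have := hr.1; positivity)).trans
        (h3.trans (h2.tsum_le_tsum (fun n => ?_) hbs))
      exact mul_le_of_le_one_right (hb n) (pow_le_one₀ hr.1.le hr.2.le)
    have hlim : Tendsto (fun r : ℝ => ∑ n ∈ Finset.range N, a n * r ^ (2 * (n + 1))) (𝓝[<] 1)
        (𝓝 (∑ n ∈ Finset.range N, a n)) := by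
      have hc : Continuous fun r : ℝ => ∑ n ∈ Finset.range N, a n * r ^ (2 * (n + 1)) := by
        fun_prop
      have := (hc.tendsto 1).mono_left (nhdsWithin_le_nhds (s := Iio 1))
      simpa using this
    exact le_of_tendsto hlim hev
  exact ⟨summable_of_sum_range_le ha key, Real.tsum_le_of_sum_range_le ha key⟩

/-- If `∑ dₙ r²ⁿ ≥ 0` (indices from `1`) for all `r ∈ (0, 1)`, then `∑ dₙ / (4 n² - 1)`, which is
`½ ∫₀¹ (1 - r²) r⁻² ∑ dₙ r²ⁿ dr`, is nonnegative; the integrand takes the value `d₁` at `r = 0`, so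
that the sum can only vanish when `d₁ ≤ 0`. -/
lemma weighted_nonneg {d : ℕ → ℝ} (hd : Summable fun n => |d n|)
    (h : ∀ r : ℝ, 0 < r → r < 1 → 0 ≤ ∑' n, d n * r ^ (2 * (n + 1))) :
    Summable (fun n : ℕ => d n * (1 / (2 * (n : ℝ) + 1) - 1 / (2 * (n : ℝ) + 3))) ∧
    0 ≤ ∑' n : ℕ, d n * (1 / (2 * (n : ℝ) + 1) - 1 / (2 * (n : ℝ) + 3)) ∧
    (∑' n : ℕ, d n * (1 / (2 * (n : ℝ) + 1) - 1 / (2 * (n : ℝ) + 3)) = 0 → d 0 ≤ 0) := by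
  set G : ℕ → ℝ → ℝ := fun n r => d n * (r ^ (2 * n) - r ^ (2 * n + 2)) with hG
  have hGc : ∀ n, Continuous (G n) := fun n => by fun_prop
  have hbd : ∀ n, ∀ r ∈ Icc (0 : ℝ) 1, ‖G n r‖ ≤ |d n| := by
    intro n r hr
    rw [hG, Real.norm_eq_abs, abs_mul]
    refine mul_le_of_le_one_right (abs_nonneg _) ?_
    have h1 : r ^ (2 * n) ≤ 1 := pow_le_one₀ hr.1 hr.2
    have h2 : r ^ (2 * n + 2) ≤ r ^ (2 * n) := pow_le_pow_of_le_one hr.1 hr.2 (by omega)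
    have h3 : 0 ≤ r ^ (2 * n + 2) := pow_nonneg hr.1 _
    rw [abs_le]
    constructor <;> linarith
  have hFc : ContinuousOn (fun r => ∑' n, G n r) (Icc 0 1) :=
    continuousOn_tsum (fun n => (hGc n).continuousOn) hd hbd
  have hFn : ∀ r ∈ Ioc (0 : ℝ) 1, 0 ≤ ∑' n, G n r := by
    intro r hr
    rcases hr.2.eq_or_lt with h1 | h1
    · simp [hG, h1]
    · have e : (fun n => G n r) = fun n => ((1 - r ^ 2) / r ^ 2) * (d n * r ^ (2 * (n + 1))) := by
        funext n
        have := hr.1.ne'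
        simp only [hG]
        field_simp
        ring
      rw [e, tsum_mul_left]
      refine mul_nonneg (div_nonneg ?_ (sq_nonneg r)) (h r hr.1 h1)
      nlinarith [hr.1]
  have hintg : ∀ n, ∫ r in (0 : ℝ)..1, G n r =
      d n * (1 / (2 * (n : ℝ) + 1) - 1 / (2 * (n : ℝ) + 3)) := by
    intro n
    simp only [hG]
    rw [intervalIntegral.integral_const_mul, intervalIntegral.integral_sub
      ((by fun_prop : Continuous fun r : ℝ => r ^ (2 * n)).intervalIntegrable _ _)
      ((by fun_prop : Continuous fun r : ℝ => r ^ (2 * n + 2)).intervalIntegrable _ _),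
      integral_pow, integral_pow]
    push_cast
    simp
    left
    ring
  have hsum : HasSum (fun n : ℕ => d n * (1 / (2 * (n : ℝ) + 1) - 1 / (2 * (n : ℝ) + 3)))
      (∫ r in (0 : ℝ)..1, ∑' n, G n r) := by
    simp_rw [← hintg]
    refine intervalIntegral.hasSum_integral_of_dominated_convergence (fun n _ => |d n|)
      (fun n => (hGc n).aestronglyMeasurable) (fun n => ?_) ?_ ?_ ?_
    · refine Eventually.of_forall fun r hr => hbd n r ?_
      rw [uIoc_of_le zero_le_one] at hr
      exact Ioc_subset_Icc_self hr
    · exact Eventually.of_forall fun r _ => hd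
    · simp
    · refine Eventually.of_forall fun r hr => ?_
      rw [uIoc_of_le zero_le_one] at hr
      exact (Summable.of_norm_bounded hd fun n => hbd n r (Ioc_subset_Icc_self hr)).hasSum
  refine ⟨hsum.summable, ?_, ?_⟩
  · rw [hsum.tsum_eq]
    rw [intervalIntegral.integral_of_le zero_le_one]
    exact setIntegral_nonneg measurableSet_Ioc hFn
  · rw [hsum.tsum_eq]
    intro h0
    by_contra hcon
    push Not at hcon
    have hpos := intervalIntegral.integral_pos zero_lt_one hFc hFn ⟨0, by simp, ?_⟩
    · linarith
    · rw [tsum_eq_single 0]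
      · simpa [hG] using hcon
      · intro n hn
        simp [hG, hn]

/-- With `bₙ = 1 / n²`, the weight is `n² / (4 n² - 1) = ¼ + ¼ / (4 n² - 1)` and
`∑ n² / (4 n² - 1) bₙ = ½`. -/
lemma weighted_sum_le (ha : ∀ n, 0 ≤ a n)
    (h : ∀ r : ℝ, 0 < r → r < 1 → Summable (fun n => a n * r ^ (2 * (n + 1))) ∧
      Summable (fun n : ℕ => 1 / ((n : ℝ) + 1) ^ 2 * r ^ (2 * (n + 1))) ∧
      ∑' n, a n * r ^ (2 * (n + 1)) ≤ ∑' n : ℕ, 1 / ((n : ℝ) + 1) ^ 2 * r ^ (2 * (n + 1))) :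
    (∑' n : ℕ, (((n : ℝ) + 1) ^ 2 / (4 * ((n : ℝ) + 1) ^ 2 - 1)) * a n ≤ 1 / 2) ∧
    (∑' n : ℕ, (((n : ℝ) + 1) ^ 2 / (4 * ((n : ℝ) + 1) ^ 2 - 1)) * a n = 1 / 2 → 1 ≤ a 0) := by
  obtain ⟨hs, hle⟩ := summable_of_radius ha (fun n => by positivity) summable_inv_sq h
  set d : ℕ → ℝ := fun n => 1 / ((n : ℝ) + 1) ^ 2 - a n with hd
  have hds : Summable d := summable_inv_sq.sub hs
  have hd0 : 0 ≤ ∑' n, d n := by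
    rw [hd, summable_inv_sq.tsum_sub hs]; linarith
  obtain ⟨k1, k2, k3⟩ := weighted_nonneg hds.abs fun r hr0 hr => by
    obtain ⟨h1, h2, h3⟩ := h r hr0 hr
    simp only [hd, sub_mul]
    rw [h2.tsum_sub h1]
    linarith
  have e : (fun n : ℕ => (((n : ℝ) + 1) ^ 2 / (4 * ((n : ℝ) + 1) ^ 2 - 1)) * a n) =
      fun n : ℕ => 1 / 2 * (1 / (2 * (n : ℝ) + 1) - 1 / (2 * (n : ℝ) + 3)) -
        (1 / 4 * d n + 1 / 8 * (d n * (1 / (2 * (n : ℝ) + 1) - 1 / (2 * (n : ℝ) + 3)))) := by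
    funext n
    have h1 : (2 * (n : ℝ) + 1) ≠ 0 := by positivity
    have h2 : (2 * (n : ℝ) + 3) ≠ 0 := by positivity
    have h3 : ((n : ℝ) + 1) ≠ 0 := by positivity
    have h4 : 4 * ((n : ℝ) + 1) ^ 2 - 1 = (2 * n + 1) * (2 * n + 3) := by ring
    rw [h4]
    simp only [hd]
    field_simp
    ring
  have hsum := (hasSum_telescope.mul_left (1 / 2)).sub
    ((hds.hasSum.mul_left (1 / 4)).add (k1.hasSum.mul_left (1 / 8)))
  rw [← e] at hsum
  rw [hsum.tsum_eq]
  refine ⟨by linarith, fun heq => ?_⟩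
  have := k3 (by linarith)
  simp only [hd] at this
  norm_num at this
  exact this

end Summation

/-! ### The area theorem -/

lemma det_real_linear (T : ℂ →ₗ[ℝ] ℂ) (a b : ℂ) (h : ∀ w, T w = a * w + b * conj w) :
    LinearMap.det T = ‖a‖ ^ 2 - ‖b‖ ^ 2 := by
  rw [← LinearMap.det_toMatrix Complex.basisOneI, Matrix.det_fin_two]
  simp only [LinearMap.toMatrix_apply, h, Complex.coe_basisOneI, Complex.coe_basisOneI_repr]
  rw [← Complex.normSq_eq_norm_sq, ← Complex.normSq_eq_norm_sq, Complex.normSq_apply,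
    Complex.normSq_apply]
  simp
  ring

/-- Polar coordinates on an annulus, with a lower bound for the circle averages. -/
lemma lintegral_annulus_ge {F : ℂ → ℝ} {δ r : ℝ} (hδ : 0 < δ)
    (hF : ContinuousOn F {z | δ < ‖z‖ ∧ ‖z‖ < r}) (hF0 : ∀ z, 0 ≤ F z) {m : ℝ → ℝ}
    (hm : ContinuousOn m (Icc δ r)) (hm0 : ∀ ρ ∈ Icc δ r, 0 ≤ m ρ)
    (hle : ∀ ρ ∈ Ioo δ r, m ρ ≤ circleAverage F 0 ρ) :
    ENNReal.ofReal (∫ ρ in Ioo δ r, 2 * π * (ρ * m ρ)) ≤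
      ∫⁻ z in {z | δ < ‖z‖ ∧ ‖z‖ < r}, ENNReal.ofReal (F z) := by
  set A : Set ℂ := {z | δ < ‖z‖ ∧ ‖z‖ < r} with hA
  have hAo : IsOpen A := (isOpen_lt continuous_const continuous_norm).inter
    (isOpen_lt continuous_norm continuous_const)
  set G : ℂ → ENNReal := A.indicator fun z => ENNReal.ofReal (F z) with hG
  have hGm : Measurable G := by
    classical
    rw [hG, ← Set.piecewise_eq_indicator]
    exact ContinuousOn.measurable_piecewise (ENNReal.continuous_ofReal.comp_continuousOn hF)
      continuousOn_const hAo.measurableSet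
  have hsymm : ∀ p : ℝ × ℝ, Complex.polarCoord.symm p = circleMap 0 p.1 p.2 := by
    intro p
    rw [Complex.polarCoord_symm_apply, circleMap, zero_add, Complex.exp_mul_I]
    simp
  rw [← lintegral_indicator hAo.measurableSet, ← hG, ← Complex.lintegral_comp_polarCoord_symm,
    polarCoord_target, Measure.volume_eq_prod, ← Measure.prod_restrict,
    lintegral_prod]
  swap
  · refine Measurable.aemeasurable ?_
    simp only [hsymm, smul_eq_mul]
    refine Measurable.mul (by fun_prop) (hGm.comp ?_)
    exact (by unfold circleMap; fun_prop :
      Continuous fun p : ℝ × ℝ => circleMap 0 p.1 p.2).measurable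
  refine le_trans ?_ (lintegral_mono_set (s := Ioo δ r) fun ρ hρ => hδ.trans hρ.1)
  rw [ofReal_integral_eq_lintegral_ofReal]
  · refine setLIntegral_mono' measurableSet_Ioo fun ρ hρ => ?_
    have hρ0 : 0 < ρ := hδ.trans hρ.1
    have hmem : ∀ θ, circleMap 0 ρ θ ∈ A := fun θ => by
      simpa [hA, abs_of_pos hρ0] using hρ
    have hcont : Continuous fun θ => F (circleMap 0 ρ θ) :=
      hF.comp_continuous (continuous_circleMap 0 ρ) hmem
    have e : ∫⁻ θ in Ioo (-π) π, ENNReal.ofReal ρ • G (Complex.polarCoord.symm (ρ, θ)) =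
        ENNReal.ofReal (2 * π * (ρ * circleAverage F 0 ρ)) := by
      have e1 : ∀ θ, ENNReal.ofReal ρ • G (Complex.polarCoord.symm (ρ, θ)) =
          ENNReal.ofReal (ρ * F (circleMap 0 ρ θ)) := by
        intro θ
        rw [hsymm, hG, indicator_of_mem (hmem θ), smul_eq_mul, ENNReal.ofReal_mul hρ0.le]
      simp only [e1]
      rw [← ofReal_integral_eq_lintegral_ofReal]
      · congr 1
        rw [← integral_Ioc_eq_integral_Ioo, ← intervalIntegral.integral_of_le (by linarith [pi_pos]),
          intervalIntegral.integral_const_mul, circleAverage_def, smul_eq_mul]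
        have hper : Function.Periodic (fun θ => F (circleMap 0 ρ θ)) (2 * π) :=
          fun θ => by simp only [periodic_circleMap 0 ρ θ]
        have := hper.intervalIntegral_add_eq (-π) 0
        rw [zero_add, show -π + 2 * π = π by ring] at this
        rw [this]
        have := pi_pos.ne'
        field_simp
      · exact ((continuous_const.mul hcont).integrableOn_Icc).mono_set
          Ioo_subset_Icc_self
      · exact Eventually.of_forall fun θ => mul_nonneg hρ0.le (hF0 _)
    rw [e]
    apply ENNReal.ofReal_le_ofReal
    have := hle ρ hρ
    have := pi_pos
    gcongr
  · exact ((ContinuousOn.mul continuousOn_const (continuousOn_id.mul hm)).integrableOn_Icc).mono_set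
      Ioo_subset_Icc_self
  · refine (ae_restrict_iff' measurableSet_Ioo).2 (Eventually.of_forall fun ρ hρ => ?_)
    have := hm0 ρ (Ioo_subset_Icc_self hρ)
    have := hδ.trans hρ.1
    have := pi_pos
    show (0 : ℝ) ≤ _
    positivity

/-- Each image point `h z₀` with `|z₀| > δ` is radially separated from `0` by the curve
`h (|z| = δ)`. -/
lemma exists_radial {h : ℂ → ℂ} (hh : InClassS h) {δ : ℝ} (hδ : 0 < δ) (hδ1 : δ < 1) {z₀ : ℂ}
    (hz : z₀ ∈ ball (0 : ℂ) 1) (hz₀ : δ < ‖z₀‖) :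
    ∃ s : ℝ, 0 ≤ s ∧ s ≤ 1 ∧ ∃ z₁ ∈ sphere (0 : ℂ) δ, h z₁ = s * h z₀ := by
  by_contra hcon
  push Not at hcon
  have hsub : closedBall (0 : ℂ) δ ⊆ ball 0 1 := closedBall_subset_ball hδ1
  have hU : IsOpen (h '' ball 0 δ) :=
    isOpen_image hh (ball_subset_closedBall.trans hsub) isOpen_ball
  have hV : IsOpen (h '' closedBall 0 δ)ᶜ :=
    ((isCompact_closedBall 0 δ).image_of_continuousOn
      (hh.1.continuousOn.mono hsub)).isClosed.isOpen_compl
  have hS : IsPreconnected ((fun s : ℝ => (s : ℂ) * h z₀) '' Icc 0 1) :=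
    isPreconnected_Icc.image _ (by fun_prop)
  have hcov : (fun s : ℝ => (s : ℂ) * h z₀) '' Icc 0 1 ⊆ h '' ball 0 δ ∪ (h '' closedBall 0 δ)ᶜ := by
    rintro _ ⟨s, hs, rfl⟩
    by_cases hmem : (s : ℂ) * h z₀ ∈ h '' closedBall 0 δ
    · left
      obtain ⟨z, hz, hzs⟩ := hmem
      refine ⟨z, ?_, hzs⟩
      rw [mem_closedBall_zero_iff] at hz
      rcases hz.eq_or_lt with h1 | h1
      · exact absurd hzs (hcon s hs.1 hs.2 z (mem_sphere_zero_iff_norm.2 h1))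
      · exact mem_ball_zero_iff.2 h1
    · right; exact hmem
  have hout : h z₀ ∉ h '' closedBall 0 δ := by
    rintro ⟨z, hz', he⟩
    have := hh.2.1 (hsub hz') hz he
    rw [this, mem_closedBall_zero_iff] at hz'
    linarith
  obtain ⟨x, -, hxU, hxV⟩ := hS _ _ hU hV hcov
    ⟨0, ⟨0, by simp, by simp⟩, ⟨0, by simpa using hδ, hh.2.2.1⟩⟩
    ⟨h z₀, ⟨1, by simp, by simp⟩, hout⟩
  exact hxV (image_mono ball_subset_closedBall hxU)

/-- The `k`-th Taylor coefficient of `p` at `0`. -/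
noncomputable def coeff (p : ℂ → ℂ) (k : ℕ) : ℂ := (k.factorial : ℂ)⁻¹ * iteratedDeriv k p 0

lemma hasSum_coeff {p : ℂ → ℂ} (hp : AnalyticOnNhd ℂ p (ball 0 1)) {z : ℂ}
    (hz : z ∈ ball (0 : ℂ) 1) : HasSum (fun k => coeff p k * z ^ k) (p z) := by
  have := Complex.hasSum_taylorSeries_on_ball hp.differentiableOn hz
  have e : (fun k => coeff p k * z ^ k) =
      fun n : ℕ => (n.factorial : ℂ)⁻¹ • (z - 0) ^ n • iteratedDeriv n p 0 := by
    funext k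
    simp only [coeff, smul_eq_mul, sub_zero]
    ring
  rw [e]
  exact this

lemma hasSum_coeff_deriv {p : ℂ → ℂ} (hp : AnalyticOnNhd ℂ p (ball 0 1)) {z : ℂ}
    (hz : z ∈ ball (0 : ℂ) 1) :
    HasSum (fun k : ℕ => ((1 - k) * coeff p k) * z ^ k) (p z - z * deriv p z) := by
  have h1 := (hasSum_coeff hp.deriv hz).mul_left z
  have h2 : HasSum (fun k : ℕ => (k * coeff p k) * z ^ k) (z * deriv p z) := by
    have h3 := (hasSum_nat_add_iff (f := fun k : ℕ => (k * coeff p k) * z ^ k) 1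
      (g := z * deriv p z)).1 ?_
    · simpa using h3
    · have e : (fun k : ℕ => ((k + 1 : ℕ) * coeff p (k + 1)) * z ^ (k + 1)) =
          fun k => z * (coeff (deriv p) k * z ^ k) := by
        funext k
        simp only [coeff]
        rw [iteratedDeriv_succ', Nat.factorial_succ]
        have : ((k + 1 : ℕ) : ℂ) ≠ 0 := by exact_mod_cast k.succ_ne_zero
        have : (k.factorial : ℂ) ≠ 0 := by exact_mod_cast k.factorial_ne_zero
        rw [Nat.cast_mul]
        field_simp
        ring
      rw [e]
      exact h1
  have h4 := (hasSum_coeff hp hz).sub h2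
  have e : (fun k : ℕ => ((1 - k) * coeff p k) * z ^ k) =
      fun k : ℕ => coeff p k * z ^ k - (k * coeff p k) * z ^ k := by
    funext k; ring
  rw [e]
  exact h4

lemma coeff_remainder {p : ℂ → ℂ} (hp : AnalyticOnNhd ℂ p (ball 0 1)) (c0 : coeff p 0 = 1)
    (c1 : coeff p 1 = 0) :
    ∃ C : ℝ, 0 ≤ C ∧ ∀ z : ℂ, ‖z‖ ≤ 1 / 2 → ‖p z - 1 - coeff p 2 * z ^ 2‖ ≤ C * ‖z‖ ^ 3 := by
  have hsum : Summable fun k => ‖coeff p (k + 3)‖ * (1 / 2 : ℝ) ^ k := by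
    have h1 := (hasSum_coeff hp (z := (1 / 2 : ℂ)) (by norm_num)).summable.norm
    have h2 := ((summable_nat_add_iff 3).2 h1).mul_left 8
    refine h2.congr fun k => ?_
    simp [pow_succ]
    ring
  refine ⟨∑' k, ‖coeff p (k + 3)‖ * (1 / 2 : ℝ) ^ k, tsum_nonneg fun k => by positivity,
    fun z hz => ?_⟩
  have h1 := (hasSum_nat_add_iff' 3).2
    (hasSum_coeff hp (z := z) (by rw [mem_ball_zero_iff]; linarith))
  simp only [Finset.sum_range_succ, Finset.range_zero, Finset.sum_empty, c0, c1] at h1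
  have e : p z - 1 - coeff p 2 * z ^ 2 =
      p z - (0 + 1 * z ^ 0 + 0 * z ^ 1 + coeff p 2 * z ^ 2) := by ring
  rw [e, ← h1.tsum_eq, ← tsum_mul_right]
  refine tsum_of_norm_bounded (hsum.mul_right _).hasSum fun k => ?_
  rw [norm_mul, norm_pow, pow_add, ← mul_assoc]
  gcongr

/-- The image of `δ < |z| < 1` under `1 / h = p / z = 1 / z + c₂ z + O(z²)` lies in an ellipse close
to the disk of radius `1 / δ`: on `|z| = δ` one has `c₂ z = c₂ δ² conj (1 / z)`, so that the real
linear map `w ↦ w - c₂ δ² conj w` undoes the term `c₂ z`. -/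
lemma ellipse_bound {h p : ℂ → ℂ} (hh : InClassS h) (hp : AnalyticOnNhd ℂ p (ball 0 1))
    (hhp : ∀ z ∈ ball (0 : ℂ) 1, h z * p z = z) (c0 : coeff p 0 = 1) (c1 : coeff p 1 = 0) :
    ∃ C : ℝ, 0 ≤ C ∧ ∀ δ : ℝ, 0 < δ → δ ≤ 1 / 2 → ∀ z ∈ ball (0 : ℂ) 1, δ < ‖z‖ →
      ‖p z / z - coeff p 2 * δ ^ 2 * conj (p z / z)‖ ≤ 1 / δ + C * δ ^ 2 := by
  obtain ⟨C, hC, hrem⟩ := coeff_remainder hp c0 c1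
  set b := coeff p 2 with hb
  refine ⟨C + ‖b‖ * (‖b‖ + C), by positivity, fun δ hδ hδ2 z hz hzδ => ?_⟩
  obtain ⟨s, hs0, hs1, z₁, hz₁, hs⟩ := exists_radial hh hδ (by linarith) hz hzδ
  have hn : ‖z₁‖ = δ := mem_sphere_zero_iff_norm.1 hz₁
  have hz₁b : z₁ ∈ ball (0 : ℂ) 1 := by rw [mem_ball_zero_iff]; linarith
  have hz₁0 : z₁ ≠ 0 := by rw [← norm_pos_iff]; linarith
  have hz0 : z ≠ 0 := by rw [← norm_pos_iff]; linarith
  -- `1 / h z = s / h z₁`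
  have e1 : p z / z = s * (p z₁ / z₁) := by
    have k1 := hhp z hz
    have k2 := hhp z₁ hz₁b
    have k3 : h z ≠ 0 := fun h0 => hz0 (by rw [← k1, h0, zero_mul])
    rw [div_eq_iff hz0, mul_div_assoc', div_mul_eq_mul_div, eq_div_iff hz₁0]
    apply mul_left_cancel₀ k3
    calc h z * (p z * z₁) = (h z * p z) * z₁ := by ring
      _ = z * (h z₁ * p z₁) := by rw [k1, k2]
      _ = h z * (s * p z₁ * z) := by rw [hs]; ring
  have e2 : p z / z - b * δ ^ 2 * conj (p z / z) =
      s * (p z₁ / z₁ - b * δ ^ 2 * conj (p z₁ / z₁)) := by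
    rw [e1, map_mul, Complex.conj_ofReal]; ring
  set E := p z₁ - 1 - b * z₁ ^ 2 with hE
  have hEn : ‖E‖ ≤ C * δ ^ 3 := by have := hrem z₁ (by linarith); rwa [hn] at this
  have e3 : p z₁ / z₁ = z₁⁻¹ + (b * z₁ + E / z₁) := by
    have : p z₁ = 1 + b * z₁ ^ 2 + E := by rw [hE]; ring
    rw [this]; field_simp; ring
  have e4 : (δ : ℂ) ^ 2 * conj z₁⁻¹ = z₁ := by
    have : (δ : ℂ) ^ 2 = z₁ * conj z₁ := by rw [Complex.mul_conj, Complex.normSq_eq_norm_sq, hn]; simp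
    rw [this, map_inv₀, mul_assoc, mul_inv_cancel₀, mul_one]
    simpa using hz₁0
  have hEz : ‖E / z₁‖ ≤ C * δ ^ 2 := by
    rw [norm_div, hn, div_le_iff₀ hδ]
    calc ‖E‖ ≤ C * δ ^ 3 := hEn
      _ = _ := by ring
  have e5 : p z₁ / z₁ - b * δ ^ 2 * conj (p z₁ / z₁) =
      z₁⁻¹ + E / z₁ - b * δ ^ 2 * conj (b * z₁ + E / z₁) := by
    rw [e3, map_add]
    linear_combination (-b) * e4
  have h6 : ‖b * z₁ + E / z₁‖ ≤ ‖b‖ + C := by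
    refine (norm_add_le _ _).trans (add_le_add ?_ (hEz.trans ?_))
    · rw [norm_mul, hn]; exact mul_le_of_le_one_right (norm_nonneg _) (by linarith)
    · exact mul_le_of_le_one_right hC (pow_le_one₀ hδ.le (by linarith))
  rw [e2, norm_mul, Complex.norm_real, Real.norm_of_nonneg hs0]
  refine (mul_le_of_le_one_left (norm_nonneg _) hs1).trans ?_
  rw [e5]
  calc ‖z₁⁻¹ + E / z₁ - b * δ ^ 2 * conj (b * z₁ + E / z₁)‖
      ≤ ‖z₁⁻¹‖ + ‖E / z₁‖ + ‖b * δ ^ 2 * conj (b * z₁ + E / z₁)‖ :=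
        (norm_sub_le _ _).trans (add_le_add_left (norm_add_le _ _) _)
    _ ≤ 1 / δ + C * δ ^ 2 + ‖b‖ * δ ^ 2 * (‖b‖ + C) := by
        rw [norm_inv, hn, one_div, norm_mul, norm_mul, RCLike.norm_conj, norm_pow,
          Complex.norm_real, Real.norm_of_nonneg hδ.le]
        gcongr
    _ = _ := by ring

/-- Three terms of Parseval's identity for `(p/z)' = -(p - z p') / z²`. -/
lemma circleAverage_ge {p : ℂ → ℂ} (hp : AnalyticOnNhd ℂ p (ball 0 1)) (c0 : coeff p 0 = 1)
    (k : ℕ) {ρ : ℝ} (hρ0 : 0 < ρ) (hρ : ρ < 1) :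
    (ρ ^ 4)⁻¹ + ‖coeff p 2‖ ^ 2 + ((k : ℝ) + 2) ^ 2 * ‖coeff p (k + 3)‖ ^ 2 * ρ ^ (2 * k + 2) ≤
      circleAverage (fun z => ‖p z - z * deriv p z‖ ^ 2 / ‖z‖ ^ 4) 0 ρ := by
  have h1 := hasSum_parseval (fun z hz => hasSum_coeff_deriv hp hz) hρ0 hρ
  have h2 := sum_le_hasSum ({0, 2, k + 3} : Finset ℕ) (fun n _ => by positivity) h1
  rw [Finset.sum_insert (by simp), Finset.sum_insert (by simp), Finset.sum_singleton, c0] at h2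
  have e : circleAverage (fun z => ‖p z - z * deriv p z‖ ^ 2 / ‖z‖ ^ 4) 0 ρ =
      (ρ ^ 4)⁻¹ * circleAverage (fun z => ‖p z - z * deriv p z‖ ^ 2) 0 ρ := by
    rw [← smul_eq_mul, ← circleAverage_fun_smul]
    refine circleAverage_congr_sphere fun z hz => ?_
    rw [mem_sphere_zero_iff_norm, abs_of_pos hρ0] at hz
    simp only [smul_eq_mul, hz]
    ring
  rw [e]
  refine le_trans (le_of_eq ?_) (mul_le_mul_of_nonneg_left h2 (by positivity))
  have n1 : ‖(1 - ((0 : ℕ) : ℂ)) * 1‖ = 1 := by simp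
  have n2 : ‖(1 - ((2 : ℕ) : ℂ)) * coeff p 2‖ = ‖coeff p 2‖ := by
    rw [norm_mul, show (1 - ((2 : ℕ) : ℂ)) = -1 by norm_num, norm_neg, norm_one, one_mul]
  have n3 : ‖(1 - ((k + 3 : ℕ) : ℂ)) * coeff p (k + 3)‖ = (k + 2) * ‖coeff p (k + 3)‖ := by
    rw [norm_mul, show (1 - ((k + 3 : ℕ) : ℂ)) = -((k + 2 : ℕ) : ℂ) by push_cast; ring, norm_neg,
      Complex.norm_natCast]
    push_cast; ring
  rw [n1, n2, n3]
  field_simp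
  ring

lemma integral_minorant (B D : ℝ) (k : ℕ) {δ r : ℝ} (hδ : 0 < δ) (hδr : δ ≤ r) :
    ∫ ρ in Ioo δ r, 2 * π * (ρ * ((ρ ^ 4)⁻¹ + B + ((k : ℝ) + 2) ^ 2 * D * ρ ^ (2 * k + 2))) =
      π * ((δ ^ 2)⁻¹ - (r ^ 2)⁻¹ + B * (r ^ 2 - δ ^ 2) +
        (k + 2) * D * (r ^ (2 * k + 4) - δ ^ (2 * k + 4))) := by
  have hpos : ∀ ρ ∈ uIcc δ r, 0 < ρ := fun ρ hρ => by
    rw [uIcc_of_le hδr] at hρ; exact hδ.trans_le hρ.1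
  rw [← integral_Ioc_eq_integral_Ioo, ← intervalIntegral.integral_of_le hδr,
    intervalIntegral.integral_eq_sub_of_hasDerivAt
      (f := fun ρ : ℝ => π * (-(ρ ^ 2)⁻¹ + B * ρ ^ 2 + (k + 2) * D * ρ ^ (2 * k + 4)))]
  · ring
  · intro ρ hρ
    have h0 := (hpos ρ hρ).ne'
    have h1 := ((hasDerivAt_pow 2 ρ).inv (pow_ne_zero 2 h0)).neg
    have h2 := (hasDerivAt_pow 2 ρ).const_mul B
    have h3 := (hasDerivAt_pow (2 * k + 4) ρ).const_mul ((k + 2) * D)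
    have h4 := ((h1.add h2).add h3).const_mul π
    refine h4.congr_deriv ?_
    have : 2 * k + 4 - 1 = 2 * k + 3 := by omega
    rw [this]
    push_cast
    field_simp
    ring
  · refine ContinuousOn.intervalIntegrable ?_
    have : ContinuousOn (fun ρ : ℝ => (ρ ^ 4)⁻¹) (uIcc δ r) :=
      ContinuousOn.inv₀ (by fun_prop) fun ρ hρ => pow_ne_zero 4 (hpos ρ hρ).ne'
    fun_prop

/-- Comparison of the area of the image of `δ < |z| < r` under `p / z` with that of the ellipse
containing it. -/
lemma area_ineq {h p : ℂ → ℂ} (hh : InClassS h) (hp : AnalyticOnNhd ℂ p (ball 0 1))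
    (hhp : ∀ z ∈ ball (0 : ℂ) 1, h z * p z = z) (c0 : coeff p 0 = 1) (k : ℕ) {C δ r : ℝ}
    (hC : 0 ≤ C) (hδ : 0 < δ) (hδr : δ < r) (hr : r < 1) (hb : ‖coeff p 2‖ * δ ^ 2 < 1)
    (hell : ∀ z ∈ ball (0 : ℂ) 1, δ < ‖z‖ →
      ‖p z / z - coeff p 2 * δ ^ 2 * conj (p z / z)‖ ≤ 1 / δ + C * δ ^ 2) :
    (1 - (‖coeff p 2‖ * δ ^ 2) ^ 2) * ((δ ^ 2)⁻¹ - (r ^ 2)⁻¹ + ‖coeff p 2‖ ^ 2 * (r ^ 2 - δ ^ 2) +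
        (k + 2) * ‖coeff p (k + 3)‖ ^ 2 * (r ^ (2 * k + 4) - δ ^ (2 * k + 4))) ≤
      (1 / δ + C * δ ^ 2) ^ 2 := by
  set b := coeff p 2 with hbdef
  set A : Set ℂ := {z | δ < ‖z‖ ∧ ‖z‖ < r} with hA
  have hAo : IsOpen A := (isOpen_lt continuous_const continuous_norm).inter
    (isOpen_lt continuous_norm continuous_const)
  have hAb : A ⊆ ball 0 1 := fun z hz => by
    rw [mem_ball_zero_iff]; exact hz.2.trans hr
  have hA0 : ∀ z ∈ A, z ≠ 0 := fun z hz => by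
    rw [← norm_pos_iff]; exact hδ.trans hz.1
  set φ : ℂ → ℂ := fun z => p z / z with hφ
  have hφinj : InjOn φ A := by
    intro z hz w hw hzw
    have k1 := hhp z (hAb hz)
    have k2 := hhp w (hAb hw)
    have k3 := hA0 z hz
    have k4 := hA0 w hw
    refine hh.2.1 (hAb hz) (hAb hw) ?_
    have pz : p z ≠ 0 := fun h0 => k3 (by rw [← k1, h0, mul_zero])
    have pw : p w ≠ 0 := fun h0 => k4 (by rw [← k2, h0, mul_zero])
    simp only [hφ] at hzw
    rw [div_eq_div_iff k3 k4] at hzw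
    apply mul_right_cancel₀ (mul_ne_zero pz pw)
    calc h z * (p z * p w) = (h z * p z) * p w := by ring
      _ = p z * w := by rw [k1, hzw]; ring
      _ = p z * (h w * p w) := by rw [k2]
      _ = h w * (p z * p w) := by ring
  have hderiv : ∀ z ∈ A, HasDerivAt φ (-(p z - z * deriv p z) / z ^ 2) z := by
    intro z hz
    have := (hp z (hAb hz)).differentiableAt.hasDerivAt.div (hasDerivAt_id z) (hA0 z hz)
    refine this.congr_deriv ?_
    simp only [id]
    ring
  have harea : ∫⁻ z in A, ENNReal.ofReal (‖p z - z * deriv p z‖ ^ 2 / ‖z‖ ^ 4) =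
      volume (φ '' A) := by
    rw [← lintegral_abs_det_fderiv_eq_addHaar_image volume hAo.measurableSet
      (fun z hz => (hderiv z hz).complexToReal_fderiv.hasFDerivWithinAt) hφinj]
    refine setLIntegral_congr_fun hAo.measurableSet fun z hz => ?_
    congr 1
    rw [ContinuousLinearMap.det, det_real_linear _ (-(p z - z * deriv p z) / z ^ 2) 0
      (fun w => by simp), norm_zero, norm_div, norm_neg, norm_pow]
    rw [div_pow, zero_pow two_ne_zero, sub_zero, abs_of_nonneg (by positivity), ← pow_mul]
  -- the real linear map of `ellipse_bound`
  set T : ℂ →ₗ[ℝ] ℂ := LinearMap.id - (LinearMap.mulLeft ℝ (b * δ ^ 2)) ∘ₗ conjAe.toLinearMap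
    with hT
  have hTa : ∀ w, T w = w - b * δ ^ 2 * conj w := fun w => by simp [hT, mul_assoc]
  have hdet : LinearMap.det T = 1 - (‖b‖ * δ ^ 2) ^ 2 := by
    rw [det_real_linear T 1 (-(b * δ ^ 2)) (fun w => by rw [hTa]; ring)]
    simp [abs_of_pos hδ]
  have hdet0 : 0 < 1 - (‖b‖ * δ ^ 2) ^ 2 := by
    have : (‖b‖ * δ ^ 2) ^ 2 < 1 := pow_lt_one₀ (by positivity) hb two_ne_zero
    linarith
  have hvol : ENNReal.ofReal (1 - (‖b‖ * δ ^ 2) ^ 2) * volume (φ '' A) ≤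
      ENNReal.ofReal (π * (1 / δ + C * δ ^ 2) ^ 2) := by
    have h1 := Measure.addHaar_image_linearMap (volume : Measure ℂ) T (φ '' A)
    rw [hdet, abs_of_pos hdet0] at h1
    rw [← h1]
    have h2 : T '' (φ '' A) ⊆ closedBall 0 (1 / δ + C * δ ^ 2) := by
      rintro _ ⟨_, ⟨z, hz, rfl⟩, rfl⟩
      rw [mem_closedBall_zero_iff, hTa]
      exact hell z (hAb hz) hz.1
    refine (measure_mono h2).trans (le_of_eq ?_)
    have hR : 0 ≤ 1 / δ + C * δ ^ 2 := by positivity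
    rw [Complex.volume_closedBall, mul_comm π, ENNReal.ofReal_mul (by positivity),
      ENNReal.ofReal_pow hR]
    congr 1
    rw [← NNReal.coe_real_pi, ENNReal.ofReal_coe_nnreal]
  have hlow := lintegral_annulus_ge (F := fun z => ‖p z - z * deriv p z‖ ^ 2 / ‖z‖ ^ 4) (r := r) hδ
    (m := fun ρ => (ρ ^ 4)⁻¹ + ‖b‖ ^ 2 + ((k : ℝ) + 2) ^ 2 * ‖coeff p (k + 3)‖ ^ 2 * ρ ^ (2 * k + 2))
    ?_ (fun z => by positivity) ?_ ?_
    (fun ρ hρ => circleAverage_ge hp c0 k (hδ.trans hρ.1) (hρ.2.trans hr))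
  · rw [integral_minorant _ _ k hδ hδr.le, harea] at hlow
    have h1 := (mul_le_mul_right hlow (ENNReal.ofReal (1 - (‖b‖ * δ ^ 2) ^ 2))).trans hvol
    rw [← ENNReal.ofReal_mul hdet0.le, ENNReal.ofReal_le_ofReal_iff (by positivity)] at h1
    have h2 : π * ((1 - (‖b‖ * δ ^ 2) ^ 2) * ((δ ^ 2)⁻¹ - (r ^ 2)⁻¹ + ‖b‖ ^ 2 * (r ^ 2 - δ ^ 2) +
        (k + 2) * ‖coeff p (k + 3)‖ ^ 2 * (r ^ (2 * k + 4) - δ ^ (2 * k + 4)))) ≤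
        π * (1 / δ + C * δ ^ 2) ^ 2 := by
      refine le_trans (le_of_eq ?_) h1
      ring
    exact le_of_mul_le_mul_left h2 pi_pos
  · have h1 : ContinuousOn p A := hp.continuousOn.mono hAb
    have h2 : ContinuousOn (deriv p) A := hp.deriv.continuousOn.mono hAb
    refine ContinuousOn.div (by fun_prop) (by fun_prop) fun z hz => ?_
    exact pow_ne_zero 4 (norm_ne_zero_iff.2 (hA0 z hz))
  · have : ContinuousOn (fun ρ : ℝ => (ρ ^ 4)⁻¹) (Icc δ r) :=
      ContinuousOn.inv₀ (by fun_prop) fun ρ hρ => pow_ne_zero 4 (hδ.trans_le hρ.1).ne'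
    fun_prop
  · intro ρ hρ
    have := hδ.trans_le hρ.1
    positivity

/-- Two terms of Gronwall's area theorem `∑ n |bₙ|² ≤ 1` for `1 / h = 1 / z + ∑ bₙ zⁿ`, where
`bₙ = coeff p (n + 1)`. -/
lemma area_theorem {h p : ℂ → ℂ} (hh : InClassS h) (hp : AnalyticOnNhd ℂ p (ball 0 1))
    (hhp : ∀ z ∈ ball (0 : ℂ) 1, h z * p z = z) (c0 : coeff p 0 = 1) (c1 : coeff p 1 = 0) (k : ℕ) :
    ‖coeff p 2‖ ^ 2 + (k + 2) * ‖coeff p (k + 3)‖ ^ 2 ≤ 1 := by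
  obtain ⟨C, hC, hell⟩ := ellipse_bound hh hp hhp c0 c1
  set b := coeff p 2 with hb
  set D := ‖coeff p (k + 3)‖ ^ 2 with hD
  have step : ∀ r ∈ Ioo (0 : ℝ) 1, -(r ^ 2)⁻¹ + ‖b‖ ^ 2 * r ^ 2 + (k + 2) * D * r ^ (2 * k + 4) ≤ 0 := by
    intro r hr
    have hev : ∀ᶠ δ : ℝ in 𝓝[>] 0,
        -(‖b‖ ^ 2 * δ ^ 2) + (1 - (‖b‖ * δ ^ 2) ^ 2) * (-(r ^ 2)⁻¹ + ‖b‖ ^ 2 * (r ^ 2 - δ ^ 2) +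
        (k + 2) * D * (r ^ (2 * k + 4) - δ ^ (2 * k + 4))) ≤ 2 * C * δ + C ^ 2 * δ ^ 4 := by
      have ev1 : ∀ᶠ δ : ℝ in 𝓝[>] 0, ‖b‖ * δ ^ 2 < 1 := by
        have hc : Continuous fun δ : ℝ => ‖b‖ * δ ^ 2 := by fun_prop
        have := (hc.tendsto 0).mono_left (nhdsWithin_le_nhds (s := Ioi 0))
        exact this.eventually_lt_const (by simp)
      filter_upwards [ev1, Ioo_mem_nhdsGT (by norm_num : (0 : ℝ) < 1 / 2),
        Ioo_mem_nhdsGT hr.1] with δ h1 h2 h3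
      have key := area_ineq hh hp hhp c0 k hC h2.1 h3.2 hr.2 h1 (hell δ h2.1 h2.2.le)
      have hδ := h2.1.ne'
      have e1 : (1 / δ + C * δ ^ 2) ^ 2 = (δ ^ 2)⁻¹ + (2 * C * δ + C ^ 2 * δ ^ 4) := by
        field_simp; ring
      have e2 : (1 - (‖b‖ * δ ^ 2) ^ 2) * (δ ^ 2)⁻¹ = (δ ^ 2)⁻¹ - ‖b‖ ^ 2 * δ ^ 2 := by
        field_simp
      rw [e1, ← hb, ← hD] at key
      linear_combination key - e2
    have hlim : Tendsto (fun δ : ℝ => -(‖b‖ ^ 2 * δ ^ 2) + (1 - (‖b‖ * δ ^ 2) ^ 2) *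
        (-(r ^ 2)⁻¹ + ‖b‖ ^ 2 * (r ^ 2 - δ ^ 2) +
        (k + 2) * D * (r ^ (2 * k + 4) - δ ^ (2 * k + 4)))) (𝓝[>] 0)
        (𝓝 (-(r ^ 2)⁻¹ + ‖b‖ ^ 2 * r ^ 2 + (k + 2) * D * r ^ (2 * k + 4))) := by
      have hc : Continuous fun δ : ℝ => -(‖b‖ ^ 2 * δ ^ 2) + (1 - (‖b‖ * δ ^ 2) ^ 2) *
        (-(r ^ 2)⁻¹ + ‖b‖ ^ 2 * (r ^ 2 - δ ^ 2) +
        (k + 2) * D * (r ^ (2 * k + 4) - δ ^ (2 * k + 4))) := by fun_prop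
      have := (hc.tendsto 0).mono_left (nhdsWithin_le_nhds (s := Ioi 0))
      simpa using this
    have hlim2 : Tendsto (fun δ : ℝ => 2 * C * δ + C ^ 2 * δ ^ 4) (𝓝[>] 0) (𝓝 0) := by
      have hc : Continuous fun δ : ℝ => 2 * C * δ + C ^ 2 * δ ^ 4 := by fun_prop
      have := (hc.tendsto 0).mono_left (nhdsWithin_le_nhds (s := Ioi 0))
      simpa using this
    exact le_of_tendsto_of_tendsto hlim hlim2 hev
  have hlim : Tendsto (fun r : ℝ => -(r ^ 2)⁻¹ + ‖b‖ ^ 2 * r ^ 2 + (k + 2) * D * r ^ (2 * k + 4))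
      (𝓝[<] 1) (𝓝 (-1 + ‖b‖ ^ 2 + (k + 2) * D)) := by
    have hc : ContinuousAt (fun r : ℝ => -(r ^ 2)⁻¹ + ‖b‖ ^ 2 * r ^ 2 +
        (k + 2) * D * r ^ (2 * k + 4)) 1 := by
      have : ContinuousAt (fun r : ℝ => (r ^ 2)⁻¹) 1 :=
        ContinuousAt.inv₀ (by fun_prop) (by norm_num)
      fun_prop
    have := hc.tendsto.mono_left (nhdsWithin_le_nhds (s := Iio 1))
    simpa using this
  have := le_of_tendsto hlim (by
    filter_upwards [Ioo_mem_nhdsLT (by norm_num : (0 : ℝ) < 1)] with r hr using step r hr)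
  linarith

/-! ### The equality case -/

section SquareRoot

variable {f g : ℂ → ℂ}

lemma sq_mem_ball {z : ℂ} (hz : z ∈ ball (0 : ℂ) 1) : z ^ 2 ∈ ball (0 : ℂ) 1 := by
  rw [mem_ball_zero_iff] at hz ⊢
  rw [norm_pow]
  exact pow_lt_one₀ (norm_nonneg _) hz two_ne_zero

lemma analyticOnNhd_comp_sq (hg : AnalyticOnNhd ℂ g (ball 0 1)) :
    AnalyticOnNhd ℂ (fun z => g (z ^ 2)) (ball 0 1) := fun _ hz =>
  AnalyticAt.fun_comp (hg _ (sq_mem_ball hz)) (analyticAt_id.pow 2)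

lemma eq_mul_exp (hf : InClassS f)
    (he : ∀ z ∈ ball (0 : ℂ) 1, z ≠ 0 → Complex.exp (g z) = f z / z) {z : ℂ}
    (hz : z ∈ ball (0 : ℂ) 1) : f z = z * Complex.exp (g z) := by
  rcases eq_or_ne z 0 with rfl | h0
  · rw [hf.2.2.1, zero_mul]
  · rw [he z hz h0, mul_div_cancel₀ _ h0]

/-- The odd square-root transform `√(f(z²))` of a function in `𝒮` is in `𝒮`. -/
lemma inClassS_sqrt (hf : InClassS f) (hg : AnalyticOnNhd ℂ g (ball 0 1)) (g0 : g 0 = 0)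
    (he : ∀ z ∈ ball (0 : ℂ) 1, z ≠ 0 → Complex.exp (g z) = f z / z) :
    InClassS fun z => z * Complex.exp (g (z ^ 2) / 2) := by
  have ha : AnalyticOnNhd ℂ (fun z => Complex.exp (g (z ^ 2) / 2)) (ball 0 1) := fun z hz =>
    ((analyticOnNhd_comp_sq hg z hz).div_const).cexp
  refine ⟨fun z hz => analyticAt_id.mul (ha z hz), ?_, by simp, ?_⟩
  · have hsq : ∀ z ∈ ball (0 : ℂ) 1, (z * Complex.exp (g (z ^ 2) / 2)) ^ 2 = f (z ^ 2) := by
      intro z hz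
      rw [eq_mul_exp hf he (sq_mem_ball hz), mul_pow, ← Complex.exp_nat_mul]
      congr 2
      push_cast
      ring
    intro z hz w hw hzw
    have h1 : z ^ 2 = w ^ 2 := by
      refine hf.2.1 (sq_mem_ball hz) (sq_mem_ball hw) ?_
      rw [← hsq z hz, ← hsq w hw]
      exact congrArg (· ^ 2) hzw
    simp only at hzw
    rw [h1] at hzw
    exact mul_right_cancel₀ (Complex.exp_ne_zero _) hzw
  · have := (hasDerivAt_id (0 : ℂ)).mul
      (ha 0 (by simp)).differentiableAt.hasDerivAt
    have h2 := this.deriv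
    simp only [id, zero_mul, add_zero, one_mul] at h2
    refine Eq.trans h2 ?_
    simp [g0]

lemma coeff_sqrt (hg : AnalyticOnNhd ℂ g (ball 0 1)) (g0 : g 0 = 0) :
    coeff (fun z => Complex.exp (-(g (z ^ 2)) / 2)) 0 = 1 ∧
    coeff (fun z => Complex.exp (-(g (z ^ 2)) / 2)) 1 = 0 ∧
    coeff (fun z => Complex.exp (-(g (z ^ 2)) / 2)) 2 = -(deriv g 0) / 2 := by
  set p : ℂ → ℂ := fun z => Complex.exp (-(g (z ^ 2)) / 2) with hp
  have hp0 : p 0 = 1 := by simp [hp, g0]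
  have hd : ∀ z ∈ ball (0 : ℂ) 1, HasDerivAt p (z * (-(deriv g (z ^ 2)) * p z)) z := by
    intro z hz
    have h1 := (hg _ (sq_mem_ball hz)).differentiableAt.hasDerivAt
    have h2 := (((h1.comp z (hasDerivAt_pow 2 z)).neg).div_const 2).cexp
    refine h2.congr_deriv ?_
    simp [hp]
    ring
  have h0 : (0 : ℂ) ∈ ball (0 : ℂ) 1 := by simp
  refine ⟨by simp [coeff, hp0], by simp [coeff, iteratedDeriv_one, (hd 0 h0).deriv], ?_⟩
  have hu : DifferentiableAt ℂ (fun z => -(deriv g (z ^ 2)) * p z) 0 :=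
    ((analyticOnNhd_comp_sq hg.deriv 0 h0).differentiableAt.neg).mul (hd 0 h0).differentiableAt
  have he : deriv p =ᶠ[𝓝 0] fun z => z * (-(deriv g (z ^ 2)) * p z) := by
    filter_upwards [isOpen_ball.mem_nhds h0] with z hz using (hd z hz).deriv
  have h3 := ((hasDerivAt_id (0 : ℂ)).mul hu.hasDerivAt).deriv
  have h4 : deriv (deriv p) 0 = -(deriv g 0) := by
    rw [he.deriv_eq]
    refine Eq.trans h3 ?_
    simp [hp0]
  rw [coeff, iteratedDeriv_succ, iteratedDeriv_one, h4]
  simp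
  ring

end SquareRoot

/-- If `|γ₁| ≥ 1`, the area theorem for `z ↦ 1 / √(f(z²)) = 1/z - γ₁ z + …` leaves no room for the
further coefficients, so that `z / f(z) = (1 - γ₁ z)²` with `|γ₁| = 1`. -/
theorem isKoebeRotation_of_one_le {f : ℂ → ℂ} {γ : ℕ → ℂ} (hf : InClassS f) (hγ : IsLogCoeffs f γ)
    (h1 : 1 ≤ ‖γ 1‖ ^ 2) : IsKoebeRotation f := by
  obtain ⟨g, hg, g0, he, hd⟩ := hγ
  set p : ℂ → ℂ := fun z => Complex.exp (-(g (z ^ 2)) / 2) with hp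
  have hpa : AnalyticOnNhd ℂ p (ball 0 1) := fun z hz =>
    ((analyticOnNhd_comp_sq hg z hz).neg.div_const).cexp
  obtain ⟨c0, c1, c2⟩ := coeff_sqrt hg g0
  rw [← hp] at c0 c1 c2
  have hg1 : deriv g 0 = 2 * γ 1 := by
    have := hd 1 le_rfl
    simpa [iteratedDeriv_one] using this
  have c2' : coeff p 2 = -γ 1 := by rw [c2, hg1]; ring
  have harea := area_theorem (inClassS_sqrt hf hg g0 he) hpa (fun z hz => by
    rw [hp, mul_assoc, ← Complex.exp_add, show g (z ^ 2) / 2 + -g (z ^ 2) / 2 = 0 by ring,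
      Complex.exp_zero, mul_one]) c0 c1
  rw [c2', norm_neg] at harea
  have hn1 : ‖γ 1‖ = 1 := by
    have h2 := harea 0
    have h3 : ‖γ 1‖ ^ 2 ≤ 1 := by
      have : 0 ≤ (((0 : ℕ) : ℝ) + 2) * ‖coeff p (0 + 3)‖ ^ 2 := by positivity
      linarith
    have h4 : ‖γ 1‖ ^ 2 = 1 := le_antisymm h3 h1
    exact (pow_eq_one_iff_of_nonneg (norm_nonneg _) two_ne_zero).1 h4
  have hzero : ∀ k, coeff p (k + 3) = 0 := by
    intro k
    have h2 := harea k
    have h3 : ((k : ℝ) + 2) * ‖coeff p (k + 3)‖ ^ 2 ≤ 0 := by linarith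
    have h4 : ‖coeff p (k + 3)‖ ^ 2 ≤ 0 := by
      by_contra hcon
      push Not at hcon
      have : 0 < ((k : ℝ) + 2) * ‖coeff p (k + 3)‖ ^ 2 := by positivity
      linarith
    rw [← norm_eq_zero]
    exact pow_eq_zero_iff two_ne_zero |>.1 (le_antisymm h4 (sq_nonneg _))
  have hpoly : ∀ z ∈ ball (0 : ℂ) 1, p z = 1 - γ 1 * z ^ 2 := by
    intro z hz
    have h2 := (hasSum_nat_add_iff' 3).2 (hasSum_coeff hpa hz)
    simp only [hzero, zero_mul, Finset.sum_range_succ, Finset.range_zero, Finset.sum_empty, c0, c1,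
      c2'] at h2
    have h3 := h2.unique hasSum_zero
    linear_combination h3
  refine ⟨(γ 1).arg, fun w hw => ?_⟩
  have hγe : Complex.exp ((γ 1).arg * I) = γ 1 := by
    have := Complex.norm_mul_exp_arg_mul_I (γ 1)
    rwa [hn1, Complex.ofReal_one, one_mul] at this
  obtain ⟨z, hz⟩ := IsAlgClosed.exists_pow_nat_eq w (n := 2) (by norm_num)
  have hzb : z ∈ ball (0 : ℂ) 1 := by
    rw [mem_ball_zero_iff] at hw ⊢
    rw [← hz, norm_pow] at hw
    exact (pow_lt_one_iff_of_nonneg (norm_nonneg _) two_ne_zero).1 hw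
  have h5 : p z ^ 2 * Complex.exp (g w) = 1 := by
    rw [hp, ← Complex.exp_nat_mul, ← Complex.exp_add, hz]
    rw [show ((2 : ℕ) : ℂ) * (-g w / 2) + g w = 0 by push_cast; ring, Complex.exp_zero]
  rw [hpoly z hzb, hz] at h5
  have h6 : (1 - γ 1 * w) ^ 2 ≠ 0 := left_ne_zero_of_mul_eq_one h5
  simp only [hγe]
  rw [eq_mul_exp hf he hw, eq_div_iff h6]
  linear_combination w * h5

end LogCoeff

theorem logcoeff_nsq_over_four_nsq_sub_one
    (f : ℂ → ℂ) (γ : ℕ → ℂ) (hf : InClassS f) (hγ : IsLogCoeffs f γ) :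
    (∑' n : ℕ, (((n : ℝ) + 1) ^ 2 / (4 * ((n : ℝ) + 1) ^ 2 - 1)) * ‖γ (n + 1)‖ ^ 2 ≤ (1 : ℝ) / 2) ∧
    (∑' n : ℕ, (((n : ℝ) + 1) ^ 2 / (4 * ((n : ℝ) + 1) ^ 2 - 1)) * ‖γ (n + 1)‖ ^ 2 = (1 : ℝ) / 2 → IsKoebeRotation f) := by
  obtain ⟨h1, h2⟩ := LogCoeff.weighted_sum_le (a := fun n => ‖γ (n + 1)‖ ^ 2)
    (fun n => by positivity) fun r hr0 hr => LogCoeff.logCoeff_radius hf hγ hr0 hr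
  exact ⟨h1, fun h => LogCoeff.isKoebeRotation_of_one_le hf hγ (h2 h)⟩
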